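/- arXiv:1512.09174 — 3 statements merged into one kernel-verified Lean document; each statement's English description precedes it below -/
import Mathlib

section
/- Let f : ℝ → ℝ be continuous, locally Lipschitz, odd, and satisfy the negative feedback condition x·f(x) < 0 for all x ≠ 0. Let (u, v) : ℝ → ℝ² be a nonconstant solution of the planar system u' = f(v), v' = -f(u) with minimal period 4. Then x := u is a periodic solution of the delay equation, i.e., x'(t) = f(x(t-1)) for all t ∈ ℝ, x has minimal period 4, and x(t) = -x(t-2) for all t ∈ ℝ. -/
/-!
The system is Hamiltonian: with `F` the primitive of `f` vanishing at `0`, the energy `F u + F v`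
is conserved. Since `f` is odd with negative feedback, `F` is even and strictly decreasing on
`[0, ∞)`, so an orbit meets both coordinate axes at one common distance `|b|` from the origin
(`abs_eq_of_primitive_eq`). It does meet both axes, by Rolle's theorem applied to the periodic
functions `v` and `u`.

The quarter turn `(u, v) ↦ (-v, u)` maps solutions to solutions, so by uniqueness
(`IsBddSol.eq_of_eq`) the quarter turn of the given solution is a time shift of it by some `s`.
Four quarter turns are the identity, hence `4 * s` is a period and `s` is an integer; its residue
mod `4` is neither `0` nor `2` because the origin is the only fixed point of a quarter or half
turn. Residue `3` would mean that `u` travels from `0` to `b` in one unit of time after starting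
with derivative `f b` of the opposite sign; then `u` has a zero strictly in between, where
`v = ± b`, and this produces a period less than `4`. So `s ≡ 1`, that is
`u (t + 1) = -v t` and `v (t + 1) = u t`, which yields all three claims.
-/

open Set Filter

/-- Hypotheses (H): `f` is continuous, satisfies the negative feedback condition,
and is differentiable on a neighborhood of `0` with `f'(0) < 0`. -/
def HypH (f : ℝ → ℝ) : Prop :=
  Continuous f ∧ (∀ x : ℝ, x ≠ 0 → x * f x < 0) ∧
    (∀ᶠ y in nhds (0 : ℝ), DifferentiableAt ℝ f y) ∧ deriv f 0 < 0

/-- A solution on `[-1,∞)` of the delay equation `x'(t) = f (x (t-1))`. -/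
def IsSolOn (f x : ℝ → ℝ) : Prop :=
  ContinuousOn x (Ici (-1)) ∧ ∀ t : ℝ, 0 < t → HasDerivAt x (f (x (t - 1))) t

/-- Membership in the set `K`: `φ(-1) = 0`, `φ` nondecreasing on `[-1,0]`,
continuous there, and `|φ| ≤ M`. -/
def MemK (M : ℝ) (φ : ℝ → ℝ) : Prop :=
  ContinuousOn φ (Icc (-1) 0) ∧ φ (-1) = 0 ∧ MonotoneOn φ (Icc (-1) 0) ∧
    ∀ s ∈ Icc (-1 : ℝ) 0, |φ s| ≤ M

/-- `T` is the minimal (positive) period of `p`. -/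
def MinPeriod {α : Type*} (p : ℝ → α) (T : ℝ) : Prop :=
  0 < T ∧ (∀ t, p (t + T) = p t) ∧
    ∀ T' : ℝ, 0 < T' → (∀ t, p (t + T') = p t) → T ≤ T'

/-- A slowly oscillating periodic (SOP) solution of `x'(t) = f (x (t-1))`:
a nonconstant periodic differentiable solution any two of whose distinct
zeros are separated by more than `1`. -/
def IsSOP (f p : ℝ → ℝ) : Prop :=
  (∀ t : ℝ, HasDerivAt p (f (p (t - 1))) t) ∧
    (∃ T : ℝ, 0 < T ∧ ∀ t, p (t + T) = p t) ∧
    (∃ t s : ℝ, p t ≠ p s) ∧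
    ∀ z z' : ℝ, p z = 0 → p z' = 0 → z ≠ z' → 1 < |z - z'|

/-- A Kaplan–Yorke solution: an SOP solution of minimal period `4`
satisfying `x(t) = -x(t-2)`. -/
def IsKY (f x : ℝ → ℝ) : Prop :=
  IsSOP f x ∧ MinPeriod x 4 ∧ ∀ t : ℝ, x t = -x (t - 2)

/-- Hypotheses (H') with constants `μ, β, σ`. -/
def HypH' (f : ℝ → ℝ) (μ β σ : ℝ) : Prop :=
  (∀ x : ℝ, |f x| ≤ μ) ∧ ∀ x : ℝ, β ≤ |x| → σ ≤ |f x|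

/-- Hypotheses (H'') with constants `a, c, δ, γ`. -/
def HypH'' (f : ℝ → ℝ) (a c δ γ : ℝ) : Prop :=
  (∀ x : ℝ, f (-x) = -f x) ∧ (∀ x ∈ Icc (0 : ℝ) (2 * a), |f x| ≤ γ) ∧
    (∀ x ∈ Icc a (2 * a - c), f x = -γ) ∧ ∀ x ∈ Icc (2 * a) γ, f x = -δ

/-- The minimal period of `p` equals `z'' - z` for three consecutive zeros
`z < z' < z''` of `p`. -/
def PeriodThreeZeros (p : ℝ → ℝ) : Prop :=
  ∃ z z' z'' : ℝ, z < z' ∧ z' < z'' ∧ p z = 0 ∧ p z' = 0 ∧ p z'' = 0 ∧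
    (∀ t, t ∈ Ioo z z' ∪ Ioo z' z'' → p t ≠ 0) ∧ MinPeriod p (z'' - z)

/-- `(p, q)` is a solution on `ℝ` of `p' = f q`, `q' = -f p`, bounded by `M` in the sup norm. -/
def IsBddSol (f : ℝ → ℝ) (M : ℝ) (p q : ℝ → ℝ) : Prop :=
  (∀ t, HasDerivAt p (f (q t)) t) ∧ (∀ t, HasDerivAt q (-f (p t)) t) ∧
    ∀ t, |p t| ≤ M ∧ |q t| ≤ M

namespace IsBddSol

variable {f : ℝ → ℝ} {M : ℝ} {p q p' q' : ℝ → ℝ}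

lemma shift (h : IsBddSol f M p q) (s : ℝ) :
    IsBddSol f M (fun t => p (t + s)) (fun t => q (t + s)) :=
  ⟨fun t => (h.1 (t + s)).comp_add_const t s, fun t => (h.2.1 (t + s)).comp_add_const t s,
    fun t => h.2.2 (t + s)⟩

/-- The system is equivariant under the quarter turn `(p, q) ↦ (-q, p)`. -/
lemma turn (hodd : ∀ x : ℝ, f (-x) = -f x) (h : IsBddSol f M p q) :
    IsBddSol f M (fun t => -q t) p := by
  refine ⟨fun t => ?_, fun t => ?_, fun t => ?_⟩
  · have h1 := (h.2.1 t).neg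
    rw [neg_neg] at h1
    exact h1
  · simpa [hodd] using h.1 t
  · simpa using (h.2.2 t).symm

/-- Two bounded solutions which agree at one time agree at all times. -/
lemma unique (hlip : LocallyLipschitz f) (h : IsBddSol f M p q) (h' : IsBddSol f M p' q')
    {t₀ : ℝ} (hp : p t₀ = p' t₀) (hq : q t₀ = q' t₀) (t : ℝ) : p t = p' t ∧ q t = q' t := by
  let X : ℝ × ℝ → ℝ × ℝ := fun z => (f z.2, -f z.1)
  have hX : LocallyLipschitz X :=
    (hlip.comp LipschitzWith.prod_snd.locallyLipschitz).prodMk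
      (LipschitzWith.id.neg.locallyLipschitz.comp
        (hlip.comp LipschitzWith.prod_fst.locallyLipschitz))
  obtain ⟨K, hK⟩ := LocallyLipschitzOn.exists_lipschitzOnWith_of_compact
    (isCompact_closedBall (0 : ℝ × ℝ) M) (hX.locallyLipschitzOn)
  have key : ∀ {p q : ℝ → ℝ}, IsBddSol f M p q → ∀ t,
      HasDerivAt (fun t => (p t, q t)) (X (p t, q t)) t ∧
        (p t, q t) ∈ Metric.closedBall (0 : ℝ × ℝ) M := by
    intro p q h t
    refine ⟨(h.1 t).prodMk (h.2.1 t), ?_⟩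
    simpa [Prod.norm_def] using h.2.2 t
  have := ODE_solution_unique_univ (v := fun _ => X) (s := fun _ => Metric.closedBall 0 M)
    (fun _ => hK) (key h) (key h') (t₀ := t₀) (by simp [hp, hq])
  simpa using congrFun this t

/-- Autonomous form of uniqueness: if the values at times `a` and `b` agree, the solutions are
time shifts of each other. -/
lemma eq_of_eq (hlip : LocallyLipschitz f) (h : IsBddSol f M p q) (h' : IsBddSol f M p' q')
    {a b : ℝ} (hp : p a = p' b) (hq : q a = q' b) (t : ℝ) :
    p (t + (a - b)) = p' t ∧ q (t + (a - b)) = q' t :=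
  (h.shift (a - b)).unique hlip h' (t₀ := b) (by simpa using hp) (by simpa using hq) t

end IsBddSol

/-- A primitive of an odd function with negative feedback is even and strictly decreasing on
`[0, ∞)`, hence determines the absolute value of its argument. -/
lemma abs_eq_of_primitive_eq {f F : ℝ → ℝ} (hodd : ∀ x : ℝ, f (-x) = -f x)
    (hfb : ∀ x : ℝ, x ≠ 0 → x * f x < 0) (hF : ∀ x, HasDerivAt F (f x) x) {x y : ℝ}
    (hxy : F x = F y) : |x| = |y| := by
  have heven : ∀ x, F (-x) = F x := by
    have hd : ∀ x, HasDerivAt (fun x => F (-x) - F x) 0 x := fun x => by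
      have h1 : HasDerivAt (fun x => F (-x)) (f (-x) * (-1)) x :=
        (hF (-x)).comp x (hasDerivAt_neg x)
      have h2 := h1.sub (hF x)
      have e : f (-x) * (-1) - f x = 0 := by rw [hodd]; ring
      rw [e] at h2
      exact h2
    intro x
    have := is_const_of_deriv_eq_zero (fun x => (hd x).differentiableAt)
      (fun x => (hd x).deriv) x 0
    simp only [neg_zero, sub_self] at this
    linarith
  have habs : ∀ x, F |x| = F x := fun x => by
    rcases abs_choice x with h | h <;> simp [h, heven]
  have hanti : StrictAntiOn F (Ici 0) := by
    refine strictAntiOn_of_deriv_neg (convex_Ici 0)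
      (fun x _ => (hF x).continuousAt.continuousWithinAt) fun x hx => ?_
    rw [interior_Ici, mem_Ioi] at hx
    rw [(hF x).deriv]
    have := hfb x hx.ne'
    by_contra! h
    nlinarith
  exact hanti.injOn (abs_nonneg x) (abs_nonneg y) (by rw [habs, habs, hxy])

/-- If `g` vanishes at `a` with negative derivative and is positive at `b > a`, it vanishes
somewhere strictly in between. -/
lemma exists_zero_of_deriv_neg {g : ℝ → ℝ} {g' a b : ℝ} (hg : Continuous g) (hab : a < b)
    (ha : g a = 0) (hd : HasDerivAt g g' a) (hg' : g' < 0) (hb : 0 < g b) :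
    ∃ c ∈ Ioo a b, g c = 0 := by
  have h1 := (hasDerivAt_iff_tendsto_slope.1 hd).eventually (gt_mem_nhds hg')
  have h2 : ∀ᶠ x in nhdsWithin a (Ioi a), slope g a x < 0 :=
    h1.filter_mono (nhdsWithin_mono a fun x hx => ne_of_gt hx)
  obtain ⟨x, hx, hxa, hxb⟩ := (h2.and (Ioo_mem_nhdsGT hab)).exists
  have hgx : g x < 0 := by
    rw [slope_def_field, ha, sub_zero, div_neg_iff] at hx
    rcases hx with h | h <;> linarith
  obtain ⟨c, hc, hc0⟩ := intermediate_value_Ioo hxb.le hg.continuousOn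
    (show (0 : ℝ) ∈ Ioo (g x) (g b) from ⟨hgx, hb⟩)
  exact ⟨c, ⟨hxa.trans hc.1, hc.2⟩, hc0⟩

theorem statement_5 (f : ℝ → ℝ) (hf : Continuous f) (hlip : LocallyLipschitz f)
    (hodd : ∀ x : ℝ, f (-x) = -f x) (hfb : ∀ x : ℝ, x ≠ 0 → x * f x < 0)
    (u v : ℝ → ℝ)
    (hu : ∀ t : ℝ, HasDerivAt u (f (v t)) t)
    (hv : ∀ t : ℝ, HasDerivAt v (-f (u t)) t)
    (hnc : ∃ t s : ℝ, (u t, v t) ≠ (u s, v s))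
    (hper : MinPeriod (fun t => (u t, v t)) 4) :
    (∀ t : ℝ, HasDerivAt u (f (u (t - 1))) t) ∧ MinPeriod u 4 ∧
      ∀ t : ℝ, u t = -u (t - 2) := by
  obtain ⟨-, hp4, hmin⟩ := hper
  simp only [Prod.mk.injEq] at hp4 hmin
  have hu4 : Function.Periodic u 4 := fun t => (hp4 t).1
  have hv4 : Function.Periodic v 4 := fun t => (hp4 t).2
  have huc : Continuous u := continuous_iff_continuousAt.2 fun t => (hu t).continuousAt
  have hvc : Continuous v := continuous_iff_continuousAt.2 fun t => (hv t).continuousAt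
  have hf0 : f 0 = 0 := by have := hodd 0; simp at this; linarith
  have hfz : ∀ x, f x = 0 → x = 0 := fun x hx => by
    by_contra h
    simpa [hx] using hfb x h
  have hbdd : ∀ {g : ℝ → ℝ}, Continuous g → Function.Periodic g 4 → ∃ M, ∀ t, |g t| ≤ M := by
    intro g hg hg4
    obtain ⟨M, hM⟩ := isCompact_Icc.exists_bound_of_continuousOn (s := Icc (0 : ℝ) (0 + 4))
      hg.continuousOn
    refine ⟨M, fun t => ?_⟩
    have ht : g t ∈ g '' Icc (0 : ℝ) (0 + 4) := by
      rw [hg4.image_Icc (by norm_num)]; exact mem_range_self t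
    obtain ⟨s, hs, hst⟩ := ht
    rw [← hst]
    exact hM s hs
  obtain ⟨M₁, hM₁⟩ := hbdd huc hu4
  obtain ⟨M₂, hM₂⟩ := hbdd hvc hv4
  have hsol : IsBddSol f (max M₁ M₂) u v :=
    ⟨hu, hv, fun t => ⟨(hM₁ t).trans (le_max_left _ _), (hM₂ t).trans (le_max_right _ _)⟩⟩
  have hne : ∀ t, ¬ (u t = 0 ∧ v t = 0) := by
    rintro t₀ ⟨h1, h2⟩
    have h0 : IsBddSol f (max M₁ M₂) (fun _ => 0) (fun _ => 0) := by
      refine ⟨fun t => by simpa [hf0] using hasDerivAt_const t (0 : ℝ),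
        fun t => by simpa [hf0] using hasDerivAt_const t (0 : ℝ), fun t => ?_⟩
      have := (abs_nonneg _).trans (hsol.2.2 t).1
      simpa using this
    have := hsol.unique hlip h0 h1 h2
    obtain ⟨t, s, hts⟩ := hnc
    simp [this] at hts
  -- Conservation of energy compares the two kinds of axis crossings.
  obtain ⟨F, hF⟩ : ∃ F : ℝ → ℝ, ∀ x, HasDerivAt F (f x) x :=
    ⟨fun x => ∫ y in (0 : ℝ)..x, f y, fun x => hf.integral_hasStrictDerivAt 0 x |>.hasDerivAt⟩
  have hE : ∀ t s, F (u t) + F (v t) = F (u s) + F (v s) := by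
    have hd : ∀ t, HasDerivAt (fun t => F (u t) + F (v t)) 0 t := fun t => by
      have h1 := ((hF (u t)).comp t (hu t)).add ((hF (v t)).comp t (hv t))
      have h2 : f (u t) * f (v t) + f (v t) * -f (u t) = 0 := by ring
      rw [h2] at h1
      exact h1
    exact is_const_of_deriv_eq_zero (fun x => (hd x).differentiableAt) (fun x => (hd x).deriv)
  obtain ⟨t₀, -, ht₀⟩ := exists_hasDerivAt_eq_zero (show (0 : ℝ) < 4 by norm_num)
    hvc.continuousOn (by simpa using (hv4 0).symm) (fun t _ => hv t)
  obtain ⟨t₁, -, ht₁⟩ := exists_hasDerivAt_eq_zero (show (0 : ℝ) < 4 by norm_num)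
    huc.continuousOn (by simpa using (hu4 0).symm) (fun t _ => hu t)
  replace ht₀ : u t₀ = 0 := hfz _ (by linarith)
  replace ht₁ : v t₁ = 0 := hfz _ ht₁
  have hb : v t₀ ≠ 0 := fun h => hne t₀ ⟨ht₀, h⟩
  have hturn := hsol.turn hodd
  -- The quarter turn of the solution is a time shift of the solution.
  obtain ⟨s, hs⟩ : ∃ s, ∀ t, u (t + s) = -v t ∧ v (t + s) = u t := by
    have h := hE t₁ t₀
    rw [ht₀, ht₁, add_comm (F 0)] at h
    rcases abs_eq_abs.1 (abs_eq_of_primitive_eq hodd hfb hF (add_right_cancel h)) with h | h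
    · refine ⟨t₀ - t₁, fun t => ?_⟩
      exact hsol.eq_of_eq hlip hturn (by simp [ht₀, ht₁]) h.symm t
    · refine ⟨t₁ - t₀, fun t => ?_⟩
      exact hsol.eq_of_eq hlip hturn h (by simp [ht₀, ht₁]) t
  have hs2 : ∀ t, u (t + s + s) = -u t ∧ v (t + s + s) = -v t := fun t => by
    simp [hs]
  have hs4 : ∀ t, u (t + 4 * s) = u t ∧ v (t + 4 * s) = v t := fun t => by
    have e : t + 4 * s = t + s + s + s + s := by ring
    rw [e, (hs2 _).1, (hs2 _).2, (hs2 t).1, (hs2 t).2]; simp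
  have hint : s = (⌊s⌋ : ℝ) := by
    by_contra hcon
    have h1 : (⌊s⌋ : ℝ) < s := lt_of_le_of_ne (Int.floor_le s) (Ne.symm hcon)
    have h2 := Int.lt_floor_add_one s
    have := hmin (4 * (s - ⌊s⌋)) (by linarith) fun t => by
      have e : t + 4 * (s - ⌊s⌋) = t + 4 * s - ⌊s⌋ * 4 := by ring
      rw [e, hu4.sub_int_mul_eq, hv4.sub_int_mul_eq]
      exact hs4 t
    linarith
  -- Reduction of the integral shift modulo the period.
  obtain ⟨r, hr0, hr4, hr⟩ : ∃ r : ℤ, 0 ≤ r ∧ r < 4 ∧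
      ∀ t, u (t + r) = -v t ∧ v (t + r) = u t := by
    refine ⟨⌊s⌋ % 4, by omega, by omega, fun t => ?_⟩
    have e : ((⌊s⌋ % 4 : ℤ) : ℝ) = s - ((⌊s⌋ / 4 : ℤ) : ℝ) * 4 := by
      have := Int.emod_add_mul_ediv ⌊s⌋ 4
      have h2 : ((⌊s⌋ % 4 : ℤ) : ℝ) + 4 * ((⌊s⌋ / 4 : ℤ) : ℝ) = (⌊s⌋ : ℝ) := by
        exact_mod_cast this
      linarith
    rw [e, ← add_sub_assoc, hu4.sub_int_mul_eq, hv4.sub_int_mul_eq]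
    exact hs t
  have hone : ∀ t, u (t + 1) = -v t ∧ v (t + 1) = u t := by
    interval_cases r
    · exfalso
      have h := hr 0
      simp only [Int.cast_zero, add_zero] at h
      exact hne 0 ⟨by linarith, by linarith⟩
    · simpa using hr
    · exfalso
      have h := hr 0
      have h' := hr (0 + (2 : ℤ))
      have e : (0 : ℝ) + ((2 : ℤ) : ℝ) + ((2 : ℤ) : ℝ) = 0 + 4 := by norm_num
      rw [e, hu4 0, hv4 0] at h'
      exact hne 0 ⟨by linarith, by linarith⟩
    · exfalso
      -- Here the shift by `1` is the inverse quarter turn, against the direction of the flow.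
      have hb1 : u (t₀ + 1) = v t₀ := by
        have h' := (hr (t₀ + 1)).2
        have e : t₀ + 1 + ((3 : ℤ) : ℝ) = t₀ + 4 := by push_cast; ring
        rw [e, hv4 t₀] at h'
        exact h'.symm
      obtain ⟨c, hc, hc0⟩ := exists_zero_of_deriv_neg (g := fun t => v t₀ * u t)
        (continuous_const.mul huc) (lt_add_one t₀) (by simp [ht₀]) ((hu t₀).const_mul (v t₀))
        (hfb _ hb) (by rw [hb1]; exact mul_self_pos.2 hb)
      have hc0 : u c = 0 := (mul_eq_zero.1 hc0).resolve_left hb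
      have h := hE c t₀
      rw [hc0, ht₀] at h
      rcases abs_eq_abs.1 (abs_eq_of_primitive_eq hodd hfb hF (add_left_cancel h)) with h | h
      · have := hmin (c - t₀) (by linarith [hc.1])
          (hsol.eq_of_eq hlip hsol (by rw [hc0, ht₀]) h)
        linarith [hc.2]
      · have hneg := hsol.eq_of_eq hlip ((hturn.turn hodd)) (a := c) (b := t₀)
          (by simp [hc0, ht₀]) h
        have := hmin (2 * (c - t₀)) (by linarith [hc.1]) fun t => by
          have e : t + 2 * (c - t₀) = t + (c - t₀) + (c - t₀) := by ring
          rw [e, (hneg _).1, (hneg _).2, (hneg t).1, (hneg t).2]; simp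
        linarith [hc.2]
  have hvu : ∀ t, v t = u (t - 1) := fun t => by
    have := (hone (t - 1)).2
    rwa [sub_add_cancel] at this
  refine ⟨fun t => by rw [← hvu]; exact hu t, ⟨by norm_num, hu4, fun T hT h => ?_⟩, fun t => ?_⟩
  · refine hmin T hT fun t => ⟨h t, ?_⟩
    rw [hvu, hvu, ← h (t - 1)]
    ring_nf
  · have h := (hone (t - 1)).1
    rw [sub_add_cancel, hvu] at h
    rw [h]
    ring_nf
end

section
/- Suppose f satisfies (H) and (H') with constants μ, β, σ > 0, and moreover -π/2 < f'(0) < 0 and β < σ/(2 + μ/σ). Then the equation x'(t) = f(x(t-1)) has at least two distinct SOP solutions p and q (q is not a time translate of p). Moreover each of p, q has minimal period equal to z'' - z for some three consecutive zeros z < z' < z'' of it (consecutive meaning it has no zeros in (z, z') ∪ (z', z'')). -/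
/-!
Periodic solutions are found as fixed points of the return map on the convex compact set of
nondecreasing Lipschitz profiles on `[-1,0]` vanishing at `-1`: a profile `φ` generates a solution
which is positive up to a first zero `z`, and minus its segment on `[z, z+1]` is again a profile;
applying this half-return twice, the second time for the reflected nonlinearity `v ↦ -g (-v)`,
gives the return map `ret`.

Suppose first that `g` is equal to `v ↦ -v` near `0` (`Nice`). Then the zero profile is strictly
attracting (`ret_lt`), and the hypothesis on `β`, `σ`, `μ` provides a `θ` such that the profiles
with `φ 0 ≥ β + μ θ` and `φ (-1 + θ) ≥ β` are mapped strictly into themselves (`halfRet_lower`,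
`Big.ret_big`). Schauder's theorem on this region gives one cycle (`Big.exists_large`). Between
the two attracting regions there must be a second fixed point; it comes from Schauder's theorem
for the return map augmented by a scalar unknown (`Big.exists_small`). Schauder's theorem itself
is reduced to Brouwer's by piecewise linear interpolation, and Brouwer's theorem is proved from
the absence of `C¹` retractions of the ball onto the sphere.

For general `f`, write `f x = -x q x` and replace `q` by `1` near `0` by means of a cutoff that is
affine in `log |x|` (`appr`). The two cycles of the approximations obey uniform bounds (`LinBd`)
and subconverge to solutions of the equation for `f`. A limit vanishes only if the heights of the
cycles tend to `0`; the rescaled cycles then converge to a nonzero periodic solution of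
`y'(t) = -k y(t-1)` with `k` a convex combination of `1` and `-f'(0)`, because the logarithmic
cutoff is asymptotically scale invariant. As `0 < k < π/2`, no such solution exists
(`no_linear_periodic`). Hence both limits are cycles of `f` (`Factor.exists_limit_cyc`), and the
levels at `0` and `-1 + θ` survive in the limit and tell the two apart.
-/

open Set Filter

section Brouwer

/-! ### The theorem of Brouwer -/

variable {E : Type*} [NormedAddCommGroup E] [InnerProductSpace ℝ E] [FiniteDimensional ℝ E]

lemma det_one_add_smul_pos (A : E →L[ℝ] E) {t C : ℝ} (ht : 0 ≤ t) (hA : ‖A‖ ≤ C)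
    (htC : t * C < 1) : 0 < (1 + t • A : E →L[ℝ] E).det := by
  have hne : ∀ s ∈ Icc (0 : ℝ) t, (1 + s • A : E →L[ℝ] E).det ≠ 0 := by
    intro s hs h0
    obtain ⟨v, hv, hv0⟩ := Submodule.exists_mem_ne_zero_of_ne_bot
      (p := LinearMap.ker ((1 + s • A : E →L[ℝ] E) : E →ₗ[ℝ] E))
      ((LinearMap.bot_lt_ker_of_det_eq_zero h0).ne')
    have h1 : v = -(s • A v) := by
      have : v + s • A v = 0 := by simpa using hv
      exact eq_neg_of_add_eq_zero_left this
    have h2 : ‖v‖ ≤ s * (C * ‖v‖) := by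
      calc ‖v‖ = ‖s • A v‖ := by conv_lhs => rw [h1, norm_neg]
        _ = s * ‖A v‖ := by rw [norm_smul, Real.norm_of_nonneg hs.1]
        _ ≤ _ := by
          gcongr
          · exact hs.1
          · exact A.le_of_opNorm_le hA v
    have h3 : 0 < ‖v‖ := norm_pos_iff.2 hv0
    have hC : 0 ≤ C := (norm_nonneg _).trans hA
    have : s * C ≤ t * C := by gcongr; exact hs.2
    nlinarith
  have hcont : Continuous fun s : ℝ => (1 + s • A : E →L[ℝ] E).det :=
    ContinuousLinearMap.continuous_det.comp (by fun_prop)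
  by_contra hneg
  push Not at hneg
  have := intermediate_value_Icc' ht hcont.continuousOn
  obtain ⟨s, hs, hs0⟩ := this ⟨hneg, by simp [ContinuousLinearMap.det]⟩
  exact hne s hs hs0

/-- The determinant of `1 + A` is an affine combination of the determinants of `1 + (v j) • A`
at distinct nodes. -/
lemma exists_det_interpolation (v : ℕ → ℝ) (hv : Function.Injective v) :
    ∃ c : ℕ → ℝ, (∑ j ∈ Finset.range (Module.finrank ℝ E + 1), c j = 1) ∧
      ∀ A : E →L[ℝ] E, (1 + A).det =
        ∑ j ∈ Finset.range (Module.finrank ℝ E + 1), c j * (1 + v j • A).det := by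
  set n := Module.finrank ℝ E with hn
  refine ⟨fun j => (Lagrange.basis (Finset.range (n + 1)) v j).eval 1, ?_, ?_⟩
  · have := Lagrange.sum_basis (v := v) (s := Finset.range (n + 1)) hv.injOn ⟨0, by simp⟩
    simpa [Polynomial.eval_finsetSum] using congrArg (Polynomial.eval 1) this
  · intro A
    let b := Module.finBasis ℝ E
    let M := LinearMap.toMatrix b b (A : E →ₗ[ℝ] E)
    let P : Polynomial ℝ := (1 + (Polynomial.X : Polynomial ℝ) • M.map Polynomial.C).det
    have hP : ∀ t : ℝ, P.eval t = (1 + t • A : E →L[ℝ] E).det := by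
      intro t
      have h1 : P.eval t = (1 + t • M).det := by
        simp only [P]
        rw [← Polynomial.coe_evalRingHom, RingHom.map_det]
        congr 1
        ext i j
        by_cases h : i = j <;> simp [h] <;> ring
      rw [h1]
      change _ = LinearMap.det ((1 + t • A : E →L[ℝ] E) : E →ₗ[ℝ] E)
      rw [← LinearMap.det_toMatrix b]
      congr 1
      have : ((1 + t • A : E →L[ℝ] E) : E →ₗ[ℝ] E) = 1 + t • (A : E →ₗ[ℝ] E) := rfl
      rw [this, map_add, map_smul, LinearMap.toMatrix_one]
    have hdeg : P.degree < ((Finset.range (n + 1)).card : ℕ) := by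
      have : P.natDegree ≤ n := by
        have := Polynomial.natDegree_det_X_add_C_le M 1
        simp only [Fintype.card_fin] at this
        rw [Matrix.map_one _ (map_zero _) (map_one _), add_comm] at this
        exact this
      rw [Finset.card_range]
      calc P.degree ≤ P.natDegree := Polynomial.degree_le_natDegree
        _ ≤ (n : WithBot ℕ) := by exact_mod_cast this
        _ < _ := by exact_mod_cast Nat.lt_succ_self n
    have h := Lagrange.eq_interpolate (v := v) hv.injOn hdeg
    have h2 := congrArg (Polynomial.eval 1) h
    rw [hP, one_smul] at h2
    rw [h2, Lagrange.interpolate_apply, Polynomial.eval_finsetSum]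
    refine Finset.sum_congr rfl fun j _ => ?_
    rw [Polynomial.eval_mul, Polynomial.eval_C, hP, mul_comm]

/-- The sphere is not a `C¹` retract of the ball. For small `t` the map `x ↦ x + t (g x - x)` is a
bijection of the ball, so its Jacobian integrates to the volume of the ball; the Jacobian is
polynomial in `t`, so the same holds at `t = 1`, where it vanishes. -/
lemma no_retraction {ρ : ℝ} (hρ : 0 < ρ) (g : E → E) (hg : ContDiff ℝ 1 g)
    (hg1 : ∀ x, ‖x‖ ≤ ρ → ‖g x‖ = ρ) (hg2 : ∀ x, ‖x‖ = ρ → g x = x) : False := by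
  borelize E
  let μ : MeasureTheory.Measure E := MeasureTheory.volume
  set A : E → E →L[ℝ] E := fun x => fderiv ℝ g x - 1 with hAdef
  have hAc : Continuous A := (hg.continuous_fderiv one_ne_zero).sub continuous_const
  have hgd : ∀ x, HasFDerivAt g (fderiv ℝ g x) x := fun x =>
    (hg.differentiable one_ne_zero x).hasFDerivAt
  obtain ⟨C, hC⟩ := (isCompact_closedBall (0 : E) ρ).exists_bound_of_continuousOn hAc.continuousOn
  have hC0 : 0 ≤ C := (norm_nonneg _).trans (hC 0 (by simp [hρ.le]))
  set h : E → E := fun x => g x - x with hh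
  have hhd : ∀ x, HasFDerivAt h (A x) x := fun x => (hgd x).sub (hasFDerivAt_id x)
  have hhlip : ∀ x y, ‖x‖ ≤ ρ → ‖y‖ ≤ ρ → ‖h y - h x‖ ≤ C * ‖y - x‖ := by
    intro x y hx hy
    exact (convex_closedBall (0 : E) ρ).norm_image_sub_le_of_norm_hasFDerivWithin_le
      (fun z _ => (hhd z).hasFDerivWithinAt) hC (by simpa using hx) (by simpa using hy)
  have hh0 : ∀ x, ‖x‖ = ρ → h x = 0 := fun x hx => by simp [hh, hg2 x hx]
  -- `h` cut off outside the ball, still Lipschitz because `h` vanishes on the sphere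
  set k : E → E := fun x => if ‖x‖ ≤ ρ then h x else 0 with hk
  have hk1 : ∀ x y, ‖x‖ ≤ ρ → ¬ ‖y‖ ≤ ρ → ‖h x‖ ≤ C * ‖y - x‖ := by
    intro x y hx hy
    have hcont : Continuous fun s : ℝ => ‖x + s • (y - x)‖ := by fun_prop
    obtain ⟨s, hs, hs1⟩ := intermediate_value_Icc (zero_le_one' ℝ) hcont.continuousOn
      (show ρ ∈ Icc _ _ from ⟨by simpa using hx, by simpa using (not_le.1 hy).le⟩)
    have h1 := hhlip _ _ hs1.le hx
    rw [hh0 _ hs1, sub_zero] at h1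
    refine h1.trans ?_
    gcongr
    have : x - (x + s • (y - x)) = -(s • (y - x)) := by abel
    rw [this, norm_neg, norm_smul, Real.norm_of_nonneg hs.1]
    exact mul_le_of_le_one_left (norm_nonneg _) hs.2
  have hklip : ∀ x y, ‖k y - k x‖ ≤ C * ‖y - x‖ := by
    intro x y
    by_cases hx : ‖x‖ ≤ ρ <;> by_cases hy : ‖y‖ ≤ ρ
    · simpa [hk, hx, hy] using hhlip x y hx hy
    · simpa [hk, hx, hy] using hk1 x y hx hy
    · simpa [hk, hx, hy, norm_sub_rev] using hk1 y x hy hx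
    · simp only [hk, hx, hy, if_false, sub_zero, norm_zero]; positivity
  have key : ∀ t : ℝ, 0 ≤ t → t < 1 → t * C < 1 →
      ∫ x in Metric.ball (0 : E) ρ, (1 + t • A x).det ∂μ = μ.real (Metric.ball (0 : E) ρ) := by
    intro t ht0 ht1 htC
    set F : E → E := fun x => x + t • h x with hF
    have hFd : ∀ x, HasFDerivAt F (1 + t • A x) x := fun x =>
      (hasFDerivAt_id x).add ((hhd x).const_smul t)
    have hinj : InjOn F (Metric.ball (0 : E) ρ) := by
      intro x hx y hy hxy
      have hx' : ‖x‖ ≤ ρ := by simpa using (mem_ball_zero_iff.1 hx).le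
      have hy' : ‖y‖ ≤ ρ := by simpa using (mem_ball_zero_iff.1 hy).le
      have h1 : y - x = -(t • (h y - h x)) := by
        have : x + t • h x = y + t • h y := hxy
        rw [smul_sub, neg_sub, sub_eq_sub_iff_add_eq_add, ← this]; abel
      have h2 : ‖y - x‖ ≤ t * (C * ‖y - x‖) := by
        calc ‖y - x‖ = t * ‖h y - h x‖ := by
              conv_lhs => rw [h1, norm_neg, norm_smul, Real.norm_of_nonneg ht0]
          _ ≤ _ := by gcongr; exact hhlip x y hx' hy'
      have h3 : ‖y - x‖ = 0 := by
        have := norm_nonneg (y - x)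
        nlinarith
      exact (sub_eq_zero.1 (norm_eq_zero.1 h3)).symm
    have himg : F '' (Metric.ball (0 : E) ρ) = Metric.ball (0 : E) ρ := by
      apply Subset.antisymm
      · rintro _ ⟨x, hx, rfl⟩
        have hx' : ‖x‖ < ρ := mem_ball_zero_iff.1 hx
        rw [mem_ball_zero_iff]
        have : F x = (1 - t) • x + t • g x := by
          simp only [hF, hh, smul_sub, sub_smul, one_smul]; abel
        rw [this]
        calc ‖(1 - t) • x + t • g x‖ ≤ ‖(1 - t) • x‖ + ‖t • g x‖ := norm_add_le _ _
          _ = (1 - t) * ‖x‖ + t * ρ := by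
            rw [norm_smul, norm_smul, Real.norm_of_nonneg ht0, Real.norm_of_nonneg (by linarith),
              hg1 x hx'.le]
          _ < ρ := by nlinarith
      · intro y hy
        have hy' : ‖y‖ < ρ := mem_ball_zero_iff.1 hy
        have hcontr : ContractingWith (t * C).toNNReal fun x => y - t • k x := by
          refine ⟨by simpa using htC, LipschitzWith.of_dist_le_mul fun a b => ?_⟩
          rw [Real.coe_toNNReal _ (by positivity), dist_eq_norm, dist_eq_norm]
          have : y - t • k a - (y - t • k b) = -(t • (k a - k b)) := by rw [smul_sub]; abel
          rw [this, norm_neg, norm_smul, Real.norm_of_nonneg ht0, mul_assoc]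
          gcongr
          exact hklip b a
        set x := hcontr.fixedPoint with hx
        have hfix : y - t • k x = x := hcontr.fixedPoint_isFixedPt
        have hxy : x + t • k x = y := (sub_eq_iff_eq_add.1 hfix).symm
        have hxle : ‖x‖ ≤ ρ := by
          by_contra hn
          have : k x = 0 := by simp [hk, hn]
          rw [this, smul_zero, add_zero] at hxy
          rw [hxy] at hn
          exact hn hy'.le
        have hkx : k x = h x := by simp [hk, hxle]
        rw [hkx] at hxy
        refine ⟨x, ?_, hxy⟩
        rw [mem_ball_zero_iff]
        refine lt_of_le_of_ne hxle fun he => ?_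
        rw [hh0 x he, smul_zero, add_zero] at hxy
        rw [hxy] at he
        exact hy'.ne he
    have hcv := MeasureTheory.integral_image_eq_integral_abs_det_fderiv_smul μ
      (Metric.isOpen_ball (x := (0 : E)) (ε := ρ)).measurableSet
      (fun x _ => (hFd x).hasFDerivWithinAt) hinj (fun _ => (1 : ℝ))
    rw [himg] at hcv
    simp only [smul_eq_mul, mul_one, MeasureTheory.integral_const, MeasurableSet.univ,
      MeasureTheory.measureReal_restrict_apply, univ_inter] at hcv
    rw [hcv]
    refine MeasureTheory.setIntegral_congr_fun Metric.isOpen_ball.measurableSet fun x hx => ?_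
    have := det_one_add_smul_pos (A x) ht0 (hC x (Metric.ball_subset_closedBall hx)) htC
    exact (abs_of_pos this).symm
  have hzero : ∀ x ∈ Metric.ball (0 : E) ρ, (1 + A x).det = 0 := by
    intro x hx
    have hx' : ‖x‖ < ρ := mem_ball_zero_iff.1 hx
    have h1 : (1 : E →L[ℝ] E) + A x = fderiv ℝ g x := by simp [hAdef]
    rw [h1]
    by_contra hne
    have horth : ∀ v, inner ℝ (g x) (fderiv ℝ g x v) = 0 := by
      intro v
      have hd := (hgd x).inner ℝ (hgd x)
      have hd2 : HasFDerivAt (fun y => inner ℝ (g y) (g y)) (0 : E →L[ℝ] ℝ) x := by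
        refine (hasFDerivAt_const (ρ ^ 2) x).congr_of_eventuallyEq ?_
        filter_upwards [Metric.isOpen_ball.mem_nhds hx] with y hy
        rw [real_inner_self_eq_norm_sq, hg1 y (mem_ball_zero_iff.1 hy).le]
      have := congrArg (fun L : E →L[ℝ] ℝ => L v) (hd.unique hd2)
      simp [real_inner_comm] at this
      linarith [this, real_inner_comm (g x) (fderiv ℝ g x v)]
    obtain ⟨v, hv⟩ : ∃ v, fderiv ℝ g x v = g x := by
      have : IsUnit (LinearMap.det ((fderiv ℝ g x : E →L[ℝ] E) : E →ₗ[ℝ] E)) :=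
        isUnit_iff_ne_zero.2 hne
      have hs := (LinearMap.equivOfDetNeZero ((fderiv ℝ g x : E →L[ℝ] E) : E →ₗ[ℝ] E) hne).surjective
        (g x)
      exact hs
    have := horth v
    rw [hv, real_inner_self_eq_norm_sq, hg1 x hx'.le] at this
    exact hρ.ne' (by simpa using this)
  -- interpolation nodes small enough for the bijection argument
  set v : ℕ → ℝ := fun j => 1 / ((j + 2 : ℝ) * (C + 1)) with hv
  have hvinj : Function.Injective v := by
    intro i j hij
    have hC1 : (C + 1 : ℝ) ≠ 0 := by positivity
    have hi : ((i : ℝ) + 2) ≠ 0 := by positivity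
    have hj : ((j : ℝ) + 2) ≠ 0 := by positivity
    simp only [hv] at hij
    field_simp at hij
    exact_mod_cast (by linarith : (i : ℝ) = j)
  obtain ⟨c, hc1, hc2⟩ := exists_det_interpolation (E := E) v hvinj
  have hvb : ∀ j, 0 ≤ v j ∧ v j < 1 ∧ v j * C < 1 := by
    intro j
    have hj : (0 : ℝ) ≤ j := Nat.cast_nonneg j
    have hpos : 0 < ((j : ℝ) + 2) * (C + 1) := by positivity
    refine ⟨by simp only [hv]; positivity, ?_, ?_⟩
    · simp only [hv]; rw [div_lt_one hpos]; nlinarith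
    · simp only [hv]; rw [div_mul_eq_mul_div, div_lt_one hpos]; nlinarith
  have hInt : ∀ t : ℝ, MeasureTheory.IntegrableOn (fun x => (1 + t • A x).det)
      (Metric.ball (0 : E) ρ) μ := by
    intro t
    have : Continuous fun x => (1 + t • A x).det :=
      ContinuousLinearMap.continuous_det.comp (by fun_prop)
    exact (this.continuousOn.integrableOn_compact (isCompact_closedBall (0 : E) ρ)).mono_set
      Metric.ball_subset_closedBall
  have hfin : ∫ x in Metric.ball (0 : E) ρ, (1 + A x).det ∂μ = μ.real (Metric.ball (0 : E) ρ) := by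
    rw [MeasureTheory.integral_congr_ae (Filter.Eventually.of_forall fun x => hc2 (A x))]
    rw [MeasureTheory.integral_finsetSum _ fun j _ => (hInt (v j)).const_mul (c j)]
    simp only [MeasureTheory.integral_const_mul]
    rw [Finset.sum_congr rfl fun j _ => by rw [key (v j) (hvb j).1 (hvb j).2.1 (hvb j).2.2],
      ← Finset.sum_mul, hc1, one_mul]
  rw [MeasureTheory.setIntegral_congr_fun Metric.isOpen_ball.measurableSet hzero] at hfin
  simp only [MeasureTheory.integral_zero] at hfin
  have hpos : 0 < μ (Metric.ball (0 : E) ρ) := Metric.measure_ball_pos μ 0 hρ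
  have : 0 < μ.real (Metric.ball (0 : E) ρ) :=
    ENNReal.toReal_pos hpos.ne' MeasureTheory.measure_ball_lt_top.ne
  exact this.ne hfin

/-- Without a fixed point, a smooth approximation `G` of `F`, cut off to `0` near a large sphere,
has none either, and normalizing `x - G x` gives a retraction of the ball onto that sphere. -/
lemma brouwer_bounded (F : E → E) (hF : Continuous F) {R : ℝ} (hR : ∀ x, ‖F x‖ ≤ R) :
    ∃ x, F x = x := by
  by_contra! hne
  have hR0 : 0 ≤ R := (norm_nonneg _).trans (hR 0)
  obtain ⟨x0, -, hx0⟩ := (isCompact_closedBall (0 : E) (R + 1)).exists_isMinOn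
    ⟨0, by simp; linarith⟩ (f := fun x => ‖F x - x‖) (by fun_prop)
  set δ := min ‖F x0 - x0‖ 1 with hδ
  have hδ0 : 0 < δ := lt_min (norm_pos_iff.2 (sub_ne_zero.2 (hne x0))) one_pos
  obtain ⟨G, hG, hGF, -⟩ := hF.exists_contDiff_approx 1 (ε := fun _ => δ) (by fun_prop)
    (fun _ => hδ0)
  let χ : ContDiffBump (0 : E) := ⟨R + 1, R + 2, by linarith, by linarith⟩
  have hGb : ∀ x, ‖G x‖ < R + 1 := fun x => by
    have h1 := hGF x
    rw [dist_eq_norm] at h1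
    calc ‖G x‖ = ‖(G x - F x) + F x‖ := by simp
      _ ≤ ‖G x - F x‖ + ‖F x‖ := norm_add_le _ _
      _ < 1 + R := add_lt_add_of_lt_of_le (h1.trans_le (min_le_right _ _)) (hR x)
      _ = R + 1 := add_comm _ _
  have hnf : ∀ x, x - χ x • G x ≠ 0 := by
    intro x hx
    have hxe : x = χ x • G x := sub_eq_zero.1 hx
    have hxn : ‖x‖ ≤ R + 1 := by
      rw [hxe, norm_smul, Real.norm_of_nonneg χ.nonneg]
      calc χ x * ‖G x‖ ≤ 1 * (R + 1) := by
            gcongr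
            · exact χ.le_one
            · exact (hGb x).le
        _ = _ := one_mul _
    have hχ : χ x = 1 := χ.one_of_mem_closedBall (by simpa using hxn)
    rw [hχ, one_smul] at hxe
    have h1 := hGF x
    rw [← hxe, dist_comm, dist_eq_norm] at h1
    have h2 : ‖F x0 - x0‖ ≤ ‖F x - x‖ := hx0 (by simpa using hxn)
    exact absurd h1 (not_lt.2 ((min_le_left _ _).trans h2))
  have hρ : (0 : ℝ) < R + 2 := by linarith
  refine no_retraction hρ (fun x => (R + 2) • (‖x - χ x • G x‖⁻¹ • (x - χ x • G x))) ?_ ?_ ?_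
  · have hsm : ContDiff ℝ 1 fun x => x - χ x • G x :=
      contDiff_id.sub (χ.contDiff.smul hG)
    exact contDiff_const.smul (((hsm.norm ℝ hnf).inv fun x => norm_ne_zero_iff.2 (hnf x)).smul hsm)
  · intro x _
    rw [norm_smul, norm_smul, norm_inv, norm_norm, inv_mul_cancel₀ (norm_ne_zero_iff.2 (hnf x)),
      mul_one, Real.norm_of_nonneg hρ.le]
  · intro x hx
    have hχ : χ x = 0 := χ.zero_of_le_dist (by simp [hx, χ])
    simp only [hχ, zero_smul, sub_zero, hx, smul_smul]
    rw [mul_inv_cancel₀ hρ.ne', one_smul]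

end Brouwer

/-- Brouwer's theorem on the cube, for maps defined everywhere with values in the cube. -/
lemma brouwer_cube {ι : Type*} [Fintype ι] (F : (ι → ℝ) → (ι → ℝ)) (hF : Continuous F)
    (hF01 : ∀ x i, F x i ∈ Icc (0 : ℝ) 1) : ∃ x, F x = x := by
  let e := EuclideanSpace.equiv ι ℝ
  obtain ⟨x, hx⟩ := brouwer_bounded (fun x => e.symm (F (e x)))
    (e.symm.continuous.comp (hF.comp e.continuous)) (R := √(Fintype.card ι)) (by
      intro x
      rw [EuclideanSpace.norm_eq]
      apply Real.sqrt_le_sqrt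
      calc ∑ i, ‖(e.symm (F (e x))) i‖ ^ 2 ≤ ∑ i : ι, (1 : ℝ) := by
            refine Finset.sum_le_sum fun i _ => ?_
            have := hF01 (e x) i
            have h2 : (e.symm (F (e x))) i = F (e x) i := rfl
            rw [h2, Real.norm_of_nonneg this.1]
            exact pow_le_one₀ this.1 this.2
        _ = _ := by simp)
  refine ⟨e x, ?_⟩
  have := congrArg e hx
  simpa using this

/-! ### Profiles -/

/-- Profiles on `[-1,0]`: nondecreasing, `L`-Lipschitz, vanishing at `-1`. They are encoded as
functions on `ℝ`, extended by constants outside `[-1,0]`. -/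
structure InK (L : ℝ) (φ : ℝ → ℝ) : Prop where
  mono : Monotone φ
  left : ∀ t ≤ -1, φ t = 0
  right : ∀ t, 0 ≤ t → φ t = φ 0
  lip : ∀ s t, s ≤ t → φ t - φ s ≤ L * (t - s)

namespace InK

variable {L : ℝ} {φ : ℝ → ℝ}

lemma abs_le (h : InK L φ) (s t : ℝ) : |φ t - φ s| ≤ L * |t - s| := by
  rcases le_total s t with hst | hst
  · rw [abs_of_nonneg (sub_nonneg.2 (h.mono hst)), abs_of_nonneg (sub_nonneg.2 hst)]
    exact h.lip s t hst
  · rw [abs_sub_comm, abs_sub_comm t s, abs_of_nonneg (sub_nonneg.2 (h.mono hst)),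
      abs_of_nonneg (sub_nonneg.2 hst)]
    exact h.lip t s hst

lemma nonneg (h : InK L φ) (t : ℝ) : 0 ≤ φ t := by
  rw [← h.left (min t (-1)) (min_le_right _ _)]
  exact h.mono (min_le_left _ _)

lemma le_zero (h : InK L φ) (t : ℝ) : φ t ≤ φ 0 := by
  rw [← h.right (max t 0) (le_max_right _ _)]
  exact h.mono (le_max_left _ _)

lemma le_const (h : InK L φ) (t : ℝ) : φ t ≤ L := by
  have := h.lip (-1) 0 (by norm_num)
  rw [h.left (-1) le_rfl] at this
  linarith [h.le_zero t]

lemma continuous (h : InK L φ) : Continuous φ := by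
  have hL : 0 ≤ L := (h.nonneg 0).trans (h.le_const 0)
  refine (LipschitzWith.of_dist_le_mul (K := L.toNNReal) fun a b => ?_).continuous
  rw [Real.coe_toNNReal _ hL, Real.dist_eq, Real.dist_eq]
  exact h.abs_le b a

lemma weaken (h : InK L φ) {L' : ℝ} (hL : L ≤ L') : InK L' φ :=
  ⟨h.mono, h.left, h.right, fun s t hst => (h.lip s t hst).trans
    (mul_le_mul_of_nonneg_right hL (sub_nonneg.2 hst))⟩

lemma of_tendsto {φs : ℕ → ℝ → ℝ} (h : ∀ n, InK L (φs n))
    (hlim : ∀ t, Tendsto (fun n => φs n t) atTop (nhds (φ t))) : InK L φ where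
  mono s t hst := le_of_tendsto_of_tendsto' (hlim s) (hlim t) fun n => (h n).mono hst
  left t ht := tendsto_nhds_unique (hlim t)
    (by simpa only [(h _).left t ht] using tendsto_const_nhds)
  right t ht := tendsto_nhds_unique (hlim t)
    (by simpa only [(h _).right t ht] using hlim 0)
  lip s t hst := le_of_tendsto ((hlim t).sub (hlim s))
    (Eventually.of_forall fun n => (h n).lip s t hst)

/-- A nonnegative combination `a φ + b ψ` with `a + b ≤ 1` of profiles is a profile. -/
lemma combo (h : InK L φ) {ψ : ℝ → ℝ} (h' : InK L ψ) {a b : ℝ} (ha : 0 ≤ a) (hb : 0 ≤ b)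
    (hab : a + b ≤ 1) : InK L (fun t => a * φ t + b * ψ t) where
  mono s t hst := add_le_add (mul_le_mul_of_nonneg_left (h.mono hst) ha)
    (mul_le_mul_of_nonneg_left (h'.mono hst) hb)
  left t ht := by simp [h.left t ht, h'.left t ht]
  right t ht := by simp [h.right t ht, h'.right t ht]
  lip s t hst := by
    have hL : 0 ≤ L := (h.nonneg 0).trans (h.le_const 0)
    have h1 := mul_le_mul_of_nonneg_left (h.lip s t hst) ha
    have h2 := mul_le_mul_of_nonneg_left (h'.lip s t hst) hb
    have h3 : (a + b) * (L * (t - s)) ≤ 1 * (L * (t - s)) :=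
      mul_le_mul_of_nonneg_right hab (mul_nonneg hL (sub_nonneg.2 hst))
    linarith

lemma sup (h : InK L φ) {ψ : ℝ → ℝ} (h' : InK L ψ) : InK L (fun t => max (φ t) (ψ t)) where
  mono s t hst := max_le_max (h.mono hst) (h'.mono hst)
  left t ht := by simp [h.left t ht, h'.left t ht]
  right t ht := by simp [h.right t ht, h'.right t ht]
  lip s t hst := by
    have h1 := h.lip s t hst
    have h2 := h'.lip s t hst
    rw [sub_le_iff_le_add]
    apply max_le
    · linarith [le_max_left (φ s) (ψ s)]
    · linarith [le_max_right (φ s) (ψ s)]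

end InK

/-- Arzelà–Ascoli for uniformly bounded, equi-Lipschitz functions on the line, with pointwise
convergence. -/
lemma exists_subseq_lip (φ : ℕ → ℝ → ℝ) (L M : ℝ)
    (hlip : ∀ n s t, |φ n t - φ n s| ≤ L * |t - s|) (hM : ∀ n t, |φ n t| ≤ M) :
    ∃ (ψ : ℝ → ℝ) (k : ℕ → ℕ), StrictMono k ∧
      ∀ t, Tendsto (fun n => φ (k n) t) atTop (nhds (ψ t)) := by
  have hcomp : IsCompact (Set.pi univ fun _ : ℚ => Icc (-M) M) :=
    isCompact_univ_pi fun _ => isCompact_Icc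
  obtain ⟨a, -, k, hk, hka⟩ := hcomp.tendsto_subseq (x := fun n (q : ℚ) => φ n q)
    (fun n q _ => abs_le.1 (hM n q))
  have hL : 0 ≤ L := by
    have := (abs_nonneg _).trans (hlip 0 0 1)
    simpa using this
  have hq : ∀ q : ℚ, CauchySeq fun n => φ (k n) q := fun q =>
    ((tendsto_pi_nhds.1 hka) q).cauchySeq
  have hc : ∀ t : ℝ, CauchySeq fun n => φ (k n) t := by
    intro t
    rw [Metric.cauchySeq_iff']
    intro ε hε
    obtain ⟨q, hq1, hq2⟩ := exists_rat_btwn (show t < t + ε / (3 * (L + 1)) by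
      have : 0 < ε / (3 * (L + 1)) := by positivity
      linarith)
    obtain ⟨N, hN⟩ := Metric.cauchySeq_iff'.1 (hq q) (ε / 3) (by positivity)
    have hLq : L * |t - q| < ε / 3 := by
      rw [abs_sub_comm, abs_of_pos (by linarith)]
      have h1 : (q : ℝ) - t < ε / (3 * (L + 1)) := by linarith
      calc L * ((q : ℝ) - t) ≤ (L + 1) * ((q : ℝ) - t) := by nlinarith
        _ < (L + 1) * (ε / (3 * (L + 1))) := by gcongr
        _ = ε / 3 := by field_simp
    refine ⟨N, fun n hn => ?_⟩
    have h1 := hN n hn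
    rw [Real.dist_eq] at h1 ⊢
    have h2 := hlip (k n) q t
    have h3 := hlip (k N) q t
    rw [abs_lt] at h1 ⊢
    rw [abs_le] at h2 h3
    constructor <;> linarith
  choose ψ hψ using fun t => cauchySeq_tendsto_of_complete (hc t)
  exact ⟨ψ, k, hk, hψ⟩

lemma tendsto_apply_of_lip {φ : ℕ → ℝ → ℝ} {ψ : ℝ → ℝ} {L : ℝ}
    (hlip : ∀ n s t, |φ n t - φ n s| ≤ L * |t - s|)
    (hlim : ∀ t, Tendsto (fun n => φ n t) atTop (nhds (ψ t)))
    {τ : ℕ → ℝ} {t : ℝ} (hτ : Tendsto τ atTop (nhds t)) :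
    Tendsto (fun n => φ n (τ n)) atTop (nhds (ψ t)) := by
  have h1 : Tendsto (fun n => L * |τ n - t|) atTop (nhds 0) := by
    have : Tendsto (fun n => L * |τ n - t|) atTop (nhds (L * |t - t|)) :=
      ((hτ.sub_const t).abs).const_mul L
    simpa using this
  have h2 : Tendsto (fun n => φ n (τ n) - φ n t) atTop (nhds 0) :=
    squeeze_zero_norm (fun n => hlip n t (τ n)) h1
  simpa using h2.add (hlim t)

/-! ### Schauder's theorem for profiles -/

/-- The unit ramp on `[i, i+1]`. -/
def ramp (i : ℕ) (x : ℝ) : ℝ := max 0 (min 1 (x - i))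

lemma ramp_mono (i : ℕ) : Monotone (ramp i) := fun x y h => by
  unfold ramp; gcongr

lemma sum_ramp (N : ℕ) (x : ℝ) : ∑ i ∈ Finset.range N, ramp i x = max 0 (min (N : ℝ) x) := by
  induction N with
  | zero => simp
  | succ N ih =>
    rw [Finset.sum_range_succ, ih]
    have hN : (0 : ℝ) ≤ N := Nat.cast_nonneg N
    push_cast
    unfold ramp
    rcases le_total x N with h | h
    · rw [min_eq_right h, min_eq_right (by linarith : x - N ≤ 1), min_eq_right (by linarith),
        max_eq_left (by linarith : x - N ≤ 0), add_zero]
    · rw [min_eq_left h, max_eq_right hN]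
      rcases le_total x (N + 1) with h2 | h2
      · rw [min_eq_right (by linarith : x - N ≤ 1), min_eq_right h2, max_eq_right (by linarith),
          max_eq_right (by linarith)]
        ring
      · rw [min_eq_left (by linarith : 1 ≤ x - N), min_eq_left h2, max_eq_right zero_le_one,
          max_eq_right (by linarith)]

/-- The piecewise linear profile with increments `(L / N) * d i` on a grid of mesh `1 / N`. -/
noncomputable def interp (L : ℝ) (N : ℕ) (d : ℕ → ℝ) (t : ℝ) : ℝ :=
  L / N * ∑ i ∈ Finset.range N, d i * ramp i (N * (t + 1))

lemma interp_inK {L : ℝ} (hL : 0 ≤ L) {N : ℕ} (hN : 0 < N) {d : ℕ → ℝ}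
    (hd : ∀ i, d i ∈ Icc (0 : ℝ) 1) : InK L (interp L N d) := by
  have hN' : (0 : ℝ) < N := Nat.cast_pos.2 hN
  refine ⟨fun s t hst => ?_, fun t ht => ?_, fun t ht => ?_, fun s t hst => ?_⟩
  · unfold interp
    gcongr with i _
    · exact (hd i).1
    · exact ramp_mono i (by gcongr)
  · unfold interp
    rw [Finset.sum_eq_zero, mul_zero]
    intro i _
    have : (N : ℝ) * (t + 1) ≤ 0 := mul_nonpos_of_nonneg_of_nonpos hN'.le (by linarith)
    have hi : (0 : ℝ) ≤ i := Nat.cast_nonneg i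
    rw [ramp, max_eq_left, mul_zero]
    exact (min_le_right _ _).trans (by linarith)
  · unfold interp
    congr 1
    refine Finset.sum_congr rfl fun i hi => ?_
    have hi' : (i : ℝ) + 1 ≤ N := by exact_mod_cast Finset.mem_range.1 hi
    have h1 : (N : ℝ) ≤ N * (t + 1) := by nlinarith
    have e1 : ramp i (N * (t + 1)) = 1 := by
      rw [ramp, min_eq_left (by linarith), max_eq_right zero_le_one]
    have e2 : ramp i (N * (0 + 1)) = 1 := by
      rw [ramp, min_eq_left (by linarith), max_eq_right zero_le_one]
    rw [e1, e2]
  · unfold interp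
    rw [← mul_sub, ← Finset.sum_sub_distrib]
    have h1 : ∑ i ∈ Finset.range N, (d i * ramp i (N * (t + 1)) - d i * ramp i (N * (s + 1)))
        ≤ ∑ i ∈ Finset.range N, (ramp i (N * (t + 1)) - ramp i (N * (s + 1))) := by
      refine Finset.sum_le_sum fun i _ => ?_
      rw [← mul_sub]
      refine mul_le_of_le_one_left (sub_nonneg.2 (ramp_mono i (by gcongr))) (hd i).2
    have h1' : ∑ i ∈ Finset.range N, (ramp i (N * (t + 1)) - ramp i (N * (s + 1)))
        = max 0 (min (N : ℝ) (N * (t + 1))) - max 0 (min (N : ℝ) (N * (s + 1))) := by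
      rw [Finset.sum_sub_distrib, sum_ramp, sum_ramp]
    rw [h1'] at h1
    have h2 : max 0 (min (N : ℝ) (N * (t + 1))) - max 0 (min (N : ℝ) (N * (s + 1)))
        ≤ N * (t - s) := by
      rw [sub_le_iff_le_add]
      have hst' : 0 ≤ (N : ℝ) * (t - s) := by
        have := sub_nonneg.2 hst
        positivity
      apply max_le
      · linarith [le_max_left 0 (min (N : ℝ) (N * (s + 1)))]
      · have h3 := le_max_right 0 (min (N : ℝ) (N * (s + 1)))
        rcases le_total (N : ℝ) (N * (s + 1)) with h | h
        · rw [min_eq_left h] at h3 ⊢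
          linarith [min_le_left (N : ℝ) (N * (t + 1))]
        · rw [min_eq_right h] at h3 ⊢
          linarith [min_le_right (N : ℝ) (N * (t + 1))]
    calc _ ≤ L / N * (N * (t - s)) := by gcongr; exact h1.trans h2
      _ = L * (t - s) := by field_simp

/-- Normalized increments of a profile. -/
noncomputable def incr (L : ℝ) (N : ℕ) (ψ : ℝ → ℝ) (i : ℕ) : ℝ :=
  N / L * (ψ (-1 + (i + 1) / N) - ψ (-1 + i / N))

lemma incr_mem {L : ℝ} (hL : 0 < L) {N : ℕ} (hN : 0 < N) {ψ : ℝ → ℝ} (h : InK L ψ) (i : ℕ) :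
    incr L N ψ i ∈ Icc (0 : ℝ) 1 := by
  have hN' : (0 : ℝ) < N := Nat.cast_pos.2 hN
  have hle : (-1 : ℝ) + i / N ≤ -1 + (i + 1) / N := by gcongr; linarith
  constructor
  · exact mul_nonneg (by positivity) (sub_nonneg.2 (h.mono hle))
  · calc incr L N ψ i ≤ N / L * (L * ((-1 + (i + 1) / N) - (-1 + i / N))) := by
          unfold incr; gcongr; exact h.lip _ _ hle
      _ = 1 := by field_simp; ring

lemma interp_incr {L : ℝ} (hL : 0 < L) {N : ℕ} (hN : 0 < N) {ψ : ℝ → ℝ} (h : InK L ψ) (t : ℝ) :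
    |interp L N (incr L N ψ) t - ψ t| ≤ 2 * L / N := by
  have hN' : (0 : ℝ) < N := Nat.cast_pos.2 hN
  have hI := interp_inK hL.le hN fun i => incr_mem hL hN h i
  have hgrid : ∀ j ≤ N, interp L N (incr L N ψ) (-1 + j / N) = ψ (-1 + j / N) := by
    intro j hj
    unfold interp
    have e : (N : ℝ) * (-1 + j / N + 1) = j := by field_simp; ring
    rw [e]
    have hsum : ∑ i ∈ Finset.range N, incr L N ψ i * ramp i j
        = ∑ i ∈ Finset.range j, incr L N ψ i := by
      rw [← Finset.sum_subset (Finset.range_mono hj)]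
      · refine Finset.sum_congr rfl fun i hi => ?_
        have : (i : ℝ) + 1 ≤ j := by exact_mod_cast Finset.mem_range.1 hi
        rw [ramp, min_eq_left (by linarith), max_eq_right zero_le_one, mul_one]
      · intro i _ hi
        have : (j : ℝ) ≤ i := by exact_mod_cast not_lt.1 fun h => hi (Finset.mem_range.2 h)
        rw [ramp, max_eq_left ((min_le_right _ _).trans (by linarith)), mul_zero]
    rw [hsum]
    unfold incr
    rw [← Finset.mul_sum]
    have := Finset.sum_range_sub (fun i : ℕ => ψ (-1 + i / N)) j
    push_cast at this
    rw [this]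
    rw [zero_div, add_zero, h.left (-1) le_rfl, sub_zero]
    field_simp
  have hmid : ∀ t ∈ Icc (-1 : ℝ) 0, |interp L N (incr L N ψ) t - ψ t| ≤ 2 * L / N := by
    intro t ht
    have hx : 0 ≤ (N : ℝ) * (t + 1) := mul_nonneg hN'.le (by linarith [ht.1])
    set j := ⌊(N : ℝ) * (t + 1)⌋₊ with hj
    have hj1 : (j : ℝ) ≤ N * (t + 1) := Nat.floor_le hx
    have hj2 : (N : ℝ) * (t + 1) < j + 1 := Nat.lt_floor_add_one _
    have hjN : j ≤ N := by
      have : (j : ℝ) ≤ N := by nlinarith [ht.2]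
      exact_mod_cast this
    have e1 : (-1 : ℝ) + j / N ≤ t := by
      have : (j : ℝ) / N ≤ t + 1 := by rw [div_le_iff₀ hN']; linarith
      linarith
    have e2 : t - (-1 + j / N) ≤ 1 / N := by
      have : t + 1 ≤ (j + 1) / N := by rw [le_div_iff₀ hN']; linarith
      rw [add_div] at this
      linarith
    have a1 := hI.lip _ _ e1
    have a2 := h.lip _ _ e1
    have b1 := hI.mono e1
    have b2 := h.mono e1
    rw [hgrid j hjN] at a1 b1
    have e3 : L * (t - (-1 + j / N)) ≤ L / N := by
      calc _ ≤ L * (1 / N) := by gcongr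
        _ = _ := by ring
    have e4 : 2 * L / (N : ℝ) = 2 * (L / N) := by ring
    have e5 : 0 < L / N := by positivity
    rw [e4, abs_le]
    constructor <;> linarith
  rcases le_total t (-1) with h1 | h1
  · rw [hI.left t h1, h.left t h1]
    simp only [sub_zero, abs_zero]; positivity
  · rcases le_total t 0 with h2 | h2
    · exact hmid t ⟨h1, h2⟩
    · rw [hI.right t h2, h.right t h2]
      exact hmid 0 ⟨by norm_num, le_rfl⟩

/-- Schauder's fixed point theorem on the product of the profiles with `[-1,1]`. The
interpolation `interp` identifies finite-dimensional approximations of this set with cubes. -/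
lemma schauder {L : ℝ} (hL : 0 < L) (G1 : (ℝ → ℝ) → ℝ → (ℝ → ℝ)) (G2 : (ℝ → ℝ) → ℝ → ℝ)
    (h1 : ∀ φ u, InK L φ → u ∈ Icc (-1 : ℝ) 1 → InK L (G1 φ u))
    (h2 : ∀ φ u, InK L φ → u ∈ Icc (-1 : ℝ) 1 → G2 φ u ∈ Icc (-1 : ℝ) 1)
    (hc : ∀ (φs : ℕ → ℝ → ℝ) (us : ℕ → ℝ) (φ : ℝ → ℝ) (u : ℝ), (∀ n, InK L (φs n)) →
      (∀ n, us n ∈ Icc (-1 : ℝ) 1) → InK L φ → u ∈ Icc (-1 : ℝ) 1 →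
      (∀ t, Tendsto (fun n => φs n t) atTop (nhds (φ t))) → Tendsto us atTop (nhds u) →
      (∀ t, Tendsto (fun n => G1 (φs n) (us n) t) atTop (nhds (G1 φ u t))) ∧
        Tendsto (fun n => G2 (φs n) (us n)) atTop (nhds (G2 φ u))) :
    ∃ φ u, InK L φ ∧ u ∈ Icc (-1 : ℝ) 1 ∧ G1 φ u = φ ∧ G2 φ u = u := by
  have hstep : ∀ n : ℕ, ∃ φ u, InK L φ ∧ u ∈ Icc (-1 : ℝ) 1 ∧
      (∀ t, |φ t - G1 φ u t| ≤ 2 * L / ((n : ℝ) + 1)) ∧ G2 φ u = u := by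
    intro n
    set N := n + 1 with hN
    have hN0 : 0 < N := Nat.succ_pos n
    let cl : ℝ → ℝ := fun x => max 0 (min 1 x)
    have hcl : ∀ x, cl x ∈ Icc (0 : ℝ) 1 := fun x =>
      ⟨le_max_left _ _, max_le zero_le_one (min_le_left _ _)⟩
    have hcl' : ∀ x ∈ Icc (0 : ℝ) 1, cl x = x := fun x hx => by
      simp only [cl]; rw [min_eq_right hx.2, max_eq_right hx.1]
    have hclc : Continuous cl := by fun_prop
    let Φ : (Fin (N + 1) → ℝ) → ℝ → ℝ := fun x =>
      interp L N fun i => cl (x (Fin.ofNat (N + 1) i))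
    let U : (Fin (N + 1) → ℝ) → ℝ := fun x => 2 * cl (x (Fin.last N)) - 1
    have hΦ : ∀ x, InK L (Φ x) := fun x => interp_inK hL.le hN0 fun i => hcl _
    have hU : ∀ x, U x ∈ Icc (-1 : ℝ) 1 := fun x => by
      have := hcl (x (Fin.last N))
      constructor <;> simp only [U] <;> linarith [this.1, this.2]
    have hUc : Continuous U := by fun_prop
    have hΦc : ∀ t, Continuous fun x => Φ x t := fun t => by
      simp only [Φ, interp]; fun_prop
    let F : (Fin (N + 1) → ℝ) → (Fin (N + 1) → ℝ) := fun x i =>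
      if (i : ℕ) < N then incr L N (G1 (Φ x) (U x)) i else (G2 (Φ x) (U x) + 1) / 2
    obtain ⟨x, hx⟩ := brouwer_cube F (by
        refine continuous_pi fun i => SeqContinuous.continuous fun xs x hxs => ?_
        have := hc (fun n => Φ (xs n)) (fun n => U (xs n)) (Φ x) (U x) (fun n => hΦ _)
          (fun n => hU _) (hΦ _) (hU _)
          (fun t => ((hΦc t).tendsto x).comp hxs) ((hUc.tendsto x).comp hxs)
        simp only [F, Function.comp_def]
        split_ifs
        · exact ((this.1 _).sub (this.1 _)).const_mul _
        · exact (this.2.add_const 1).div_const 2) (by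
        intro x i
        simp only [F]
        split_ifs
        · exact incr_mem hL hN0 (h1 _ _ (hΦ x) (hU x)) i
        · have := h2 _ _ (hΦ x) (hU x)
          constructor <;> linarith [this.1, this.2])
    refine ⟨Φ x, U x, hΦ x, hU x, fun t => ?_, ?_⟩
    · have e : Φ x t = interp L N (incr L N (G1 (Φ x) (U x))) t := by
        conv_lhs => simp only [Φ]
        unfold interp
        congr 1
        refine Finset.sum_congr rfl fun i hi => ?_
        have hi' : i < N := Finset.mem_range.1 hi
        have hv : ((Fin.ofNat (N + 1) i : Fin (N + 1)) : ℕ) = i := by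
          simp [Fin.ofNat, Nat.mod_eq_of_lt (Nat.lt_succ_of_lt hi')]
        have : x (Fin.ofNat (N + 1) i) = incr L N (G1 (Φ x) (U x)) i := by
          conv_lhs => rw [← hx]
          simp only [F, hv, hi', if_true]
        beta_reduce
        rw [this, hcl' _ (incr_mem hL hN0 (h1 _ _ (hΦ x) (hU x)) i)]
      rw [e]
      have := interp_incr hL hN0 (h1 _ _ (hΦ x) (hU x)) t
      simpa [hN] using this
    · have e : x (Fin.last N) = (G2 (Φ x) (U x) + 1) / 2 := by
        conv_lhs => rw [← hx]
        simp [F]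
      have hm := h2 _ _ (hΦ x) (hU x)
      have : U x = 2 * cl (x (Fin.last N)) - 1 := rfl
      rw [hcl' _ (by rw [e]; constructor <;> linarith [hm.1, hm.2]), e] at this
      linarith
  choose φs us hφ hu happ hfix using hstep
  obtain ⟨φ, k, hk, hφlim⟩ := exists_subseq_lip φs L L (fun n => (hφ n).abs_le)
    (fun n t => by rw [abs_of_nonneg ((hφ n).nonneg t)]; exact (hφ n).le_const t)
  obtain ⟨u, hu', k2, hk2, hulim⟩ := isCompact_Icc.tendsto_subseq fun n => hu (k n)
  have hφlim' : ∀ t, Tendsto (fun n => φs (k (k2 n)) t) atTop (nhds (φ t)) := fun t =>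
    (hφlim t).comp hk2.tendsto_atTop
  have hφK : InK L φ := InK.of_tendsto (fun n => hφ (k n)) hφlim
  obtain ⟨c1, c2⟩ := hc (fun n => φs (k (k2 n))) (fun n => us (k (k2 n))) φ u (fun n => hφ _)
    (fun n => hu _) hφK hu' hφlim' hulim
  refine ⟨φ, u, hφK, hu', ?_, ?_⟩
  · ext t
    refine (tendsto_nhds_unique (hφlim' t) ?_).symm
    have h0 : Tendsto (fun n => φs (k (k2 n)) t - G1 (φs (k (k2 n))) (us (k (k2 n))) t) atTop
        (nhds 0) := by
      refine squeeze_zero_norm (fun n => happ _ t) ?_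
      have : Tendsto (fun n : ℕ => 2 * L / ((n : ℝ) + 1)) atTop (nhds 0) := by
        simpa [div_eq_mul_inv] using
          (tendsto_one_div_add_atTop_nhds_zero_nat (𝕜 := ℝ)).const_mul (2 * L)
      exact this.comp (hk.comp hk2).tendsto_atTop
    simpa using h0.add (c1 t)
  · refine tendsto_nhds_unique c2 ?_
    simp only [hfix]
    exact hulim

/-! ### The initial value problem -/

/-- Integrated form of the delay equation `x'(t) = g (x (t-1))`, `t ≥ 0`. -/
structure IsSol (g x : ℝ → ℝ) : Prop where
  cont : Continuous x
  int : ∀ t, 0 ≤ t → x t = x 0 + ∫ s in (0 : ℝ)..t, g (x (s - 1))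

/-- Method of steps: `steps g φ k` is the solution with initial function `φ` up to time `k`. -/
noncomputable def steps (g φ : ℝ → ℝ) : ℕ → ℝ → ℝ
  | 0 => φ
  | k + 1 => fun t => φ (min t 0) + ∫ s in (0 : ℝ)..(max t 0), g (steps g φ k (s - 1))

/-- The solution of `x'(t) = g (x (t-1))` with `x = φ` on `(-∞, 0]`. -/
noncomputable def sol (g φ : ℝ → ℝ) (t : ℝ) : ℝ := steps g φ ⌈t⌉₊ t

section Sol

variable {g φ : ℝ → ℝ}

lemma steps_cont (hg : Continuous g) (hφ : Continuous φ) (k : ℕ) : Continuous (steps g φ k) := by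
  induction k with
  | zero => exact hφ
  | succ k ih =>
    have h1 : Continuous fun s => g (steps g φ k (s - 1)) := by fun_prop
    have h2 : Continuous fun t => ∫ s in (0 : ℝ)..t, g (steps g φ k (s - 1)) :=
      intervalIntegral.continuous_primitive (fun a b => h1.intervalIntegrable a b) 0
    have h3 : Continuous fun t : ℝ => max t 0 := by fun_prop
    exact (hφ.comp (by fun_prop)).add (h2.comp h3)

lemma steps_succ_eq (k : ℕ) : ∀ t ≤ (k : ℝ), steps g φ (k + 1) t = steps g φ k t := by
  induction k with
  | zero =>
    intro t ht
    have ht' : t ≤ 0 := by simpa using ht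
    simp [steps, ht']
  | succ k ih =>
    intro t ht
    change φ (min t 0) + ∫ s in (0 : ℝ)..(max t 0), g (steps g φ (k + 1) (s - 1))
      = φ (min t 0) + ∫ s in (0 : ℝ)..(max t 0), g (steps g φ k (s - 1))
    congr 1
    refine intervalIntegral.integral_congr fun s hs => ?_
    rw [uIcc_of_le (le_max_right _ _)] at hs
    have : s ≤ (k : ℝ) + 1 := hs.2.trans (max_le (by exact_mod_cast ht) (by positivity))
    rw [ih (s - 1) (by linarith)]

lemma steps_eq {k m : ℕ} (hkm : k ≤ m) {t : ℝ} (ht : t ≤ k) :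
    steps g φ m t = steps g φ k t := by
  induction m, hkm using Nat.le_induction with
  | base => rfl
  | succ m hm ih =>
    rw [steps_succ_eq m t (ht.trans (by exact_mod_cast hm)), ih]

lemma sol_eq_steps {k : ℕ} {t : ℝ} (ht : t ≤ k) : sol g φ t = steps g φ k t :=
  (steps_eq (Nat.ceil_le.2 ht) (Nat.le_ceil t)).symm

lemma sol_left {t : ℝ} (ht : t ≤ 0) : sol g φ t = φ t :=
  sol_eq_steps (k := 0) (by simpa using ht)

lemma sol_cont (hg : Continuous g) (hφ : Continuous φ) : Continuous (sol g φ) := by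
  rw [continuous_iff_continuousAt]
  intro t
  have h : sol g φ =ᶠ[nhds t] steps g φ (⌈t⌉₊ + 1) := by
    have : t < (⌈t⌉₊ + 1 : ℕ) := by push_cast; linarith [Nat.le_ceil t]
    filter_upwards [eventually_lt_nhds this] with s hs
    exact sol_eq_steps hs.le
  exact ((steps_cont hg hφ _).continuousAt).congr h.symm

lemma sol_isSol (hg : Continuous g) (hφ : Continuous φ) : IsSol g (sol g φ) := by
  refine ⟨sol_cont hg hφ, fun t ht => ?_⟩
  rw [sol_eq_steps (k := ⌈t⌉₊ + 1) (by push_cast; linarith [Nat.le_ceil t]),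
    sol_left le_rfl]
  change φ (min t 0) + ∫ s in (0 : ℝ)..(max t 0), g (steps g φ ⌈t⌉₊ (s - 1)) = _
  rw [min_eq_right ht, max_eq_left ht]
  congr 1
  refine intervalIntegral.integral_congr fun s hs => ?_
  rw [uIcc_of_le ht] at hs
  rw [sol_eq_steps (k := ⌈t⌉₊) (by linarith [hs.2, Nat.le_ceil t])]

end Sol

namespace IsSol

variable {g x : ℝ → ℝ}

lemma cont_rhs (h : IsSol g x) (hg : Continuous g) : Continuous fun s => g (x (s - 1)) := by
  have := h.cont
  fun_prop

lemma hasDerivAt (h : IsSol g x) (hg : Continuous g) {t : ℝ} (ht : 0 < t) :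
    HasDerivAt x (g (x (t - 1))) t := by
  have hc := h.cont_rhs hg
  have h1 : HasDerivAt (fun u => x 0 + ∫ s in (0 : ℝ)..u, g (x (s - 1))) (g (x (t - 1))) t :=
    (intervalIntegral.integral_hasDerivAt_right (hc.intervalIntegrable _ _)
      hc.stronglyMeasurable.stronglyMeasurableAtFilter hc.continuousAt).const_add _
  refine h1.congr_of_eventuallyEq ?_
  filter_upwards [eventually_gt_nhds ht] with s hs
  exact h.int s hs.le

lemma of_hasDerivAt (hc : Continuous x) (hg : Continuous g)
    (hd : ∀ t, 0 < t → HasDerivAt x (g (x (t - 1))) t) : IsSol g x := by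
  refine ⟨hc, fun t ht => ?_⟩
  have := intervalIntegral.integral_eq_sub_of_hasDerivAt_of_le ht hc.continuousOn
    (fun s hs => hd s hs.1)
    ((by fun_prop : Continuous fun s => g (x (s - 1))).intervalIntegrable _ _)
  linarith

/-- Continuous dependence on the initial function. -/
lemma tendsto (hg : Continuous g) {M : ℝ} (hM : ∀ v, |g v| ≤ M) {xs : ℕ → ℝ → ℝ}
    (hs : ∀ n, IsSol g (xs n)) (h : IsSol g x)
    (h0 : ∀ t ∈ Icc (-1 : ℝ) 0, Tendsto (fun n => xs n t) atTop (nhds (x t))) (t : ℝ)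
    (ht : -1 ≤ t) : Tendsto (fun n => xs n t) atTop (nhds (x t)) := by
  suffices H : ∀ k : ℕ, ∀ t : ℝ, -1 ≤ t → t ≤ k → Tendsto (fun n => xs n t) atTop (nhds (x t)) from
    H ⌈t⌉₊ t ht (Nat.le_ceil t)
  intro k
  induction k with
  | zero => exact fun t h1 h2 => h0 t ⟨h1, by simpa using h2⟩
  | succ k ih =>
    intro t h1 h2
    rcases le_total t 0 with h3 | h3
    · exact h0 t ⟨h1, h3⟩
    · rw [h.int t h3]
      simp_rw [fun n => (hs n).int t h3]
      refine (h0 0 (by simp)).add ?_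
      refine intervalIntegral.tendsto_integral_filter_of_dominated_convergence (fun _ => M)
        (Eventually.of_forall fun n => ((hs n).cont_rhs hg).aestronglyMeasurable)
        (Eventually.of_forall fun n => Eventually.of_forall fun s _ => hM _)
        (intervalIntegrable_const) (Eventually.of_forall fun s hs' => ?_)
      rw [uIoc_of_le h3] at hs'
      push_cast at h2
      exact (hg.tendsto _).comp (ih (s - 1) (by linarith [hs'.1]) (by linarith [hs'.2]))

lemma unique (hg : Continuous g) {M : ℝ} (hM : ∀ v, |g v| ≤ M) {y : ℝ → ℝ}
    (hy : IsSol g y) (hx : IsSol g x) (h0 : ∀ t ∈ Icc (-1 : ℝ) 0, y t = x t) (t : ℝ)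
    (ht : -1 ≤ t) : y t = x t := by
  have := tendsto hg hM (xs := fun _ => y) (fun _ => hy) hx
    (fun t ht => by rw [h0 t ht]; exact tendsto_const_nhds) t ht
  exact tendsto_nhds_unique tendsto_const_nhds this

end IsSol

/-- The first time `t ≥ 0` at which `x t ≤ 0`. -/
noncomputable def firstZero (x : ℝ → ℝ) : ℝ := sInf {t | 0 ≤ t ∧ x t ≤ 0}

lemma firstZero_spec {x : ℝ → ℝ} (hc : Continuous x) (h0 : 0 < x 0) {Z : ℝ} (hZ : 0 ≤ Z)
    (hxZ : x Z ≤ 0) : 0 < firstZero x ∧ firstZero x ≤ Z ∧ x (firstZero x) = 0 ∧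
      ∀ t, 0 ≤ t → t < firstZero x → 0 < x t := by
  set S := {t | 0 ≤ t ∧ x t ≤ 0} with hS
  have hbb : BddBelow S := ⟨0, fun t ht => ht.1⟩
  have hcl : IsClosed S := (isClosed_le continuous_const continuous_id).inter
    (isClosed_le hc continuous_const)
  have hmem : firstZero x ∈ S := hcl.csInf_mem ⟨Z, hZ, hxZ⟩ hbb
  have hpos : ∀ t, 0 ≤ t → t < firstZero x → 0 < x t := fun t ht ht' => by
    by_contra hcon
    exact absurd (csInf_le hbb (show t ∈ S from ⟨ht, not_lt.1 hcon⟩)) (not_le.2 ht')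
  have hp : 0 < firstZero x := by
    refine lt_of_le_of_ne hmem.1 fun h => ?_
    have := hmem.2
    rw [← h] at this
    linarith
  refine ⟨hp, csInf_le hbb ⟨hZ, hxZ⟩, le_antisymm hmem.2 ?_, hpos⟩
  refine ge_of_tendsto (hc.continuousWithinAt (s := Iio (firstZero x))) ?_
  filter_upwards [Ioo_mem_nhdsLT hp] with t ht
  exact (hpos t ht.1.le ht.2).le

/-! ### Half-cycles -/

/-- Negative feedback. -/
def NegFb (g : ℝ → ℝ) : Prop := ∀ v, v ≠ 0 → v * g v < 0

lemma NegFb.neg {g : ℝ → ℝ} (h : NegFb g) {v : ℝ} (hv : 0 < v) : g v < 0 := by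
  have := h v hv.ne'
  by_contra hc
  nlinarith [not_lt.1 hc]

lemma NegFb.pos {g : ℝ → ℝ} (h : NegFb g) {v : ℝ} (hv : v < 0) : 0 < g v := by
  have := h v hv.ne
  by_contra hc
  nlinarith [not_lt.1 hc]

lemma NegFb.zero {g : ℝ → ℝ} (h : NegFb g) (hg : Continuous g) : g 0 = 0 := by
  apply le_antisymm
  · refine le_of_tendsto (hg.continuousWithinAt (s := Ioi 0)) ?_
    filter_upwards [self_mem_nhdsWithin] with t ht using (h.neg ht).le
  · refine ge_of_tendsto (hg.continuousWithinAt (s := Iio 0)) ?_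
    filter_upwards [self_mem_nhdsWithin] with t ht using (h.pos ht).le

lemma NegFb.nonpos {g : ℝ → ℝ} (h : NegFb g) (hg : Continuous g) {v : ℝ} (hv : 0 ≤ v) :
    g v ≤ 0 := by
  rcases hv.eq_or_lt with rfl | hv
  · exact (h.zero hg).le
  · exact (h.neg hv).le

/-- Data of a positive half-cycle: `x` rises on `[-1,0]` from `0` to a positive value and first
vanishes at `z`. -/
structure Half (g x : ℝ → ℝ) (z : ℝ) : Prop where
  cont : Continuous x
  start : x (-1) = 0
  mono : MonotoneOn x (Icc (-1) 0)
  pos0 : 0 < x 0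
  deriv : ∀ t, 0 < t → HasDerivAt x (g (x (t - 1))) t
  zpos : 0 < z
  zero : x z = 0
  pos : ∀ t, 0 ≤ t → t < z → 0 < x t

namespace Half

variable {g x : ℝ → ℝ} {z : ℝ}

lemma nonneg (h : Half g x z) {t : ℝ} (h1 : -1 ≤ t) (h2 : t ≤ z) : 0 ≤ x t := by
  rcases le_total t 0 with h3 | h3
  · rw [← h.start]
    exact h.mono ⟨le_rfl, by norm_num⟩ ⟨h1, h3⟩ h1
  · rcases h2.eq_or_lt with rfl | h2
    · exact h.zero.ge
    · exact (h.pos t h3 h2).le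

lemma anti (h : Half g x z) (hg : Continuous g) (hn : NegFb g) :
    AntitoneOn x (Icc 0 (z + 1)) := by
  refine antitoneOn_of_deriv_nonpos (convex_Icc _ _) h.cont.continuousOn ?_ ?_
  · intro t ht
    rw [interior_Icc] at ht
    exact (h.deriv t ht.1).differentiableAt.differentiableWithinAt
  · intro t ht
    rw [interior_Icc] at ht
    rw [(h.deriv t ht.1).deriv]
    exact hn.nonpos hg (h.nonneg (by linarith [ht.1]) (by linarith [ht.2]))

lemma pos_sub_one (h : Half g x z) (hg : Continuous g) (hn : NegFb g) : 0 < x (z - 1) := by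
  rcases le_or_gt 1 z with h1 | h1
  · exact h.pos _ (by linarith) (by linarith)
  · have hz := h.zpos
    refine lt_of_le_of_ne (h.nonneg (by linarith) (by linarith)) fun h0 => ?_
    have hzero : ∀ s ∈ Icc (-1 : ℝ) (z - 1), x s = 0 := fun s hs => by
      refine le_antisymm ?_ (h.nonneg hs.1 (by linarith [hs.2]))
      rw [h0]
      exact h.mono ⟨hs.1, by linarith [hs.2]⟩ ⟨by linarith, by linarith⟩ hs.2
    -- the solution would be constant on `[0, z]`
    have hmono : MonotoneOn x (Icc 0 z) := by
      refine monotoneOn_of_deriv_nonneg (convex_Icc _ _) h.cont.continuousOn ?_ ?_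
      · intro t ht
        rw [interior_Icc] at ht
        exact (h.deriv t ht.1).differentiableAt.differentiableWithinAt
      · intro t ht
        rw [interior_Icc] at ht
        rw [(h.deriv t ht.1).deriv, hzero (t - 1) ⟨by linarith [ht.1], by linarith [ht.2]⟩,
          hn.zero hg]
    have := hmono ⟨le_rfl, hz.le⟩ ⟨hz.le, le_rfl⟩ hz.le
    rw [h.zero] at this
    linarith [h.pos0]

lemma pos_last (h : Half g x z) (hg : Continuous g) (hn : NegFb g) {t : ℝ} (h1 : z - 1 ≤ t)
    (h2 : t < z) : 0 < x t := by
  rcases le_or_gt 0 t with h3 | h3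
  · exact h.pos t h3 h2
  · exact (h.pos_sub_one hg hn).trans_le
      (h.mono ⟨by linarith [h.zpos], by linarith⟩ ⟨by linarith [h.zpos], h3.le⟩ h1)

lemma strictAnti (h : Half g x z) (hg : Continuous g) (hn : NegFb g) :
    StrictAntiOn x (Icc z (z + 1)) := by
  refine strictAntiOn_of_deriv_neg (convex_Icc _ _) h.cont.continuousOn ?_
  intro t ht
  rw [interior_Icc] at ht
  rw [(h.deriv t (by linarith [ht.1, h.zpos])).deriv]
  exact hn.neg (h.pos_last hg hn (by linarith [ht.1]) (by linarith [ht.2]))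

lemma neg (h : Half g x z) (hg : Continuous g) (hn : NegFb g) {t : ℝ} (h1 : z < t)
    (h2 : t ≤ z + 1) : x t < 0 := by
  rw [← h.zero]
  exact h.strictAnti hg hn ⟨le_rfl, by linarith⟩ ⟨h1.le, h2⟩ h1

end Half

/-! ### The half-return map -/

lemma sub_le_of_hasDerivAt {x x' : ℝ → ℝ} {a b c : ℝ} (hab : a ≤ b) (hx : Continuous x)
    (hd : ∀ t ∈ Ioo a b, HasDerivAt x (x' t) t) (hle : ∀ t ∈ Ioo a b, x' t ≤ c) :
    x b - x a ≤ c * (b - a) := by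
  refine (convex_Icc a b).image_sub_le_mul_sub_of_deriv_le hx.continuousOn ?_ ?_ a
    ⟨le_rfl, hab⟩ b ⟨hab, le_rfl⟩ hab
  · rw [interior_Icc]
    exact fun t ht => (hd t ht).differentiableAt.differentiableWithinAt
  · rw [interior_Icc]
    exact fun t ht => (hd t ht).deriv ▸ hle t ht

lemma le_sub_of_hasDerivAt {x x' : ℝ → ℝ} {a b c : ℝ} (hab : a ≤ b) (hx : Continuous x)
    (hd : ∀ t ∈ Ioo a b, HasDerivAt x (x' t) t) (hle : ∀ t ∈ Ioo a b, c ≤ x' t) :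
    c * (b - a) ≤ x b - x a := by
  refine (convex_Icc a b).mul_sub_le_image_sub_of_le_deriv hx.continuousOn ?_ ?_ a
    ⟨le_rfl, hab⟩ b ⟨hab, le_rfl⟩ hab
  · rw [interior_Icc]
    exact fun t ht => (hd t ht).differentiableAt.differentiableWithinAt
  · rw [interior_Icc]
    exact fun t ht => (hd t ht).deriv ▸ hle t ht

/-- Bounded continuous negative feedback nonlinearities equal to `v ↦ -v` near `0`. -/
structure Nice (g : ℝ → ℝ) (μ r : ℝ) : Prop where
  cont : Continuous g
  neg : NegFb g
  bdd : ∀ v, |g v| ≤ μ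
  rpos : 0 < r
  lin : ∀ v, |v| ≤ r → g v = -v

/-- The nonlinearity `v ↦ -g (-v)`, satisfied by `-x` when `x` solves the equation for `g`. -/
def mirror (g : ℝ → ℝ) (v : ℝ) : ℝ := -g (-v)

lemma mirror_mirror (g : ℝ → ℝ) : mirror (mirror g) = g := by ext v; simp [mirror]

lemma NegFb.mirror {g : ℝ → ℝ} (h : NegFb g) : NegFb (mirror g) := fun v hv => by
  have := h (-v) (neg_ne_zero.2 hv)
  unfold _root_.mirror
  linarith

lemma continuous_mirror {g : ℝ → ℝ} (h : Continuous g) : Continuous (mirror g) := by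
  unfold _root_.mirror
  fun_prop

namespace Nice

variable {g φ : ℝ → ℝ} {μ r L : ℝ}

lemma mirror (h : Nice g μ r) : Nice (mirror g) μ r where
  cont := continuous_mirror h.cont
  neg := h.neg.mirror
  bdd v := by unfold _root_.mirror; rw [abs_neg]; exact h.bdd _
  rpos := h.rpos
  lin v hv := by unfold _root_.mirror; rw [h.lin (-v) (by rwa [abs_neg]), neg_neg]

lemma r_le (h : Nice g μ r) : r ≤ μ := by
  have := h.bdd r
  rwa [h.lin r (abs_of_pos h.rpos).le, abs_neg, abs_of_pos h.rpos] at this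

lemma mu_pos (h : Nice g μ r) : 0 < μ := h.rpos.trans_le h.r_le

/-- Solutions starting from profiles reach `0` within a uniform time. Since `g v = -v` near `0`,
once the solution is small it is forced to `0` within one more time unit. -/
lemma exists_time (h : Nice g μ r) (L : ℝ) : ∃ Z, 0 ≤ Z ∧ ∀ φ, InK L φ → 0 < φ 0 →
    ∃ t, 0 ≤ t ∧ t ≤ Z ∧ sol g φ t ≤ 0 := by
  obtain ⟨m, hm, hgm⟩ : ∃ m, 0 < m ∧ ∀ v ∈ Icc r L, g v ≤ -m := by
    rcases (Icc r L).eq_empty_or_nonempty with he | hne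
    · exact ⟨1, one_pos, fun v hv => by simp [he] at hv⟩
    · obtain ⟨w, hw, hmax⟩ := isCompact_Icc.exists_isMaxOn hne h.cont.continuousOn
      exact ⟨-g w, neg_pos.2 (h.neg.neg (h.rpos.trans_le hw.1)), fun v hv => by
        rw [neg_neg]; exact hmax hv⟩
  refine ⟨max 0 (L / m) + 4, by positivity, fun φ hφ h0 => ?_⟩
  set Z := max 0 (L / m) + 4 with hZ
  have hZ4 : 4 ≤ Z := by have := le_max_left 0 (L / m); linarith
  have hS := sol_isSol h.cont hφ.continuous
  set x := sol g φ with hx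
  have hx0 : ∀ t ≤ 0, x t = φ t := fun t ht => sol_left ht
  by_contra! hcon
  have hpos : ∀ t, 0 ≤ t → t ≤ Z → 0 < x t := hcon
  have hnn : ∀ t, t ≤ Z → 0 ≤ x t := fun t ht => by
    rcases le_total t 0 with h1 | h1
    · rw [hx0 t h1]; exact hφ.nonneg t
    · exact (hpos t h1 ht).le
  have hanti : ∀ s t, 0 ≤ s → s ≤ t → t ≤ Z → x t ≤ x s := fun s t h1 h2 h3 => by
    have := sub_le_of_hasDerivAt (c := 0) h2 hS.cont
      (fun u hu => hS.hasDerivAt h.cont (by linarith [hu.1]))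
      (fun u hu => h.neg.nonpos h.cont (hnn _ (by linarith [hu.2])))
    linarith
  have hle : ∀ t, 0 ≤ t → t ≤ Z → x t ≤ L := fun t h1 h2 =>
    (hanti 0 t le_rfl h1 h2).trans (by rw [hx0 0 le_rfl]; exact hφ.le_const 0)
  rcases le_or_gt r (x (Z - 2)) with hr | hr
  · have := sub_le_of_hasDerivAt (a := 1) (b := Z - 1) (c := -m) (by linarith) hS.cont
      (fun u hu => hS.hasDerivAt h.cont (by linarith [hu.1]))
      (fun u hu => hgm _ ⟨hr.trans (hanti _ _ (by linarith [hu.1]) (by linarith [hu.2])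
        (by linarith)), hle _ (by linarith [hu.1]) (by linarith [hu.2])⟩)
    have h1 := hle 1 zero_le_one (by linarith)
    have h2 := hpos (Z - 1) (by linarith) (by linarith)
    have h3 : L / m ≤ Z - 4 := by have := le_max_right 0 (L / m); linarith
    rw [div_le_iff₀ hm] at h3
    nlinarith
  · have := sub_le_of_hasDerivAt (a := Z - 1) (b := Z) (c := -x (Z - 1)) (by linarith) hS.cont
      (fun u hu => hS.hasDerivAt h.cont (by linarith [hu.1]))
      (fun u hu => by
        have h1 := hanti (Z - 2) (u - 1) (by linarith) (by linarith [hu.1]) (by linarith [hu.2])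
        have h2 := hpos (u - 1) (by linarith [hu.1]) (by linarith [hu.2])
        rw [h.lin (x (u - 1)) (by rw [abs_of_pos h2]; linarith)]
        exact neg_le_neg (hanti _ _ (by linarith [hu.1]) (by linarith [hu.2]) (by linarith)))
    have h2 := hpos Z (by linarith) le_rfl
    linarith

lemma half (h : Nice g μ r) (hφ : InK L φ) (h0 : 0 < φ 0) :
    Half g (sol g φ) (firstZero (sol g φ)) := by
  obtain ⟨Z, hZ, H⟩ := h.exists_time L
  obtain ⟨t, ht, -, hxt⟩ := H φ hφ h0
  have hS := sol_isSol h.cont hφ.continuous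
  have e0 : sol g φ 0 = φ 0 := sol_left le_rfl
  obtain ⟨a1, a2, a3, a4⟩ := firstZero_spec hS.cont (by rwa [e0]) ht hxt
  refine ⟨hS.cont, ?_, ?_, by rwa [e0], fun t ht => hS.hasDerivAt h.cont ht, a1, a3, a4⟩
  · rw [sol_left (by norm_num)]; exact hφ.left _ le_rfl
  · intro s hs t ht hst
    rw [sol_left hs.2, sol_left ht.2]
    exact hφ.mono hst

end Nice

/-- The half-return map: minus the segment on `[z, z+1]` of the solution started at `φ`, where
`z` is its first zero, as a profile. -/
noncomputable def halfRet (g φ : ℝ → ℝ) (t : ℝ) : ℝ :=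
  if φ 0 = 0 then 0 else -sol g φ (firstZero (sol g φ) + 1 + max (-1) (min t 0))

lemma clamp_mem (t : ℝ) : max (-1) (min t 0) ∈ Icc (-1 : ℝ) 0 :=
  ⟨le_max_left _ _, max_le (by norm_num) (min_le_right _ _)⟩

lemma clamp_eq {t : ℝ} (h1 : -1 ≤ t) (h2 : t ≤ 0) : max (-1) (min t 0) = t := by
  rw [min_eq_left h2, max_eq_right h1]

lemma clamp_sub_le {s t : ℝ} (hst : s ≤ t) :
    max (-1 : ℝ) (min t 0) - max (-1) (min s 0) ≤ t - s := by
  rw [sub_le_iff_le_add]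
  have h1 := le_max_left (-1 : ℝ) (min s 0)
  have h2 := le_max_right (-1 : ℝ) (min s 0)
  apply max_le
  · linarith
  · rcases le_total s 0 with h | h
    · rw [min_eq_left h] at h2 ⊢; linarith [min_le_left t 0]
    · rw [min_eq_right h] at h2 ⊢; linarith [min_le_right t 0]

section HalfRet

variable {g φ : ℝ → ℝ} {μ r L : ℝ}

lemma halfRet_of_pos (h0 : 0 < φ 0) (t : ℝ) : halfRet g φ t =
    -sol g φ (firstZero (sol g φ) + 1 + max (-1) (min t 0)) := by
  rw [halfRet, if_neg h0.ne']

lemma inK_zero (hL : 0 ≤ L) : InK L fun _ => 0 :=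
  ⟨fun _ _ _ => le_rfl, fun _ _ => rfl, fun _ _ => rfl, fun s t hst => by
    have := mul_nonneg hL (sub_nonneg.2 hst); linarith⟩

lemma halfRet_inK (h : Nice g μ r) (hφ : InK L φ) : InK μ (halfRet g φ) := by
  by_cases h0 : φ 0 = 0
  · have : halfRet g φ = fun _ => 0 := by ext t; rw [halfRet, if_pos h0]
    rw [this]
    exact inK_zero h.mu_pos.le
  · have h0' : 0 < φ 0 := lt_of_le_of_ne (hφ.nonneg 0) (Ne.symm h0)
    have hH := h.half hφ h0'
    have hz := hH.zpos
    refine ⟨fun s t hst => ?_, fun t ht => ?_, fun t ht => ?_, fun s t hst => ?_⟩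
    · rw [halfRet_of_pos h0', halfRet_of_pos h0']
      have m1 := clamp_mem s
      have m2 := clamp_mem t
      have hc : max (-1) (min s 0) ≤ max (-1) (min t 0) := by gcongr
      refine neg_le_neg (hH.anti h.cont h.neg ⟨?_, ?_⟩ ⟨?_, ?_⟩ ?_) <;>
        linarith [m1.1, m1.2, m2.1, m2.2]
    · rw [halfRet_of_pos h0', min_eq_left (by linarith), max_eq_left ht, add_neg_cancel_right,
        hH.zero, neg_zero]
    · rw [halfRet_of_pos h0', halfRet_of_pos h0', min_eq_right ht, min_self]
    · rw [halfRet_of_pos h0', halfRet_of_pos h0']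
      have m1 := clamp_mem s
      have m2 := clamp_mem t
      have hc : max (-1) (min s 0) ≤ max (-1) (min t 0) := by gcongr
      have := le_sub_of_hasDerivAt (c := -μ)
        (a := firstZero (sol g φ) + 1 + max (-1) (min s 0))
        (b := firstZero (sol g φ) + 1 + max (-1) (min t 0)) (by linarith) hH.cont
        (fun u hu => hH.deriv u (by linarith [hu.1, m1.1])) (fun u _ => (abs_le.1 (h.bdd _)).1)
      have h2 := mul_le_mul_of_nonneg_left (clamp_sub_le hst) h.mu_pos.le
      linarith

lemma halfRet_pos (h : Nice g μ r) (hφ : InK L φ) (h0 : 0 < φ 0) : 0 < halfRet g φ 0 := by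
  rw [halfRet_of_pos h0, clamp_eq (by norm_num) le_rfl, add_zero]
  exact neg_pos.2 ((h.half hφ h0).neg h.cont h.neg (by linarith) le_rfl)

lemma Half.le_zero {g x : ℝ → ℝ} {z : ℝ} (h : Half g x z) (hg : Continuous g) (hn : NegFb g)
    {t : ℝ} (h1 : -1 ≤ t) (h2 : t ≤ z + 1) : x t ≤ x 0 := by
  have hz := h.zpos
  rcases le_total t 0 with h3 | h3
  · exact h.mono ⟨h1, h3⟩ ⟨by norm_num, le_rfl⟩ h3
  · exact h.anti hg hn ⟨le_rfl, by linarith⟩ ⟨h3, h2⟩ h3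

/-- Small amplitudes strictly decrease, because `g v = -v` near `0`. -/
lemma halfRet_lt (h : Nice g μ r) (hφ : InK L φ) (h0 : 0 < φ 0) (hr : φ 0 ≤ r) :
    halfRet g φ 0 < φ 0 := by
  have hH := h.half hφ h0
  rw [halfRet_of_pos h0, clamp_eq (by norm_num) le_rfl, add_zero]
  set x := sol g φ with hx
  set z := firstZero x with hz
  have hzp := hH.zpos
  have e0 : x 0 = φ 0 := sol_left le_rfl
  have hlow : ∀ u, z < u → u < z + 1 → g (x (u - 1)) = -x (u - 1) := fun u h1 h2 => by
    refine h.lin _ ?_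
    rw [abs_of_nonneg (hH.nonneg (by linarith) (by linarith))]
    exact (hH.le_zero h.cont h.neg (by linarith) (by linarith)).trans (e0 ▸ hr)
  obtain ⟨δ, hδ, hδx⟩ : ∃ δ > 0, ∀ s, |s - z| < δ → x s < φ 0 / 2 := by
    have := (hH.cont.tendsto z).eventually_lt_const (u := φ 0 / 2) (by rw [hH.zero]; linarith)
    obtain ⟨δ, hδ, H⟩ := Metric.eventually_nhds_iff.1 this
    exact ⟨δ, hδ, fun s hs => H (by rwa [Real.dist_eq])⟩
  set d := min δ 1 with hd
  have hd0 : 0 < d := lt_min hδ one_pos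
  have hd1 : d ≤ 1 := min_le_right _ _
  have hdδ : d ≤ δ := min_le_left _ _
  have s1 := le_sub_of_hasDerivAt (a := z) (b := z + 1 - d) (c := -φ 0) (by linarith) hH.cont
    (fun u hu => hH.deriv u (by linarith [hu.1])) (fun u hu => by
      rw [hlow u hu.1 (by linarith [hu.2]), ← e0]
      exact neg_le_neg (hH.le_zero h.cont h.neg (by linarith [hu.1]) (by linarith [hu.2])))
  have s2 := le_sub_of_hasDerivAt (a := z + 1 - d) (b := z + 1) (c := -(φ 0 / 2)) (by linarith)
    hH.cont (fun u hu => hH.deriv u (by linarith [hu.1])) (fun u hu => by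
      rw [hlow u (by linarith [hu.1]) hu.2]
      refine neg_le_neg (hδx _ ?_).le
      rw [abs_lt]
      constructor <;> linarith [hu.1, hu.2])
  rw [hH.zero] at s1
  nlinarith

lemma Nice.sol_lip (h : Nice g μ r) (hL : μ ≤ L) (hφ : InK L φ) (s t : ℝ) :
    |sol g φ t - sol g φ s| ≤ L * |t - s| := by
  have hS := sol_isSol h.cont hφ.continuous
  have key : ∀ s t, s ≤ t → |sol g φ t - sol g φ s| ≤ L * (t - s) := by
    have k1 : ∀ s t, s ≤ t → t ≤ 0 → |sol g φ t - sol g φ s| ≤ L * (t - s) := fun s t h1 h2 => by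
      rw [sol_left h2, sol_left (h1.trans h2)]
      have := hφ.abs_le s t
      rwa [abs_of_nonneg (sub_nonneg.2 h1)] at this
    have k2 : ∀ s t, 0 ≤ s → s ≤ t → |sol g φ t - sol g φ s| ≤ L * (t - s) := fun s t h1 h2 => by
      have a1 := sub_le_of_hasDerivAt (c := μ) h2 hS.cont
        (fun u hu => hS.hasDerivAt h.cont (by linarith [hu.1])) (fun u _ => (abs_le.1 (h.bdd _)).2)
      have a2 := le_sub_of_hasDerivAt (c := -μ) h2 hS.cont
        (fun u hu => hS.hasDerivAt h.cont (by linarith [hu.1])) (fun u _ => (abs_le.1 (h.bdd _)).1)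
      have a3 := mul_le_mul_of_nonneg_right hL (sub_nonneg.2 h2)
      rw [abs_le]
      constructor <;> linarith
    intro s t hst
    rcases le_total t 0 with h1 | h1
    · exact k1 s t hst h1
    · rcases le_total 0 s with h2 | h2
      · exact k2 s t h2 hst
      · have a1 := k1 s 0 h2 le_rfl
        have a2 := k2 0 t le_rfl h1
        have := abs_sub_le (sol g φ t) (sol g φ 0) (sol g φ s)
        linarith
  rcases le_total s t with hst | hst
  · rw [abs_of_nonneg (sub_nonneg.2 hst)]; exact key s t hst
  · rw [abs_sub_comm, abs_sub_comm t s, abs_of_nonneg (sub_nonneg.2 hst)]; exact key t s hst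

lemma sol_tendsto (h : Nice g μ r) {φs : ℕ → ℝ → ℝ} (hs : ∀ n, InK L (φs n)) (hφ : InK L φ)
    (hlim : ∀ t, Tendsto (fun n => φs n t) atTop (nhds (φ t))) (t : ℝ) :
    Tendsto (fun n => sol g (φs n) t) atTop (nhds (sol g φ t)) := by
  rcases le_total t 0 with h1 | h1
  · simp_rw [fun n => sol_left (g := g) (φ := φs n) h1, sol_left (g := g) (φ := φ) h1]
    exact hlim t
  · refine IsSol.tendsto h.cont h.bdd (fun n => sol_isSol h.cont (hs n).continuous)
      (sol_isSol h.cont hφ.continuous) (fun s hs' => ?_) t (by linarith)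
    simp_rw [fun n => sol_left (g := g) (φ := φs n) hs'.2, sol_left (g := g) (φ := φ) hs'.2]
    exact hlim s

/-- A limit of first zeros of convergent half-cycles is the first zero of the limit. -/
lemma tendsto_zero {xs : ℕ → ℝ → ℝ} {gs : ℕ → ℝ → ℝ} {x : ℝ → ℝ} {zs : ℕ → ℝ} {z Z : ℝ}
    (hlip : ∀ n s t, |xs n t - xs n s| ≤ L * |t - s|)
    (hlim : ∀ t, Tendsto (fun n => xs n t) atTop (nhds (x t)))
    (hH : ∀ n, Half (gs n) (xs n) (zs n)) (hZ : ∀ n, zs n ≤ Z) (hz : 0 < z)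
    (hpos : ∀ t, 0 ≤ t → t < z → 0 < x t) (hneg : ∀ t, z < t → t ≤ z + 1 → x t < 0) :
    Tendsto zs atTop (nhds z) := by
  refine tendsto_of_subseq_tendsto fun ns hns => ?_
  obtain ⟨z', hz', k, hk, hlim'⟩ := (isCompact_Icc (a := (0 : ℝ)) (b := Z)).tendsto_subseq
    (x := fun n => zs (ns n)) fun n => ⟨(hH _).zpos.le, hZ _⟩
  refine ⟨k, ?_⟩
  have hcomp : Tendsto (fun n => ns (k n)) atTop atTop := hns.comp hk.tendsto_atTop
  have h0 : x z' = 0 := by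
    have := tendsto_apply_of_lip (φ := fun n => xs (ns (k n))) (fun n => hlip _)
      (fun t => (hlim t).comp hcomp) hlim'
    refine tendsto_nhds_unique this ?_
    simp only [Function.comp_def, (hH _).zero]
    exact tendsto_const_nhds
  have hge : z ≤ z' := by
    by_contra hc
    exact (hpos z' hz'.1 (not_le.1 hc)).ne' h0
  have hle : z' ≤ z := by
    by_contra hc
    rw [not_le] at hc
    obtain ⟨w, hw1, hw2⟩ := exists_between (lt_min hc (lt_add_one z))
    have h1 := hneg w hw1 (hw2.le.trans (min_le_right _ _))
    have h2 : 0 ≤ x w := by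
      refine ge_of_tendsto ((hlim w).comp hcomp) ?_
      filter_upwards [hlim'.eventually_const_lt (hw2.trans_le (min_le_left _ _))] with n hn
      exact ((hH _).pos w (by linarith) hn).le
    linarith
  rw [le_antisymm hge hle]
  exact hlim'

lemma halfRet_tendsto (h : Nice g μ r) (hL : μ ≤ L) {φs : ℕ → ℝ → ℝ} (hs : ∀ n, InK L (φs n))
    (hφ : InK L φ) (hlim : ∀ t, Tendsto (fun n => φs n t) atTop (nhds (φ t))) (t : ℝ) :
    Tendsto (fun n => halfRet g (φs n) t) atTop (nhds (halfRet g φ t)) := by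
  by_cases h0 : φ 0 = 0
  · rw [halfRet, if_pos h0]
    have h0lim := hlim 0
    rw [h0] at h0lim
    refine squeeze_zero' (Eventually.of_forall fun n => (halfRet_inK h (hs n)).nonneg t) ?_ h0lim
    filter_upwards [h0lim.eventually_lt_const h.rpos] with n hn
    refine ((halfRet_inK h (hs n)).le_zero t).trans ?_
    by_cases h1 : φs n 0 = 0
    · rw [halfRet, if_pos h1, h1]
    · exact (halfRet_lt h (hs n) (lt_of_le_of_ne ((hs n).nonneg 0) (Ne.symm h1)) hn.le).le
  · have h0' : 0 < φ 0 := lt_of_le_of_ne (hφ.nonneg 0) (Ne.symm h0)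
    obtain ⟨N, hN⟩ := eventually_atTop.1 ((hlim 0).eventually_const_lt h0')
    rw [← tendsto_add_atTop_iff_nat N]
    have hp : ∀ n, 0 < φs (n + N) 0 := fun n => hN _ (Nat.le_add_left N n)
    simp_rw [fun n => halfRet_of_pos (g := g) (hp n) t, halfRet_of_pos (g := g) h0' t]
    have hxl : ∀ t, Tendsto (fun n => sol g (φs (n + N)) t) atTop (nhds (sol g φ t)) := fun t =>
      (sol_tendsto h hs hφ hlim t).comp (tendsto_add_atTop_nat N)
    have hlip : ∀ n s t, |sol g (φs (n + N)) t - sol g (φs (n + N)) s| ≤ L * |t - s| :=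
      fun n => h.sol_lip hL (hs _)
    have hH := h.half hφ h0'
    obtain ⟨Z, hZ, H⟩ := h.exists_time L
    have hz : Tendsto (fun n => firstZero (sol g (φs (n + N)))) atTop
        (nhds (firstZero (sol g φ))) := by
      refine tendsto_zero (Z := Z) hlip hxl (fun n => h.half (hs _) (hp n)) (fun n => ?_) hH.zpos
        hH.pos (fun t => hH.neg h.cont h.neg)
      obtain ⟨t, ht, htZ, hxt⟩ := H _ (hs (n + N)) (hp n)
      refine (firstZero_spec (sol_cont h.cont (hs _).continuous) ?_ ht hxt).2.1.trans htZ
      rw [sol_left le_rfl]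
      exact hp n
    exact (tendsto_apply_of_lip hlip hxl ((hz.add_const 1).add_const _)).neg

/-- Large amplitude estimate: if the profile `φ` is at least `c = β + μ θ` at `0` and at least
`β` on `[-1+θ, 0]`, then the solution decreases at rate at least `σ` for one time unit after
reaching the level `β`. -/
lemma halfRet_lower (h : Nice g μ r) (hφ : InK L φ) {β σ θ : ℝ} (hβ : 0 < β) (hβσ : β < σ)
    (hgσ : ∀ v, β ≤ v → g v ≤ -σ) (hθ0 : 0 < θ) (hc : β + μ * θ ≤ φ 0)
    (hθβ : β ≤ φ (-1 + θ)) (t : ℝ) (ht : t ∈ Icc (-1 : ℝ) 0) :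
    min (σ * (t + 1)) (σ - β) ≤ halfRet g φ t := by
  have hμ := h.mu_pos
  have hσ : 0 < σ := hβ.trans hβσ
  have h0 : 0 < φ 0 := by nlinarith [mul_pos hμ hθ0]
  have hH := h.half hφ h0
  rw [halfRet_of_pos h0, clamp_eq ht.1 ht.2]
  set x := sol g φ with hx
  set z := firstZero x with hz
  have hzp := hH.zpos
  have e0 : x 0 = φ 0 := sol_left le_rfl
  obtain ⟨τ, hτ, hxτ⟩ : β ∈ x '' Icc 0 z := by
    refine intermediate_value_Icc' hzp.le hH.cont.continuousOn ⟨?_, ?_⟩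
    · rw [hH.zero]; exact hβ.le
    · rw [e0]; nlinarith [mul_pos hμ hθ0]
  have hτz : τ < z := by
    refine lt_of_le_of_ne hτ.2 fun he => ?_
    rw [he, hH.zero] at hxτ
    linarith
  have hτθ : θ ≤ τ := by
    have := le_sub_of_hasDerivAt (c := -μ) hτ.1 hH.cont (fun u hu => hH.deriv u hu.1)
      (fun u _ => (abs_le.1 (h.bdd _)).1)
    have h2 : μ * θ ≤ μ * τ := by linarith
    exact le_of_mul_le_mul_left h2 hμ
  have hbig : ∀ s, -1 + θ ≤ s → s ≤ τ → β ≤ x s := fun s h1 h2 => by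
    rcases le_total s 0 with h3 | h3
    · have e1 : x s = φ s := sol_left h3
      rw [e1]
      exact hθβ.trans (hφ.mono h1)
    · rw [← hxτ]
      exact hH.anti h.cont h.neg ⟨h3, by linarith⟩ ⟨hτ.1, by linarith⟩ h2
  have hdec : ∀ a b, τ ≤ a → a ≤ b → b ≤ τ + 1 → x b - x a ≤ -σ * (b - a) := fun a b h1 h2 h3 =>
    sub_le_of_hasDerivAt h2 hH.cont (fun u hu => hH.deriv u (by linarith [hu.1]))
      (fun u hu => hgσ _ (hbig _ (by linarith [hu.1]) (by linarith [hu.2])))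
  have hd := hdec τ (τ + 1) le_rfl (by linarith) le_rfl
  set w := z + 1 + t with hw
  have hzτ : z ≤ τ + 1 := by
    by_contra hc'
    have := hH.pos (τ + 1) (by linarith) (not_le.1 hc')
    linarith
  rcases le_total w (τ + 1) with h1 | h1
  · have := hdec z w hτz.le (by linarith [ht.1]) h1
    rw [hH.zero] at this
    have e : w - z = t + 1 := by rw [hw]; ring
    rw [e] at this
    exact (min_le_left _ _).trans (by linarith)
  · have := hH.anti h.cont h.neg (a := τ + 1) (b := w) ⟨by linarith, by linarith⟩
      ⟨by linarith, by linarith [ht.2]⟩ h1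
    exact (min_le_right _ _).trans (by linarith)

end HalfRet

/-! ### Cycles -/

/-- A slowly oscillating periodic solution normalized so that it is positive on `(-1, z₁)`,
negative on `(z₁, z₂)`, and has period `z₂ + 1`. -/
structure Cyc (g p : ℝ → ℝ) (z₁ z₂ : ℝ) : Prop where
  deriv : ∀ t, HasDerivAt p (g (p (t - 1))) t
  zpos : 0 < z₁
  gap : z₁ + 1 < z₂
  start : p (-1) = 0
  pos : ∀ t, -1 < t → t < z₁ → 0 < p t
  zero : p z₁ = 0
  neg : ∀ t, z₁ < t → t < z₂ → p t < 0
  per : ∀ t, p (t + (z₂ + 1)) = p t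

lemma hasDerivAt_neg_shift {g x : ℝ → ℝ} {a t : ℝ}
    (h : HasDerivAt x (g (x (a + t - 1))) (a + t)) :
    HasDerivAt (fun t => -x (a + t)) (mirror g (-x (a + (t - 1)))) t := by
  have h1 : HasDerivAt (fun t => x (a + t)) (g (x (a + t - 1))) t :=
    HasDerivAt.comp_const_add a t h
  have h2 := h1.neg
  unfold mirror
  rwa [neg_neg, ← add_sub_assoc]

namespace Cyc

variable {g p : ℝ → ℝ} {z₁ z₂ : ℝ}

lemma cont (h : Cyc g p z₁ z₂) : Continuous p :=
  continuous_iff_continuousAt.2 fun t => (h.deriv t).continuousAt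

lemma zero₂ (h : Cyc g p z₁ z₂) : p z₂ = 0 := by
  have := h.per (-1)
  rw [h.start] at this
  rwa [show -1 + (z₂ + 1) = z₂ by ring] at this

lemma nonneg (h : Cyc g p z₁ z₂) {t : ℝ} (h1 : -1 ≤ t) (h2 : t ≤ z₁) : 0 ≤ p t := by
  rcases h1.eq_or_lt with rfl | h1
  · exact h.start.ge
  rcases h2.eq_or_lt with rfl | h2
  · exact h.zero.ge
  exact (h.pos t h1 h2).le

lemma mono (h : Cyc g p z₁ z₂) (hn : NegFb g) : MonotoneOn p (Icc (-1) 0) := by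
  have hz := h.zpos
  have hgap := h.gap
  refine monotoneOn_of_deriv_nonneg (convex_Icc _ _) h.cont.continuousOn
    (fun t _ => (h.deriv t).differentiableAt.differentiableWithinAt) fun t ht => ?_
  rw [interior_Icc] at ht
  rw [(h.deriv t).deriv, ← h.per (t - 1)]
  exact (hn.pos (h.neg _ (by linarith [ht.1]) (by linarith [ht.2]))).le

lemma half (h : Cyc g p z₁ z₂) (hn : NegFb g) : Half g p z₁ :=
  ⟨h.cont, h.start, h.mono hn, h.pos 0 (by norm_num) h.zpos, fun t _ => h.deriv t, h.zpos, h.zero,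
    fun t h1 h2 => h.pos t (by linarith) h2⟩

/-- The negative half-cycle of a cycle is the positive half-cycle of its reflection. -/
lemma mirror (h : Cyc g p z₁ z₂) :
    Cyc (mirror g) (fun t => -p (z₁ + 1 + t)) (z₂ - z₁ - 1) z₂ where
  deriv t := hasDerivAt_neg_shift (h.deriv _)
  zpos := by linarith [h.gap]
  gap := by linarith [h.zpos]
  start := by rw [add_neg_cancel_right, h.zero, neg_zero]
  pos t h1 h2 := neg_pos.2 (h.neg _ (by linarith) (by linarith))
  zero := by rw [show z₁ + 1 + (z₂ - z₁ - 1) = z₂ by ring, h.zero₂, neg_zero]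
  neg t h1 h2 := by
    have := h.per (z₁ + t - z₂)
    rw [show z₁ + t - z₂ + (z₂ + 1) = z₁ + 1 + t by ring] at this
    rw [this]
    exact neg_neg_of_pos (h.pos _ (by linarith) (by linarith))
  per t := by rw [← add_assoc, h.per]

lemma zeros (h : Cyc g p z₁ z₂) {t : ℝ} (ht : p t = 0) :
    ∃ k : ℤ, t = -1 + k * (z₂ + 1) ∨ t = z₁ + k * (z₂ + 1) := by
  have hz := h.zpos
  have hgap := h.gap
  have hT : 0 < z₂ + 1 := by linarith
  have hper : Function.Periodic p (z₂ + 1) := h.per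
  set k := ⌊(t + 1) / (z₂ + 1)⌋ with hk
  have h1 : (k : ℝ) ≤ (t + 1) / (z₂ + 1) := Int.floor_le _
  have h2 : (t + 1) / (z₂ + 1) < k + 1 := Int.lt_floor_add_one _
  rw [le_div_iff₀ hT] at h1
  rw [div_lt_iff₀ hT] at h2
  have h3 : p (t - k * (z₂ + 1)) = 0 := by rw [hper.sub_int_mul_eq, ht]
  refine ⟨k, ?_⟩
  rcases lt_trichotomy (t - k * (z₂ + 1)) z₁ with h4 | h4 | h4
  · left
    have h5 : -1 ≤ t - k * (z₂ + 1) := by linarith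
    rcases h5.eq_or_lt with h5 | h5
    · linarith
    · exact absurd h3 (h.pos _ h5 h4).ne'
  · right; linarith
  · exact absurd h3 (h.neg _ h4 (by linarith)).ne

lemma isSOP (h : Cyc g p z₁ z₂) : IsSOP g p := by
  have hz := h.zpos
  have hgap := h.gap
  have hT : 0 < z₂ + 1 := by linarith
  refine ⟨h.deriv, ⟨z₂ + 1, hT, h.per⟩, ⟨0, -1, ?_⟩, fun a b ha hb hab => ?_⟩
  · rw [h.start]
    exact (h.pos 0 (by norm_num) hz).ne'
  · have key : ∀ m : ℤ, m ≠ 0 → 1 < |(m : ℝ) * (z₂ + 1)| := fun m hm => by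
      have h1 : (1 : ℝ) ≤ |(m : ℝ)| := by exact_mod_cast Int.one_le_abs hm
      rw [abs_mul, abs_of_pos hT]
      nlinarith
    have key2 : ∀ m : ℤ, 1 < |z₁ + 1 + (m : ℝ) * (z₂ + 1)| := fun m => by
      rw [lt_abs]
      rcases le_or_gt 0 m with h1 | h1
      · left
        have h2 : (0 : ℝ) ≤ m := by exact_mod_cast h1
        nlinarith
      · right
        have h2 : (m : ℝ) ≤ -1 := by exact_mod_cast Int.le_sub_one_of_lt h1
        nlinarith
    obtain ⟨k, hk⟩ := h.zeros ha
    obtain ⟨l, hl⟩ := h.zeros hb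
    rcases hk with rfl | rfl <;> rcases hl with rfl | rfl
    · have := key (k - l) (fun h0 => hab (by rw [sub_eq_zero.1 h0]))
      push_cast at this
      rwa [show -1 + (k : ℝ) * (z₂ + 1) - (-1 + l * (z₂ + 1)) = (k - l) * (z₂ + 1) by ring]
    · have := key2 (l - k)
      push_cast at this
      rw [abs_sub_comm]
      rwa [show z₁ + (l : ℝ) * (z₂ + 1) - (-1 + k * (z₂ + 1)) = z₁ + 1 + (l - k) * (z₂ + 1) by ring]
    · have := key2 (k - l)
      push_cast at this
      rwa [show z₁ + (k : ℝ) * (z₂ + 1) - (-1 + l * (z₂ + 1)) = z₁ + 1 + (k - l) * (z₂ + 1) by ring]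
    · have := key (k - l) (fun h0 => hab (by rw [sub_eq_zero.1 h0]))
      push_cast at this
      rwa [show z₁ + (k : ℝ) * (z₂ + 1) - (z₁ + l * (z₂ + 1)) = (k - l) * (z₂ + 1) by ring]

lemma periodThreeZeros (h : Cyc g p z₁ z₂) : PeriodThreeZeros p := by
  have hz := h.zpos
  have hgap := h.gap
  refine ⟨-1, z₁, z₂, by linarith, by linarith, h.start, h.zero, h.zero₂, ?_, ?_⟩
  · rintro t (ht | ht)
    · exact (h.pos t ht.1 ht.2).ne'
    · exact (h.neg t ht.1 ht.2).ne
  · rw [sub_neg_eq_add]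
    refine ⟨by linarith, h.per, fun T' hT' hper => ?_⟩
    by_contra hc
    rw [not_le] at hc
    have h1 : p (-1 + T') = 0 := by rw [hper, h.start]
    rcases lt_trichotomy (-1 + T') z₁ with h4 | h4 | h4
    · exact (h.pos _ (by linarith) h4).ne' h1
    · have h2 := hper 0
      have h3 := h.pos 0 (by norm_num) hz
      have h5 := h.neg (0 + T') (by linarith) (by linarith)
      linarith
    · exact (h.neg _ h4 (by linarith)).ne h1

/-- Two normalized cycles which are translates of each other coincide. -/
lemma eq_of_translate (h : Cyc g p z₁ z₂) {q : ℝ → ℝ} {w₁ w₂ : ℝ} (hq : Cyc g q w₁ w₂) {s : ℝ}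
    (hs : ∀ t, q t = p (t + s)) : q = p := by
  have hz := h.zpos
  have hgap := h.gap
  have hper : Function.Periodic p (z₂ + 1) := h.per
  have h0 : p (-1 + s) = 0 := by rw [← hs, hq.start]
  obtain ⟨k, hk | hk⟩ := h.zeros h0
  · ext t
    rw [hs, show t + s = t + k * (z₂ + 1) by linarith]
    exact hper.int_mul k t
  · have h1 := hq.pos 0 (by norm_num) hq.zpos
    rw [hs, show 0 + s = z₁ + 1 + k * (z₂ + 1) by linarith, hper.int_mul k] at h1
    have := h.neg (z₁ + 1) (by linarith) (by linarith)
    linarith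

end Cyc

/-- The return map on profiles. -/
noncomputable def ret (g φ : ℝ → ℝ) : ℝ → ℝ := halfRet (mirror g) (halfRet g φ)

/-- Extension of a solution with `x (t + T) = x t` for `t ≥ -1` to a periodic solution. -/
lemma exists_periodic {g x : ℝ → ℝ} {T : ℝ} (hT : 1 ≤ T)
    (hd : ∀ t, 0 < t → HasDerivAt x (g (x (t - 1))) t) (hper : ∀ t, -1 ≤ t → x (t + T) = x t) :
    ∃ p : ℝ → ℝ, (∀ t, -1 ≤ t → p t = x t) ∧ (∀ t, p (t + T) = p t) ∧
      ∀ t, HasDerivAt p (g (p (t - 1))) t := by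
  have hnat : ∀ (n : ℕ) t, -1 ≤ t → x (t + n * T) = x t := by
    intro n
    induction n with
    | zero => intro t _; simp
    | succ n ih =>
      intro t ht
      push_cast
      have : 0 ≤ (n : ℝ) * T := by positivity
      rw [show t + ((n : ℝ) + 1) * T = t + n * T + T by ring, hper _ (by linarith), ih t ht]
  have hnm : ∀ (n m : ℕ) t, -1 ≤ t + n * T → n ≤ m → x (t + m * T) = x (t + n * T) := by
    intro n m t ht hnm
    obtain ⟨d, rfl⟩ := Nat.exists_eq_add_of_le hnm
    rw [← hnat d _ ht]
    push_cast
    ring_nf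
  let p : ℝ → ℝ := fun t => x (t + ⌈|t|⌉₊ * T)
  have hb : ∀ t, -1 ≤ t + ⌈|t|⌉₊ * T := fun t => by
    have h1 := Nat.le_ceil |t|
    have h2 := neg_abs_le t
    nlinarith [abs_nonneg t]
  have hp : ∀ (m : ℕ) (t : ℝ), |t| ≤ m → p t = x (t + m * T) := fun m t hm =>
    (hnm _ m t (hb t) (Nat.ceil_le.2 hm)).symm
  refine ⟨p, fun t ht => hnat _ t ht, fun t => ?_, fun t => ?_⟩
  · obtain ⟨M, hM⟩ := exists_nat_ge (|t + T| + |t|)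
    rw [hp M (t + T) (by linarith [abs_nonneg t]), hp (M + 1) t
      (by push_cast; linarith [abs_nonneg (t + T)])]
    push_cast
    ring_nf
  · obtain ⟨M, hM⟩ := exists_nat_ge (|t| + 2)
    have h0 : 0 < t + M * T := by nlinarith [neg_abs_le t, abs_nonneg t]
    have h1 : HasDerivAt (fun s => x (s + M * T)) (g (x (t + M * T - 1))) t :=
      HasDerivAt.comp_add_const t (M * T) (hd _ h0)
    rw [hp M (t - 1) (by have := abs_sub t 1; rw [abs_one] at this; linarith),
      show t - 1 + M * T = t + M * T - 1 by ring]
    refine h1.congr_of_eventuallyEq ?_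
    filter_upwards [Metric.ball_mem_nhds t one_pos] with s hs
    rw [Metric.mem_ball, Real.dist_eq] at hs
    refine hp M s ?_
    have := abs_sub_abs_le_abs_sub s t
    linarith

/-- A nonzero fixed point of the return map is the initial segment of a cycle. -/
lemma exists_cyc {g φ : ℝ → ℝ} {μ r L : ℝ} (h : Nice g μ r) (hφ : InK L φ) (h0 : 0 < φ 0)
    (hfix : ret g φ = φ) : ∃ p z₁ z₂, Cyc g p z₁ z₂ ∧ ∀ t ∈ Icc (-1 : ℝ) 0, p t = φ t := by
  have hψ := halfRet_inK h hφ
  have hψ0 := halfRet_pos h hφ h0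
  have hH := h.half hφ h0
  have hH' := h.mirror.half hψ hψ0
  have hfix' : ∀ t ∈ Icc (-1 : ℝ) 0, φ t =
      -sol (mirror g) (halfRet g φ) (firstZero (sol (mirror g) (halfRet g φ)) + 1 + t) := by
    intro t ht
    conv_lhs => rw [← hfix]
    rw [ret, halfRet_of_pos hψ0, clamp_eq ht.1 ht.2]
  have hxS := sol_isSol h.cont hφ.continuous
  have hyS := sol_isSol h.mirror.cont hψ.continuous
  have hψx : ∀ t ∈ Icc (-1 : ℝ) 0, halfRet g φ t = -sol g φ (firstZero (sol g φ) + 1 + t) :=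
    fun t ht => by rw [halfRet_of_pos h0, clamp_eq ht.1 ht.2]
  have hyψ : ∀ t ≤ 0, sol (mirror g) (halfRet g φ) t = halfRet g φ t := fun t ht => sol_left ht
  have hxφ : ∀ t ≤ 0, sol g φ t = φ t := fun t ht => sol_left ht
  set x := sol g φ with hx
  set y := sol (mirror g) (halfRet g φ) with hy
  set z := firstZero x with hz
  set w := firstZero y with hw
  have hzp := hH.zpos
  have hwp := hH'.zpos
  have hxy : ∀ t, -1 ≤ t → -x (z + 1 + t) = y t := by
    refine IsSol.unique h.mirror.cont h.mirror.bdd ?_ hyS ?_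
    · refine IsSol.of_hasDerivAt ?_ h.mirror.cont fun t ht => ?_
      · have := hxS.cont
        fun_prop
      · exact hasDerivAt_neg_shift (hH.deriv _ (by linarith))
    · intro t ht
      rw [hyψ t ht.2, hψx t ht]
  have hper : ∀ t, -1 ≤ t → x (t + (z + 1 + w + 1)) = x t := by
    refine IsSol.unique h.cont h.bdd ?_ hxS ?_
    · refine IsSol.of_hasDerivAt ?_ h.cont fun t ht => ?_
      · have := hxS.cont
        fun_prop
      · have := HasDerivAt.comp_add_const t (z + 1 + w + 1) (hH.deriv (t + (z + 1 + w + 1))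
          (by linarith))
        rwa [show t + (z + 1 + w + 1) - 1 = t - 1 + (z + 1 + w + 1) by ring] at this
    · intro t ht
      rw [hxφ t ht.2, hfix' t ht, ← hxy (w + 1 + t) (by linarith [ht.1]), neg_neg]
      ring_nf
  obtain ⟨p, hpx, hpp, hpd⟩ := exists_periodic (by linarith) hH.deriv hper
  refine ⟨p, z, z + 1 + w, ⟨hpd, hzp, by linarith, ?_, fun t h1 h2 => ?_, ?_, fun t h1 h2 => ?_,
    hpp⟩, fun t ht => by rw [hpx t ht.1, hxφ t ht.2]⟩
  · rw [hpx _ le_rfl, hH.start]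
  · rw [hpx t h1.le]
    rcases le_or_gt 0 t with h3 | h3
    · exact hH.pos t h3 h2
    · rw [hxφ t h3.le, hfix' t ⟨h1.le, h3.le⟩]
      exact neg_pos.2 (hH'.neg h.mirror.cont h.mirror.neg (by linarith) (by linarith))
  · rw [hpx _ (by linarith), hH.zero]
  · rw [hpx t (by linarith)]
    rcases le_or_gt t (z + 1) with h3 | h3
    · exact hH.neg h.cont h.neg h1 h3
    · have := hH'.pos (t - (z + 1)) (by linarith) (by linarith)
      rw [← hxy _ (by linarith), add_sub_cancel] at this
      linarith

/-! ### Two fixed points of the return map -/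

section Ret

variable {g φ : ℝ → ℝ} {μ r L : ℝ}

lemma ret_inK (h : Nice g μ r) (hφ : InK L φ) : InK μ (ret g φ) :=
  halfRet_inK h.mirror (halfRet_inK h hφ)

lemma ret_tendsto (h : Nice g μ r) (hL : μ ≤ L) {φs : ℕ → ℝ → ℝ} (hs : ∀ n, InK L (φs n))
    (hφ : InK L φ) (hlim : ∀ t, Tendsto (fun n => φs n t) atTop (nhds (φ t))) (t : ℝ) :
    Tendsto (fun n => ret g (φs n) t) atTop (nhds (ret g φ t)) :=
  halfRet_tendsto h.mirror le_rfl (fun n => halfRet_inK h (hs n)) (halfRet_inK h hφ)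
    (halfRet_tendsto h hL hs hφ hlim) t

lemma ret_zero (h0 : φ 0 = 0) : ret g φ 0 = 0 := by
  have : halfRet g φ 0 = 0 := by rw [halfRet, if_pos h0]
  rw [ret, halfRet, if_pos this]

lemma ret_lt (h : Nice g μ r) (hφ : InK L φ) (h0 : 0 < φ 0) (hr : φ 0 ≤ r) :
    ret g φ 0 < φ 0 := by
  have h1 := halfRet_lt h hφ h0 hr
  exact (halfRet_lt h.mirror (halfRet_inK h hφ) (halfRet_pos h hφ h0) (h1.le.trans hr)).trans h1

end Ret

/-- Constants for which profiles above the level `β + μ θ` at `0` and `β` at `-1 + θ` are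
mapped strictly above these levels by the half-return maps of `g` and of its reflection. -/
structure Big (g : ℝ → ℝ) (μ β σ θ : ℝ) : Prop where
  βpos : 0 < β
  σpos : 0 < σ
  right : ∀ v, β ≤ v → g v ≤ -σ
  left : ∀ v, v ≤ -β → σ ≤ g v
  θlow : β < σ * θ
  θup : β + μ * θ < σ - β
  σμ : σ ≤ μ

namespace Big

variable {g φ : ℝ → ℝ} {μ r L β σ θ : ℝ}

lemma θpos (hb : Big g μ β σ θ) : 0 < θ := by
  have h1 := hb.θlow
  have h3 := hb.βpos
  by_contra hc
  nlinarith [hb.σpos]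

lemma θlt (hb : Big g μ β σ θ) : θ < 1 := by
  have h2 := hb.θup
  have h3 := hb.βpos
  have h4 := hb.σμ
  by_contra hc
  nlinarith [hb.σpos]

lemma mirror (hb : Big g μ β σ θ) : Big (mirror g) μ β σ θ where
  βpos := hb.βpos
  σpos := hb.σpos
  right v hv := neg_le_neg (hb.left _ (neg_le_neg hv))
  left v hv := le_neg.2 (hb.right _ (by linarith))
  θlow := hb.θlow
  θup := hb.θup
  σμ := hb.σμ

lemma half (hb : Big g μ β σ θ) (h : Nice g μ r) (hφ : InK L φ) (h1 : β + μ * θ ≤ φ 0)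
    (h2 : β ≤ φ (-1 + θ)) : β + μ * θ < halfRet g φ 0 ∧ β < halfRet g φ (-1 + θ) ∧
      ∀ t ∈ Icc (-1 : ℝ) 0, min (σ * (t + 1)) (σ - β) ≤ halfRet g φ t := by
  have hθ := hb.θpos
  have hθ' := hb.θlt
  have hβ := hb.βpos
  have hup := hb.θup
  have hp := mul_pos h.mu_pos hθ
  have key := halfRet_lower h hφ hβ (by linarith) hb.right hθ h1 h2
  refine ⟨lt_of_lt_of_le ?_ (key 0 (by simp)), lt_of_lt_of_le ?_
    (key (-1 + θ) ⟨by linarith, by linarith⟩), key⟩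
  · rw [lt_min_iff]; constructor <;> linarith
  · rw [lt_min_iff, show σ * (-1 + θ + 1) = σ * θ by ring]
    exact ⟨hb.θlow, by linarith⟩

lemma ret_big (hb : Big g μ β σ θ) (h : Nice g μ r) (hφ : InK L φ) (h1 : β + μ * θ ≤ φ 0)
    (h2 : β ≤ φ (-1 + θ)) : β + μ * θ < ret g φ 0 ∧ β < ret g φ (-1 + θ) ∧
      ∀ t ∈ Icc (-1 : ℝ) 0, min (σ * (t + 1)) (σ - β) ≤ ret g φ t := by
  obtain ⟨a1, a2, -⟩ := hb.half h hφ h1 h2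
  exact hb.mirror.half h.mirror (halfRet_inK h hφ) a1.le a2.le

/-- A fixed point of large amplitude. -/
lemma exists_large (hb : Big g μ β σ θ) (h : Nice g μ r) :
    ∃ φ, InK μ φ ∧ ret g φ = φ ∧ σ - β ≤ φ 0 ∧ min (σ * θ) (σ - β) ≤ φ (-1 + θ) := by
  have hθ := hb.θpos
  have hθ' := hb.θlt
  have hβ := hb.βpos
  have hσ := hb.σpos
  have hup := hb.θup
  have hp := mul_pos h.mu_pos hθ
  have hσβ : 0 < σ - β := by linarith
  let a : ℝ → ℝ := fun t => max 0 (min (σ * (t + 1)) (σ - β))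
  have ha : InK μ a := by
    refine ⟨fun s t hst => ?_, fun t ht => ?_, fun t ht => ?_, fun s t hst => ?_⟩
    · simp only [a]; gcongr
    · exact max_eq_left ((min_le_left _ _).trans
        (mul_nonpos_of_nonneg_of_nonpos hσ.le (by linarith)))
    · simp only [a]
      rw [min_eq_right (by nlinarith), min_eq_right (by linarith)]
    · simp only [a]
      rw [sub_le_iff_le_add]
      have h1 := le_max_left 0 (min (σ * (s + 1)) (σ - β))
      have h2 := le_max_right 0 (min (σ * (s + 1)) (σ - β))
      have h3 : σ * (t - s) ≤ μ * (t - s) :=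
        mul_le_mul_of_nonneg_right hb.σμ (sub_nonneg.2 hst)
      have h4 : 0 ≤ σ * (t - s) := mul_nonneg hσ.le (sub_nonneg.2 hst)
      apply max_le
      · linarith
      · rcases le_total (σ * (s + 1)) (σ - β) with h | h
        · rw [min_eq_left h] at h2 ⊢
          linarith [min_le_left (σ * (t + 1)) (σ - β)]
        · rw [min_eq_right h] at h2 ⊢
          linarith [min_le_right (σ * (t + 1)) (σ - β)]
  have ha0 : σ - β ≤ a 0 := by
    simp only [a]
    rw [min_eq_right (by linarith)]
    exact le_max_right _ _
  have haθ : min (σ * θ) (σ - β) ≤ a (-1 + θ) := by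
    simp only [a]
    rw [show σ * (-1 + θ + 1) = σ * θ by ring]
    exact le_max_right _ _
  have haθ' : β < a (-1 + θ) := lt_of_lt_of_le (lt_min hb.θlow (by linarith)) haθ
  obtain ⟨φ, u, hφ, -, hfix, -⟩ := schauder h.mu_pos
    (fun φ _ => ret g fun t => max (φ t) (a t)) (fun _ _ => 0)
    (fun φ u hφ _ => ret_inK h (hφ.sup ha)) (fun _ _ _ _ => by simp)
    (fun φs us φ u hs _ hφ _ hlim _ =>
      ⟨ret_tendsto h le_rfl (fun n => (hs n).sup ha) (hφ.sup ha)
        (fun t => (hlim t).max tendsto_const_nhds), tendsto_const_nhds⟩)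
  obtain ⟨-, -, hlow⟩ := hb.ret_big h (hφ.sup ha) (by linarith [le_max_right (φ 0) (a 0)])
    (haθ'.le.trans (le_max_right _ _))
  rw [hfix] at hlow
  have hge : ∀ t, a t ≤ φ t := fun t => by
    have hIcc : ∀ t ∈ Icc (-1 : ℝ) 0, a t ≤ φ t := fun t ht => max_le (hφ.nonneg t) (hlow t ht)
    rcases le_total t (-1) with h1 | h1
    · rw [ha.left t h1]; exact hφ.nonneg t
    · rcases le_total t 0 with h2 | h2
      · exact hIcc t ⟨h1, h2⟩
      · rw [ha.right t h2, hφ.right t h2]; exact hIcc 0 (by simp)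
  have hmax : (fun t => max (φ t) (a t)) = φ := by
    ext t; exact max_eq_left (hge t)
  rw [hmax] at hfix
  exact ⟨φ, hφ, hfix, ha0.trans (hge 0), haθ.trans (hge _)⟩

end Big

/-- A functional on profiles which separates the two attracting regions of the return map: it is
small near the zero profile and, among profiles of height below `4 μ`, at least `1` exactly on those
with `ψ 0 ≥ β + μ θ` and `ψ (-1 + θ) ≥ β`. The term `1 / 2 + ψ 0 / (8 * μ)` makes it strictly
monotone also for profiles vanishing at `-1 + θ`. -/
noncomputable def level (μ β θ : ℝ) (ψ : ℝ → ℝ) : ℝ :=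
  min (ψ 0 / (β + μ * θ)) (max (ψ (-1 + θ) / β) (1 / 2 + ψ 0 / (8 * μ)))

namespace Big

variable {g φ : ℝ → ℝ} {μ r β σ θ : ℝ}

/-- A second fixed point. A scalar unknown `u ∈ [-1,1]` is added to the return map: the profile is
scaled down for `u < 0` and moved towards the large profile `e` for `u > 0`, and `u` increases
where the return map lowers the level and decreases where it raises it. At `u = 1` and `u = -1`
this drift points inwards, so a fixed point of the augmented map preserves the level, which forces
`u = 0`. -/
lemma exists_small (hb : Big g μ β σ θ) (h : Nice g μ r) :
    ∃ φ, InK (2 * μ) φ ∧ ret g φ = φ ∧ 0 < φ 0 ∧ (φ 0 ≤ β + μ * θ ∨ φ (-1 + θ) ≤ β) := by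
  have hθ := hb.θpos
  have hθ' := hb.θlt
  have hβ := hb.βpos
  have hσ := hb.σpos
  have hup := hb.θup
  have hlow := hb.θlow
  have hσμ := hb.σμ
  have hμ := h.mu_pos
  have hp := mul_pos hμ hθ
  have hr := h.rpos
  set c := β + μ * θ with hc
  have hc0 : 0 < c := by linarith
  have hcμ : c < μ := by linarith
  set W := level μ β θ with hW
  have hWdef : ∀ ψ, W ψ = min (ψ 0 / c) (max (ψ (-1 + θ) / β) (1 / 2 + ψ 0 / (8 * μ))) :=
    fun _ => rfl
  have hWlim : ∀ (φs : ℕ → ℝ → ℝ) (φ : ℝ → ℝ),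
      (∀ t, Tendsto (fun n => φs n t) atTop (nhds (φ t))) →
      Tendsto (fun n => W (φs n)) atTop (nhds (W φ)) := fun φs φ hl => by
    simp only [hWdef]
    exact ((hl 0).div_const _).min (((hl _).div_const _).max
      (((hl 0).div_const _).const_add _))
  obtain ⟨s₀, hs0, hs1, hsr⟩ : ∃ s₀, 0 < s₀ ∧ s₀ < 1 / 2 ∧ c * s₀ ≤ r := by
    refine ⟨min (1 / 4) (r / c), by positivity, (min_le_left _ _).trans_lt (by norm_num), ?_⟩
    calc c * min (1 / 4) (r / c) ≤ c * (r / c) := by gcongr; exact min_le_right _ _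
      _ = r := by field_simp
  let E : (ℝ → ℝ) → ℝ := fun ψ => max s₀ (min (W ψ) 1) - W (ret g ψ)
  let e : ℝ → ℝ := fun t => 2 * μ * max 0 (min (t + 1) 1)
  have he : InK (2 * μ) e := by
    refine ⟨fun s t hst => ?_, fun t ht => ?_, fun t ht => ?_, fun s t hst => ?_⟩
    · simp only [e]; gcongr
    · simp only [e]
      rw [max_eq_left ((min_le_left _ _).trans (by linarith)), mul_zero]
    · simp only [e]
      rw [min_eq_right (by linarith), min_eq_right (by linarith)]
    · simp only [e]
      rw [← mul_sub]
      refine mul_le_mul_of_nonneg_left ?_ (by linarith)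
      rw [sub_le_iff_le_add]
      have h1 := le_max_left 0 (min (s + 1) 1)
      have h2 := le_max_right 0 (min (s + 1) 1)
      apply max_le
      · linarith
      · rcases le_total (s + 1) 1 with h | h
        · rw [min_eq_left h] at h2 ⊢
          linarith [min_le_left (t + 1) 1]
        · rw [min_eq_right h] at h2 ⊢
          linarith [min_le_right (t + 1) 1]
  have he0 : e 0 = 2 * μ := by simp [e]
  have heθ : e (-1 + θ) = 2 * μ * θ := by
    simp only [e]
    rw [show -1 + θ + 1 = θ by ring, min_eq_left hθ'.le, max_eq_right hθ.le]
  let χ : (ℝ → ℝ) → ℝ → ℝ → ℝ := fun φ u t => (1 - |u|) * φ t + max u 0 * e t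
  have hχ : ∀ φ u, InK (2 * μ) φ → u ∈ Icc (-1 : ℝ) 1 → InK (2 * μ) (χ φ u) := fun φ u hφ hu => by
    have h1 : |u| ≤ 1 := abs_le.2 hu
    exact hφ.combo he (by linarith) (le_max_right _ _)
      (by linarith [max_le (le_abs_self u) (abs_nonneg u)])
  -- levels below `s₀` are lowered by the return map
  have hA : ∀ ψ, InK (2 * μ) ψ → W ψ ≤ s₀ → 0 < E ψ := fun ψ hψ hle => by
    have h1 : max s₀ (min (W ψ) 1) = s₀ := max_eq_left ((min_le_left _ _).trans hle)
    simp only [E]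
    rw [h1, sub_pos]
    have h2 : ψ 0 / c ≤ s₀ := by
      rw [hWdef, min_le_iff] at hle
      rcases hle with hle | hle
      · exact hle
      · have h3 := (le_max_right _ _).trans hle
        have h4 : 0 ≤ ψ 0 / (8 * μ) := div_nonneg (hψ.nonneg 0) (by linarith)
        linarith
    have h3 : W (ret g ψ) ≤ ret g ψ 0 / c := min_le_left _ _
    rcases (hψ.nonneg 0).eq_or_lt with h0 | h0
    · rw [ret_zero h0.symm, zero_div] at h3
      linarith
    · have h4 : ψ 0 ≤ r := by
        rw [div_le_iff₀ hc0] at h2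
        linarith
      have h5 := ret_lt h hψ h0 h4
      have h6 : ret g ψ 0 / c < ψ 0 / c := div_lt_div_of_pos_right h5 hc0
      linarith
  -- levels from `1` on are kept above `1` by the return map
  have hB : ∀ ψ, InK (2 * μ) ψ → 1 ≤ W ψ → E ψ < 0 := fun ψ hψ hle => by
    have h1 : max s₀ (min (W ψ) 1) = 1 := by
      rw [min_eq_right hle, max_eq_right (by linarith)]
    simp only [E]
    rw [h1, sub_neg]
    rw [hWdef, le_min_iff, one_le_div hc0, le_max_iff, one_le_div hβ] at hle
    obtain ⟨h2, h3⟩ := hle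
    have h4 : β ≤ ψ (-1 + θ) := by
      rcases h3 with h3 | h3
      · exact h3
      · have h5 : ψ 0 / (8 * μ) ≤ 1 / 4 := by
          rw [div_le_iff₀ (by linarith)]
          linarith [hψ.le_const 0]
        linarith
    obtain ⟨b1, b2, -⟩ := hb.ret_big h hψ h2 h4
    rw [hWdef, lt_min_iff, one_lt_div hc0, lt_max_iff, one_lt_div hβ]
    exact ⟨b1, Or.inl b2⟩
  obtain ⟨φ, u, hφ, hu, hf1, hf2⟩ := schauder (L := 2 * μ) (by linarith)
    (fun φ u => ret g (χ φ u)) (fun φ u => max (-1) (min (u + E (χ φ u)) 1))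
    (fun φ u hφ hu => (ret_inK h (hχ φ u hφ hu)).weaken (by linarith))
    (fun φ u hφ hu => ⟨le_max_left _ _, max_le (by norm_num) (min_le_right _ _)⟩)
    (fun φs us φ u hs hus hφ hu hlim hulim => by
      have hχl : ∀ t, Tendsto (fun n => χ (φs n) (us n) t) atTop (nhds (χ φ u t)) := fun t =>
        ((hulim.abs.const_sub 1).mul (hlim t)).add
          ((hulim.max tendsto_const_nhds).mul tendsto_const_nhds)
      have hrl := ret_tendsto h (by linarith) (fun n => hχ _ _ (hs n) (hus n)) (hχ φ u hφ hu) hχl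
      refine ⟨hrl, tendsto_const_nhds.max ((hulim.add ?_).min tendsto_const_nhds)⟩
      exact (tendsto_const_nhds.max ((hWlim _ _ hχl).min tendsto_const_nhds)).sub (hWlim _ _ hrl))
  have hψK := hχ φ u hφ hu
  have hφμ : InK μ φ := hf1 ▸ ret_inK h hψK
  have hψ0 : χ φ u 0 = (1 - |u|) * φ 0 + max u 0 * (2 * μ) := by simp only [χ]; rw [he0]
  have hψθ : χ φ u (-1 + θ) = (1 - |u|) * φ (-1 + θ) + max u 0 * (2 * μ * θ) := by
    simp only [χ]; rw [heθ]
  have hφ0μ : φ 0 ≤ μ := hφμ.le_const 0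
  have hφθμ : φ (-1 + θ) ≤ μ * θ := by
    have := hφμ.lip (-1) (-1 + θ) (by linarith)
    rw [hφμ.left (-1) le_rfl] at this
    linarith
  set ψ := χ φ u with hψ
  have hu1 : u ≠ 1 := by
    intro h1
    rw [h1] at hψ0 hψθ hf2
    have h2 := hB ψ hψK (by
      rw [hWdef, le_min_iff, one_le_div hc0, le_max_iff, one_le_div hβ, hψ0, hψθ]
      norm_num
      refine ⟨by linarith, Or.inl (by nlinarith)⟩)
    have h3 : max (-1) (min (1 + E ψ) 1) < 1 :=
      max_lt (by norm_num) ((min_le_left _ _).trans_lt (by linarith))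
    linarith
  have hu2 : u ≠ -1 := by
    intro h1
    rw [h1] at hψ0 hψθ hf2
    have h2 := hA ψ hψK (by
      rw [hWdef, hψ0]
      norm_num
      exact hs0.le)
    have h3 : -1 < max (-1) (min (-1 + E ψ) 1) :=
      lt_max_of_lt_right (lt_min (by linarith) (by norm_num))
    linarith
  have hu3 : -1 < u := lt_of_le_of_ne hu.1 (Ne.symm hu2)
  have hu4 : u < 1 := lt_of_le_of_ne hu.2 hu1
  have hE : E ψ = 0 := by
    rcases lt_trichotomy (E ψ) 0 with h1 | h1 | h1
    · have : max (-1) (min (u + E ψ) 1) < u := max_lt hu3 ((min_le_left _ _).trans_lt (by linarith))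
      linarith
    · exact h1
    · have : u < max (-1) (min (u + E ψ) 1) := lt_max_of_lt_right (lt_min (by linarith) hu4)
      linarith
  have hWs : s₀ < W ψ := by
    by_contra hcon
    exact (hA ψ hψK (not_lt.1 hcon)).ne' hE
  have hW1 : W ψ < 1 := by
    by_contra hcon
    exact (hB ψ hψK (not_lt.1 hcon)).ne hE
  have hWW : W ψ = W φ := by
    simp only [E] at hE
    rw [min_eq_left hW1.le, max_eq_right hWs.le, hf1] at hE
    linarith
  have hψ0pos : 0 < ψ 0 := by
    have h1 : W ψ ≤ ψ 0 / c := min_le_left _ _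
    by_contra hcon
    have := div_nonpos_of_nonpos_of_nonneg (not_lt.1 hcon) hc0.le
    linarith
  -- strict monotonicity of the level in `u` forces `u = 0`
  have hu0 : u = 0 := by
    rcases lt_trichotomy u 0 with h1 | h1 | h1
    · exfalso
      rw [abs_of_neg h1, max_eq_right h1.le, zero_mul, add_zero] at hψ0 hψθ
      have hφ0 : 0 < φ 0 := by
        rw [hψ0] at hψ0pos
        exact pos_of_mul_pos_right hψ0pos (by linarith)
      have h2 : ψ 0 < φ 0 := by rw [hψ0]; nlinarith
      have h3 : ψ 0 / (8 * μ) < φ 0 / (8 * μ) := div_lt_div_of_pos_right h2 (by linarith)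
      have h4 : W ψ < W φ := by
        rw [hWdef, hWdef]
        refine min_lt_min (div_lt_div_of_pos_right h2 hc0) (max_lt ?_ ?_)
        · rcases (hφ.nonneg (-1 + θ)).eq_or_lt with h5 | h5
          · rw [hψθ, ← h5, mul_zero, zero_div]
            refine lt_max_of_lt_right ?_
            have : 0 ≤ φ 0 / (8 * μ) := div_nonneg hφ0.le (by linarith)
            linarith
          · refine lt_max_of_lt_left (div_lt_div_of_pos_right ?_ hβ)
            rw [hψθ]; nlinarith
        · exact lt_max_of_lt_right (by linarith)
      linarith
    · exact h1
    · exfalso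
      rw [abs_of_pos h1, max_eq_left h1.le] at hψ0 hψθ
      have h2 : φ 0 < ψ 0 := by rw [hψ0]; nlinarith
      have h3 : φ 0 / (8 * μ) < ψ 0 / (8 * μ) := div_lt_div_of_pos_right h2 (by linarith)
      have h4 : φ (-1 + θ) < ψ (-1 + θ) := by rw [hψθ]; nlinarith
      have h5 : W φ < W ψ := by
        rw [hWdef, hWdef]
        exact min_lt_min (div_lt_div_of_pos_right h2 hc0)
          (max_lt_max (div_lt_div_of_pos_right h4 hβ) (by linarith))
      linarith
  have hψφ : ψ = φ := by
    ext t
    simp [hψ, χ, hu0]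
  rw [hψφ] at hf1 hψ0pos hW1
  refine ⟨φ, hφ, hf1, hψ0pos, ?_⟩
  by_contra! hcon
  refine absurd hW1 (not_lt.2 ?_)
  rw [hWdef, le_min_iff, one_le_div hc0, le_max_iff, one_le_div hβ]
  exact ⟨hcon.1.le, Or.inl hcon.2.le⟩

end Big

/-- Two cycles for `g`, one above the threshold levels and one not. -/
lemma Big.exists_two_cyc {g : ℝ → ℝ} {μ r β σ θ : ℝ} (hb : Big g μ β σ θ) (h : Nice g μ r) :
    (∃ p z₁ z₂, Cyc g p z₁ z₂ ∧ σ - β ≤ p 0 ∧ min (σ * θ) (σ - β) ≤ p (-1 + θ)) ∧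
    ∃ p z₁ z₂, Cyc g p z₁ z₂ ∧ (p 0 ≤ β + μ * θ ∨ p (-1 + θ) ≤ β) := by
  have hθ := hb.θpos
  have hθ' := hb.θlt
  have h0 : (0 : ℝ) ∈ Icc (-1 : ℝ) 0 := by simp
  have h1 : -1 + θ ∈ Icc (-1 : ℝ) 0 := ⟨by linarith, by linarith⟩
  constructor
  · obtain ⟨φ, hφ, hfix, a1, a2⟩ := hb.exists_large h
    obtain ⟨p, z₁, z₂, hp, hpφ⟩ := exists_cyc h hφ
      (by have := mul_pos h.mu_pos hθ; linarith [hb.βpos, hb.θup]) hfix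
    exact ⟨p, z₁, z₂, hp, by rwa [hpφ 0 h0], by rwa [hpφ _ h1]⟩
  · obtain ⟨φ, hφ, hfix, a0, a1⟩ := hb.exists_small h
    obtain ⟨p, z₁, z₂, hp, hpφ⟩ := exists_cyc h hφ a0 hfix
    exact ⟨p, z₁, z₂, hp, by rwa [hpφ 0 h0, hpφ _ h1]⟩

/-! ### Uniform bounds for cycles -/

/-- Two-sided linear bounds on a bounded negative feedback nonlinearity. -/
structure LinBd (g : ℝ → ℝ) (μ κ C : ℝ) : Prop where
  cont : Continuous g
  neg : NegFb g
  bdd : ∀ v, |g v| ≤ μ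
  κpos : 0 < κ
  Cge : 1 ≤ C
  upper : ∀ v, |g v| ≤ C * |v|
  lower : ∀ v, |v| ≤ μ → κ * |v| ≤ |g v|

namespace LinBd

variable {g p : ℝ → ℝ} {μ κ C z₁ z₂ : ℝ}

lemma mirror (h : LinBd g μ κ C) : LinBd (mirror g) μ κ C where
  cont := continuous_mirror h.cont
  neg := h.neg.mirror
  bdd v := by unfold _root_.mirror; rw [abs_neg]; exact h.bdd _
  κpos := h.κpos
  Cge := h.Cge
  upper v := by unfold _root_.mirror; rw [abs_neg, ← abs_neg v]; exact h.upper _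
  lower v hv := by
    unfold _root_.mirror; rw [abs_neg, ← abs_neg v]; exact h.lower _ (by rwa [abs_neg])

lemma le_mu (h : LinBd g μ κ C) (hp : Cyc g p z₁ z₂) {t : ℝ} (h1 : -1 ≤ t) (h2 : t ≤ z₁) :
    p t ≤ μ := by
  refine ((hp.half h.neg).le_zero h.cont h.neg h1 (by linarith)).trans ?_
  have := sub_le_of_hasDerivAt (a := -1) (b := 0) (c := μ) (by norm_num) hp.cont
    (fun u _ => hp.deriv u) (fun u _ => (abs_le.1 (h.bdd _)).2)
  rw [hp.start] at this
  linarith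

/-- The depth of the negative half-cycle is controlled by the solution on `[z₁ - 1, z₁]`. -/
lemma neg_le (h : LinBd g μ κ C) (hp : Cyc g p z₁ z₂) {M : ℝ}
    (hM : ∀ s, z₁ - 1 < s → s < z₁ → p s ≤ M) : -p (z₁ + 1) ≤ C * M := by
  have hz := hp.zpos
  have hC := h.Cge
  have := le_sub_of_hasDerivAt (a := z₁) (b := z₁ + 1) (c := -(C * M)) (by linarith) hp.cont
    (fun u _ => hp.deriv u) (fun u hu => by
      have h1 := hM (u - 1) (by linarith [hu.1]) (by linarith [hu.2])
      have h2 := h.upper (p (u - 1))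
      rw [abs_of_nonneg (hp.nonneg (by linarith [hu.1]) (by linarith [hu.2]))] at h2
      have h3 := neg_abs_le (g (p (u - 1)))
      nlinarith)
  rw [hp.zero] at this
  linarith

lemma neg_le_zero (h : LinBd g μ κ C) (hp : Cyc g p z₁ z₂) : -p (z₁ + 1) ≤ C * p 0 :=
  h.neg_le hp fun s h1 h2 => (hp.half h.neg).le_zero h.cont h.neg (by linarith [hp.zpos])
    (by linarith)

lemma zero_le_neg (h : LinBd g μ κ C) (hp : Cyc g p z₁ z₂) : p 0 ≤ C * -p (z₁ + 1) := by
  have := h.mirror.neg_le_zero hp.mirror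
  rw [show z₁ + 1 + (z₂ - z₁ - 1 + 1) = 0 + (z₂ + 1) by ring, hp.per, add_zero, neg_neg] at this
  exact this

lemma z₁_le (h : LinBd g μ κ C) (hp : Cyc g p z₁ z₂) : z₁ ≤ 1 + C ^ 2 / κ := by
  have hκ := h.κpos
  have hC := h.Cge
  rcases le_total z₁ 1 with h1 | h1
  · have : 0 ≤ C ^ 2 / κ := by positivity
    linarith
  · have hH := hp.half h.neg
    have hanti := hH.anti h.cont h.neg
    have h0 := hH.pos0
    have a1 : -p (z₁ + 1) ≤ C * p (z₁ - 1) := h.neg_le hp fun s h2 h3 =>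
      hanti ⟨by linarith, by linarith⟩ ⟨by linarith, by linarith⟩ h2.le
    have a2 := h.zero_le_neg hp
    have a3 : p 0 ≤ C ^ 2 * p (z₁ - 1) := by nlinarith
    set m := p (z₁ - 1) with hm
    have hm0 : 0 < m := by
      by_contra hc
      nlinarith [sq_nonneg C]
    have a4 := sub_le_of_hasDerivAt (a := 1) (b := z₁) (c := -(κ * m)) h1 hp.cont
      (fun u _ => hp.deriv u) (fun u hu => by
        have b1 : m ≤ p (u - 1) := hanti ⟨by linarith [hu.1], by linarith [hu.2]⟩
          ⟨by linarith, by linarith⟩ (by linarith [hu.2])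
        have b2 := h.le_mu hp (t := u - 1) (by linarith [hu.1]) (by linarith [hu.2])
        have b0 : 0 < p (u - 1) := hm0.trans_le b1
        have b3 := h.lower (p (u - 1)) (by rwa [abs_of_pos b0])
        rw [abs_of_pos b0, abs_of_neg (h.neg.neg b0)] at b3
        nlinarith)
    have a5 : p 1 ≤ p 0 := hanti ⟨le_rfl, by linarith⟩ ⟨by linarith, by linarith⟩ (by norm_num)
    rw [hp.zero] at a4
    have a6 : κ * (z₁ - 1) * m ≤ C ^ 2 * m := by linarith
    have a7 := le_of_mul_le_mul_right a6 hm0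
    have a8 : z₁ - 1 ≤ C ^ 2 / κ := by rw [le_div_iff₀ hκ]; linarith
    linarith

lemma z₂_le (h : LinBd g μ κ C) (hp : Cyc g p z₁ z₂) : z₂ ≤ 3 + 2 * (C ^ 2 / κ) := by
  have h1 := h.z₁_le hp
  have h2 := h.mirror.z₁_le hp.mirror
  linarith

end LinBd

lemma Cyc.exists_rep {g p : ℝ → ℝ} {z₁ z₂ : ℝ} (h : Cyc g p z₁ z₂) (t : ℝ) :
    ∃ s, -1 ≤ s ∧ s < z₂ ∧ p s = p t := by
  have hT : 0 < z₂ + 1 := by linarith [h.zpos, h.gap]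
  have hper : Function.Periodic p (z₂ + 1) := h.per
  obtain ⟨s, hs, he⟩ := hper.exists_mem_Ico hT t (-1)
  exact ⟨s, hs.1, by linarith [hs.2], he.symm⟩

lemma LinBd.abs_le {g p : ℝ → ℝ} {μ κ C z₁ z₂ : ℝ} (h : LinBd g μ κ C) (hp : Cyc g p z₁ z₂)
    (t : ℝ) : |p t| ≤ C * p 0 := by
  have hC := h.Cge
  have h0 := hp.pos 0 (by norm_num) hp.zpos
  obtain ⟨s, hs1, hs2, hs⟩ := hp.exists_rep t
  rw [← hs]
  rcases le_total s z₁ with h1 | h1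
  · rw [abs_of_nonneg (hp.nonneg hs1 h1)]
    have := (hp.half h.neg).le_zero h.cont h.neg hs1 (by linarith)
    nlinarith
  · have h2 := hp.mirror.nonneg (t := s - (z₁ + 1)) (by linarith) (by linarith)
    have h3 := (hp.mirror.half h.neg.mirror).le_zero h.mirror.cont h.neg.mirror
      (t := s - (z₁ + 1)) (by linarith) (by linarith)
    simp only [add_sub_cancel, add_zero] at h2 h3
    rw [abs_of_nonpos (by linarith)]
    linarith [h.neg_le_zero hp]

/-! ### Limits of cycles -/

/-- Compactness of cycles under continuous convergence of the nonlinearities. -/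
lemma exists_limit {gs : ℕ → ℝ → ℝ} {g : ℝ → ℝ} (hg : Continuous g)
    (hcc : ∀ (vs : ℕ → ℝ) (v : ℝ), Tendsto vs atTop (nhds v) →
      Tendsto (fun n => gs n (vs n)) atTop (nhds (g v)))
    {ys : ℕ → ℝ → ℝ} {zs ws : ℕ → ℝ} {L M Z : ℝ} (hgs : ∀ n, Continuous (gs n))
    (hcyc : ∀ n, Cyc (gs n) (ys n) (zs n) (ws n)) (hM : ∀ n t, |ys n t| ≤ M)
    (hL : ∀ n t, |gs n (ys n t)| ≤ L) (hZ : ∀ n, ws n ≤ Z) :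
    ∃ (y : ℝ → ℝ) (a b : ℝ) (k : ℕ → ℕ), StrictMono k ∧
      (∀ t, Tendsto (fun n => ys (k n) t) atTop (nhds (y t))) ∧
      (∀ t, HasDerivAt y (g (y (t - 1))) t) ∧ (∀ t, y (t + (b + 1)) = y t) ∧
      0 ≤ a ∧ a + 1 ≤ b ∧ y a = 0 ∧ (∀ t, -1 ≤ t → t < a → 0 ≤ y t) ∧
      (∀ t, a < t → t < b → y t ≤ 0) := by
  have hlip : ∀ n s t, |ys n t - ys n s| ≤ L * |t - s| := fun n s t => by
    refine convex_univ.norm_image_sub_le_of_norm_hasDerivWithin_le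
      (fun u _ => ((hcyc n).deriv u).hasDerivWithinAt) (fun u _ => hL n _) (mem_univ s) (mem_univ t)
  obtain ⟨y, k₁, hk₁, hy₁⟩ := exists_subseq_lip ys L M hlip hM
  have hbox : ∀ n, zs n ∈ Icc 0 Z := fun n =>
    ⟨(hcyc n).zpos.le, by linarith [(hcyc n).gap, hZ n]⟩
  have hbox' : ∀ n, ws n ∈ Icc 0 Z := fun n =>
    ⟨by linarith [(hcyc n).gap, (hcyc n).zpos], hZ n⟩
  obtain ⟨a, ha, k₂, hk₂, hza⟩ := isCompact_Icc.tendsto_subseq fun n => hbox (k₁ n)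
  obtain ⟨b, hb, k₃, hk₃, hwb⟩ := isCompact_Icc.tendsto_subseq fun n => hbox' (k₁ (k₂ n))
  have hza' := hza.comp hk₃.tendsto_atTop
  set k : ℕ → ℕ := fun n => k₁ (k₂ (k₃ n)) with hk
  have hkm : StrictMono k := hk₁.comp (hk₂.comp hk₃)
  have hy : ∀ t, Tendsto (fun n => ys (k n) t) atTop (nhds (y t)) := fun t =>
    (hy₁ t).comp (hk₂.comp hk₃).tendsto_atTop
  have hz : Tendsto (fun n => zs (k n)) atTop (nhds a) := hza'
  have hw : Tendsto (fun n => ws (k n)) atTop (nhds b) := hwb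
  have happ : ∀ (τ : ℕ → ℝ) (t : ℝ), Tendsto τ atTop (nhds t) →
      Tendsto (fun n => ys (k n) (τ n)) atTop (nhds (y t)) := fun τ t hτ =>
    tendsto_apply_of_lip (fun n => hlip (k n)) hy hτ
  have hylip : ∀ s t, |y t - y s| ≤ L * |t - s| := fun s t =>
    le_of_tendsto ((hy t).sub (hy s)).abs (Eventually.of_forall fun n => hlip (k n) s t)
  have hyc : Continuous y := by
    have hL0 : 0 ≤ L := (abs_nonneg _).trans (hL 0 0)
    refine (LipschitzWith.of_dist_le_mul (K := L.toNNReal) fun a b => ?_).continuous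
    rw [Real.coe_toNNReal _ hL0, Real.dist_eq, Real.dist_eq]
    exact hylip b a
  -- along the subsequence the index `k n` may be used in the continuous convergence hypothesis
  have hcc' : ∀ t, Tendsto (fun n => gs (k n) (ys (k n) t)) atTop (nhds (g (y t))) := fun t => by
    classical
    let vs : ℕ → ℝ := fun m => if h : ∃ n, k n = m then ys m t else y t
    have hvs : Tendsto vs atTop (nhds (y t)) := by
      rw [Metric.tendsto_atTop]
      intro ε hε
      obtain ⟨N, hN⟩ := Metric.tendsto_atTop.1 (hy t) ε hε
      refine ⟨k N, fun m hm => ?_⟩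
      simp only [vs]
      split_ifs with h
      · obtain ⟨n, rfl⟩ := h
        exact hN n (hkm.le_iff_le.1 hm)
      · simpa using hε
    have := (hcc vs (y t) hvs).comp hkm.tendsto_atTop
    refine this.congr fun n => ?_
    simp only [Function.comp_def, vs]
    rw [dif_pos ⟨n, rfl⟩]
  have hInt : ∀ c t, y t = y c + ∫ s in c..t, g (y (s - 1)) := fun c t => by
    have h1 : ∀ n, ys (k n) t = ys (k n) c + ∫ s in c..t, gs (k n) (ys (k n) (s - 1)) := fun n => by
      have hc1 := (hcyc (k n)).cont
      have hc2 := hgs (k n)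
      rw [intervalIntegral.integral_eq_sub_of_hasDerivAt (fun u _ => (hcyc (k n)).deriv u)
        ((by fun_prop : Continuous fun s => gs (k n) (ys (k n) (s - 1))).intervalIntegrable _ _)]
      ring
    refine tendsto_nhds_unique (hy t) ?_
    simp_rw [h1]
    refine (hy c).add (intervalIntegral.tendsto_integral_filter_of_dominated_convergence
      (fun _ => L) (Eventually.of_forall fun n => ?_)
      (Eventually.of_forall fun n => Eventually.of_forall fun s _ => hL _ _)
      intervalIntegrable_const (Eventually.of_forall fun s _ => hcc' (s - 1)))
    have hc1 := (hcyc (k n)).cont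
    have hc2 := hgs (k n)
    exact (by fun_prop : Continuous fun s => gs (k n) (ys (k n) (s - 1))).aestronglyMeasurable
  refine ⟨y, a, b, k, hkm, hy, fun t => ?_, fun t => ?_, ha.1, ?_, ?_, fun t h1 h2 => ?_,
    fun t h1 h2 => ?_⟩
  · have hc : Continuous fun s => g (y (s - 1)) := by fun_prop
    have h1 : HasDerivAt (fun u => y 0 + ∫ s in (0 : ℝ)..u, g (y (s - 1))) (g (y (t - 1))) t :=
      (intervalIntegral.integral_hasDerivAt_right (hc.intervalIntegrable _ _)
        hc.stronglyMeasurable.stronglyMeasurableAtFilter hc.continuousAt).const_add _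
    exact h1.congr_of_eventuallyEq (Eventually.of_forall fun u => hInt 0 u)
  · refine tendsto_nhds_unique (happ _ _ ((hw.add_const 1).const_add t)) ?_
    simp_rw [(hcyc _).per]
    exact hy t
  · exact le_of_tendsto_of_tendsto' (hz.add_const 1) hw fun n => (hcyc (k n)).gap.le
  · refine tendsto_nhds_unique (happ _ _ hz) ?_
    simp_rw [(hcyc _).zero]
    exact tendsto_const_nhds
  · refine ge_of_tendsto (hy t) ?_
    filter_upwards [hz.eventually_const_lt h2] with n hn
    exact (hcyc (k n)).nonneg h1 hn.le
  · refine le_of_tendsto (hy t) ?_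
    filter_upwards [hz.eventually_lt_const h1, hw.eventually_const_lt h2] with n hn hn'
    exact ((hcyc (k n)).neg t hn hn').le

/-- If a nonnegative half-cycle ends at a zero `a`, then `a` is its first zero. -/
lemma half_of_nonneg {g y : ℝ → ℝ} {a : ℝ} (hg : Continuous g) (hn : NegFb g)
    (hc : Continuous y) (hstart : y (-1) = 0) (hmono : MonotoneOn y (Icc (-1) 0)) (h0 : 0 < y 0)
    (hd : ∀ t, 0 < t → HasDerivAt y (g (y (t - 1))) t) (ha : 0 ≤ a) (hya : y a = 0)
    (hpos : ∀ t, 0 ≤ t → t < a → 0 ≤ y t) : Half g y a := by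
  obtain ⟨a1, a2, a3, a4⟩ := firstZero_spec hc h0 ha hya.le
  have hH : Half g y (firstZero y) := ⟨hc, hstart, hmono, h0, hd, a1, a3, a4⟩
  rcases a2.eq_or_lt with h | h
  · rwa [h] at hH
  · obtain ⟨w, hw1, hw2⟩ := exists_between (lt_min h (lt_add_one (firstZero y)))
    have h1 := hH.neg hg hn hw1 (hw2.le.trans (min_le_right _ _))
    have h2 := hpos w (by linarith) (hw2.trans_le (min_le_left _ _))
    linarith

/-- A nonzero limit of cycles is a cycle. -/
lemma cyc_of_limit {g y : ℝ → ℝ} {a b : ℝ} (hg : Continuous g) (hn : NegFb g)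
    (hd : ∀ t, HasDerivAt y (g (y (t - 1))) t) (hper : ∀ t, y (t + (b + 1)) = y t)
    (ha : 0 ≤ a) (hab : a + 1 ≤ b) (hya : y a = 0) (hpos : ∀ t, -1 ≤ t → t < a → 0 ≤ y t)
    (hneg : ∀ t, a < t → t < b → y t ≤ 0) (hstart : y (-1) = 0)
    (hmono : MonotoneOn y (Icc (-1) 0)) (h0 : 0 < y 0) : Cyc g y a b := by
  have hc : Continuous y := continuous_iff_continuousAt.2 fun t => (hd t).continuousAt
  have hH : Half g y a := half_of_nonneg hg hn hc hstart hmono h0 (fun t _ => hd t) ha hya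
    (fun t h1 h2 => hpos t (by linarith) h2)
  have hyb : y b = 0 := by
    have := hper (-1)
    rwa [show -1 + (b + 1) = b by ring, hstart] at this
  have hap := hH.zpos
  have hH' : Half (mirror g) (fun t => -y (a + 1 + t)) (b - a - 1) := by
    refine half_of_nonneg (continuous_mirror hg) hn.mirror (by fun_prop) ?_ ?_ ?_
      (fun t _ => hasDerivAt_neg_shift (hd _)) (by linarith) ?_ ?_
    · rw [add_neg_cancel_right, hya, neg_zero]
    · intro s hs t ht hst
      exact neg_le_neg (hH.anti hg hn ⟨by linarith [hs.1], by linarith [hs.2]⟩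
        ⟨by linarith [ht.1], by linarith [ht.2]⟩ (by linarith))
    · exact neg_pos.2 (hH.neg hg hn (by linarith) (by linarith))
    · rw [show a + 1 + (b - a - 1) = b by ring, hyb, neg_zero]
    · exact fun t h1 h2 => neg_nonneg.2 (hneg _ (by linarith) (by linarith))
  refine ⟨hd, hap, by linarith [hH'.zpos], hstart, fun t h1 h2 => ?_, hya, fun t h1 h2 => ?_, hper⟩
  · rcases le_or_gt 0 t with h3 | h3
    · exact hH.pos t h3 h2
    · have := hH'.neg (continuous_mirror hg) hn.mirror (t := b - a + t) (by linarith)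
        (by linarith)
      simp only [show a + 1 + (b - a + t) = t + (b + 1) by ring, hper] at this
      linarith
  · rcases le_or_gt t (a + 1) with h3 | h3
    · exact hH.neg hg hn h1 h3
    · have := hH'.pos (t - (a + 1)) (by linarith) (by linarith)
      simp only [add_sub_cancel] at this
      linarith

/-! ### The linear equation -/

/-- The equation `y'(t) = -κ y(t-1)` with `0 < κ < π/2` has no nonzero periodic solution. The
autocorrelation `A(τ) = ∫ y(t) y(t-τ) dt` over a period is even and satisfies
`A'(τ) = κ A(τ+1)`, whence `A(τ+2) = -A(τ)` and `A'' = -κ² A`; comparison with `cos κτ` gives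
`A(0) = 0`. -/
lemma no_linear_periodic {y : ℝ → ℝ} {κ T : ℝ} (hκ : 0 < κ) (hκ' : κ < Real.pi / 2) (hT : 0 < T)
    (hd : ∀ t, HasDerivAt y (-(κ * y (t - 1))) t) (hper : ∀ t, y (t + T) = y t) : y 0 = 0 := by
  have hc : Continuous y := continuous_iff_continuousAt.2 fun t => (hd t).continuousAt
  have hP : Function.Periodic y T := hper
  obtain ⟨M, hM⟩ : ∃ M, ∀ t, |y t| ≤ M := by
    obtain ⟨M, hM⟩ := isCompact_Icc.exists_bound_of_continuousOn (s := Icc 0 (0 + T))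
      hc.continuousOn
    refine ⟨M, fun t => ?_⟩
    obtain ⟨s, hs, he⟩ := hP.exists_mem_Ico hT t 0
    rw [he]
    exact hM s ⟨hs.1, hs.2.le⟩
  have hM0 : 0 ≤ M := (abs_nonneg _).trans (hM 0)
  set A : ℝ → ℝ := fun τ => ∫ t in (0 : ℝ)..T, y t * y (t - τ) with hA
  have hAd : ∀ τ, HasDerivAt A (κ * A (τ + 1)) τ := by
    intro τ
    have h1 : κ * A (τ + 1) = ∫ t in (0 : ℝ)..T, y t * (κ * y (t - τ - 1)) := by
      simp only [hA]
      rw [← intervalIntegral.integral_const_mul]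
      refine intervalIntegral.integral_congr fun t _ => ?_
      simp only [sub_sub]
      ring
    rw [h1]
    refine (intervalIntegral.hasDerivAt_integral_of_dominated_loc_of_deriv_le
      (F := fun τ t => y t * y (t - τ)) (F' := fun τ t => y t * (κ * y (t - τ - 1)))
      (bound := fun _ => M * (κ * M)) (Metric.ball_mem_nhds τ one_pos)
      (Eventually.of_forall fun σ => ?_) ?_ ?_ ?_ ?_ ?_).2
    · exact (by fun_prop : Continuous fun t => y t * y (t - σ)).aestronglyMeasurable
    · exact (by fun_prop : Continuous fun t => y t * y (t - τ)).intervalIntegrable _ _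
    · exact (by fun_prop : Continuous fun t => y t * (κ * y (t - τ - 1))).aestronglyMeasurable
    · refine Eventually.of_forall fun t _ σ _ => ?_
      rw [Real.norm_eq_abs, abs_mul, abs_mul, abs_of_pos hκ]
      gcongr <;> exact hM _
    · exact intervalIntegrable_const
    · refine Eventually.of_forall fun t _ σ _ => ?_
      have h2 : HasDerivAt (fun σ => y (t - σ)) (κ * y (t - σ - 1)) σ := by
        have := HasDerivAt.comp_const_sub t σ (hd (t - σ))
        simpa using this
      exact h2.const_mul _
  have hAe : ∀ τ, A (-τ) = A τ := by
    intro τ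
    simp only [hA]
    have h1 : ∫ t in (0 : ℝ)..T, y t * y (t - -τ) = ∫ t in (0 + τ)..(T + τ), y (t - τ) * y t := by
      rw [← intervalIntegral.integral_comp_add_right (fun t => y (t - τ) * y t) τ]
      refine intervalIntegral.integral_congr fun t _ => ?_
      simp only [sub_neg_eq_add, add_sub_cancel_right]
    have h2 : Function.Periodic (fun t => y (t - τ) * y t) T := fun t => by
      simp only
      rw [hper, show t + T - τ = t - τ + T by ring, hper]
    have h3 := h2.intervalIntegral_add_eq τ 0
    rw [h1, zero_add, add_comm T τ, h3, zero_add]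
    refine intervalIntegral.integral_congr fun t _ => ?_
    simp only [mul_comm]
  have hodd : ∀ τ, A (1 + τ) = -A (1 - τ) := by
    intro τ
    have h1 : HasDerivAt (fun σ => A (-σ)) (-(κ * A (-τ + 1))) τ := by
      have := (hAd (-τ)).comp τ (hasDerivAt_neg τ)
      simpa [Function.comp_def] using this
    have h2 : (fun σ => A (-σ)) = A := funext hAe
    rw [h2] at h1
    have h3 := h1.unique (hAd τ)
    have h4 : κ * (A (1 + τ) + A (1 - τ)) = 0 := by
      rw [show 1 + τ = τ + 1 by ring, show 1 - τ = -τ + 1 by ring]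
      linarith
    rcases mul_eq_zero.1 h4 with h5 | h5
    · exact absurd h5 hκ.ne'
    · linarith
  have hA1 : A 1 = 0 := by
    have := hodd 0
    simp only [add_zero, sub_zero] at this
    linarith
  have hA2 : ∀ τ, A (τ + 2) = -A τ := fun τ => by
    have := hodd (1 + τ)
    rw [show 1 + (1 + τ) = τ + 2 by ring, show 1 - (1 + τ) = -τ by ring, hAe] at this
    exact this
  set B : ℝ → ℝ := fun τ => A (τ + 1) * Real.cos (κ * τ) + A τ * Real.sin (κ * τ) with hB
  have hBd : ∀ τ, HasDerivAt B 0 τ := by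
    intro τ
    have e1 : HasDerivAt (fun τ => A (τ + 1)) (κ * A (τ + 1 + 1)) τ :=
      HasDerivAt.comp_add_const τ 1 (hAd (τ + 1))
    have e0 : HasDerivAt (fun τ : ℝ => κ * τ) κ τ := by
      simpa using (hasDerivAt_id τ).const_mul κ
    have e2 := (e1.mul e0.cos).add ((hAd τ).mul e0.sin)
    have h0 : κ * A (τ + 1 + 1) * Real.cos (κ * τ) + A (τ + 1) * (-Real.sin (κ * τ) * κ) +
        (κ * A (τ + 1) * Real.sin (κ * τ) + A τ * (Real.cos (κ * τ) * κ)) = 0 := by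
      rw [show τ + 1 + 1 = τ + 2 by ring, hA2]
      ring
    rw [h0] at e2
    exact e2
  have hB01 : B 1 = B 0 := is_const_of_deriv_eq_zero (fun τ => (hBd τ).differentiableAt)
    (fun τ => (hBd τ).deriv) 1 0
  have hcos : 0 < Real.cos κ := Real.cos_pos_of_mem_Ioo ⟨by linarith, hκ'⟩
  have hA0 : A 0 = 0 := by
    have h2 : A 2 = -A 0 := by simpa using hA2 0
    simp only [hB, mul_one, mul_zero, Real.cos_zero, Real.sin_zero, zero_add, hA1,
      zero_mul, add_zero, show (1 : ℝ) + 1 = 2 by norm_num, h2] at hB01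
    have : A 0 * Real.cos κ = 0 := by linarith
    rcases mul_eq_zero.1 this with h | h
    · exact h
    · exact absurd h hcos.ne'
  by_contra hy0
  have : 0 < A 0 := by
    simp only [hA, sub_zero]
    exact intervalIntegral.integral_pos hT (by fun_prop) (fun t _ => mul_self_nonneg _)
      ⟨0, ⟨le_rfl, hT.le⟩, mul_self_pos.2 hy0⟩
  linarith

/-! ### Approximating nonlinearities -/

/-- A logarithmic cutoff: `0` for `|x| ≥ exp (-m)`, `1` for `0 < |x| ≤ exp (-2 * m)`, and affine in
`log |x|` in between. Its key feature is that it varies slowly under rescaling of `x`. -/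
noncomputable def cutoff (m x : ℝ) : ℝ := max 0 (min 1 (-Real.log x / m - 1))

lemma cutoff_nonneg (m x : ℝ) : 0 ≤ cutoff m x := le_max_left _ _

lemma cutoff_le_one (m x : ℝ) : cutoff m x ≤ 1 := max_le zero_le_one (min_le_left _ _)

lemma cutoff_eq_zero {m x : ℝ} (hm : 0 < m) (hx : Real.exp (-m) ≤ |x|) : cutoff m x = 0 := by
  have h1 : -m ≤ Real.log x := by
    rw [← Real.log_abs, Real.le_log_iff_exp_le ((Real.exp_pos _).trans_le hx)]
    exact hx
  have h2 : -Real.log x / m ≤ 1 := by rw [div_le_one hm]; linarith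
  exact max_eq_left ((min_le_right _ _).trans (by linarith))

lemma cutoff_eq_one {m x : ℝ} (hm : 0 < m) (hx0 : x ≠ 0) (hx : |x| ≤ Real.exp (-(2 * m))) :
    cutoff m x = 1 := by
  have h1 : Real.log x ≤ -(2 * m) := by
    rw [← Real.log_abs, Real.log_le_iff_le_exp (abs_pos.2 hx0)]
    exact hx
  have h2 : 2 ≤ -Real.log x / m := by rw [le_div_iff₀ hm]; linarith
  unfold cutoff
  rw [min_eq_left (by linarith), max_eq_right zero_le_one]

lemma continuousAt_cutoff {m x : ℝ} (hx : x ≠ 0) : ContinuousAt (cutoff m) x := by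
  have := Real.continuousAt_log hx
  unfold cutoff
  fun_prop

lemma abs_cutoff_mul_sub_le {m h v : ℝ} (hm : 0 < m) (hh : h ≠ 0) (hv : v ≠ 0) :
    |cutoff m (h * v) - cutoff m h| ≤ |Real.log v| / m := by
  unfold cutoff
  refine (abs_max_sub_max_le_max _ _ _ _).trans (max_le (by simp; positivity) ?_)
  refine (abs_min_sub_min_le_max _ _ _ _).trans (max_le (by simp; positivity) ?_)
  rw [Real.log_mul hh hv, show -(Real.log h + Real.log v) / m - 1 - (-Real.log h / m - 1)
    = -(Real.log v / m) by ring, abs_neg, abs_div, abs_of_pos hm]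

/-- The nonlinearity `f` with its germ at `0` replaced by that of `v ↦ -v`. -/
noncomputable def appr (f : ℝ → ℝ) (m x : ℝ) : ℝ := (1 - cutoff m x) * f x - cutoff m x * x

/-- A factorization `f x = -x q x` with `q` continuous and positive, together with bounds. -/
structure Factor (f q : ℝ → ℝ) (μ κ C : ℝ) : Prop where
  qcont : Continuous q
  qpos : ∀ x, 0 < q x
  eq : ∀ x, f x = -(x * q x)
  bdd : ∀ x, |f x| ≤ μ
  κpos : 0 < κ
  κle : κ ≤ 1
  Cge : 1 ≤ C
  qle : ∀ x, q x ≤ C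
  leq : ∀ x, |x| ≤ μ → κ ≤ q x

lemma exists_factor {f : ℝ → ℝ} {μ : ℝ} (hμ : 0 < μ) (hf : Continuous f) (hn : NegFb f)
    (hd : DifferentiableAt ℝ f 0) (hd0 : deriv f 0 < 0) (hb : ∀ x, |f x| ≤ μ) :
    ∃ q κ C, Factor f q μ κ C ∧ q 0 = -deriv f 0 := by
  have h0 : f 0 = 0 := hn.zero hf
  set q : ℝ → ℝ := fun x => -dslope f 0 x with hq
  have heq : ∀ x, f x = -(x * q x) := fun x => by
    have := sub_smul_dslope f 0 x
    rw [sub_zero, h0, sub_zero, smul_eq_mul] at this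
    rw [hq, mul_neg, neg_neg, this]
  have hq0 : q 0 = -deriv f 0 := by simp [hq]
  have hc : Continuous q := by
    refine Continuous.neg (continuous_iff_continuousAt.2 fun x => ?_)
    rcases eq_or_ne x 0 with rfl | hx
    · exact continuousAt_dslope_same.2 hd
    · exact (continuousAt_dslope_of_ne hx).2 hf.continuousAt
  have hpos : ∀ x, 0 < q x := fun x => by
    rcases eq_or_ne x 0 with rfl | hx
    · rw [hq0]; linarith
    · have h1 := hn x hx
      rw [heq x] at h1
      by_contra h2
      nlinarith [mul_nonneg (mul_self_nonneg x) (neg_nonneg.2 (not_lt.1 h2))]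
  obtain ⟨x₁, -, hx₁⟩ := (isCompact_Icc (a := -μ) (b := μ)).exists_isMinOn
    ⟨0, by constructor <;> linarith⟩ hc.continuousOn
  obtain ⟨x₂, -, hx₂⟩ := (isCompact_Icc (a := (-1 : ℝ)) (b := 1)).exists_isMaxOn
    ⟨0, by constructor <;> norm_num⟩ hc.continuousOn
  refine ⟨q, min 1 (q x₁), max 1 (max (q x₂) μ), ⟨hc, hpos, heq, hb, lt_min one_pos (hpos _),
    min_le_left _ _, le_max_left _ _, fun x => ?_, fun x hx => ?_⟩, hq0⟩
  · rcases le_total |x| 1 with hx | hx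
    · exact (hx₂ (abs_le.1 hx)).trans ((le_max_left _ _).trans (le_max_right _ _))
    · refine le_trans ?_ ((le_max_right _ _).trans (le_max_right _ _))
      have h1 := hb x
      rw [heq x, abs_neg, abs_mul, abs_of_pos (hpos x)] at h1
      nlinarith [hpos x]
  · exact (min_le_right _ _).trans (hx₁ (abs_le.1 hx))

namespace Factor

variable {f q : ℝ → ℝ} {μ κ C m : ℝ}

lemma appr_eq (h : Factor f q μ κ C) (m x : ℝ) :
    appr f m x = -(x * ((1 - cutoff m x) * q x + cutoff m x)) := by
  unfold appr
  rw [h.eq]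
  ring

lemma quot_pos (h : Factor f q μ κ C) (m x : ℝ) :
    0 < (1 - cutoff m x) * q x + cutoff m x := by
  rcases (cutoff_nonneg m x).eq_or_lt with h1 | h1
  · rw [← h1]; simpa using h.qpos x
  · have := mul_nonneg (sub_nonneg.2 (cutoff_le_one m x)) (h.qpos x).le
    linarith

lemma quot_le (h : Factor f q μ κ C) (m x : ℝ) :
    (1 - cutoff m x) * q x + cutoff m x ≤ C := by
  nlinarith [mul_nonneg (sub_nonneg.2 (cutoff_le_one m x)) (sub_nonneg.2 (h.qle x)),
    mul_nonneg (cutoff_nonneg m x) (sub_nonneg.2 h.Cge)]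

lemma appr_le (h : Factor f q μ κ C) (m x : ℝ) : |appr f m x| ≤ C * |x| := by
  rw [h.appr_eq, abs_neg, abs_mul, abs_of_pos (h.quot_pos m x), mul_comm]
  exact mul_le_mul_of_nonneg_right (h.quot_le m x) (abs_nonneg x)

lemma appr_negFb (h : Factor f q μ κ C) (m : ℝ) : NegFb (appr f m) := fun x hx => by
  rw [h.appr_eq]
  have := mul_pos (mul_self_pos.2 hx) (h.quot_pos m x)
  linarith

lemma cont (h : Factor f q μ κ C) : Continuous f := by
  rw [show f = fun x => -(x * q x) from funext h.eq]
  have := h.qcont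
  fun_prop

lemma appr_cont (h : Factor f q μ κ C) (m : ℝ) : Continuous (appr f m) := by
  have hf := h.cont
  refine continuous_iff_continuousAt.2 fun x => ?_
  rcases eq_or_ne x 0 with rfl | hx
  · have h0 : appr f m 0 = 0 := by rw [h.appr_eq, zero_mul, neg_zero]
    unfold ContinuousAt
    rw [h0]
    refine squeeze_zero_norm (h.appr_le m) ?_
    have : Continuous fun x : ℝ => C * |x| := by fun_prop
    simpa using this.tendsto 0
  · have := continuousAt_cutoff (m := m) hx
    unfold appr
    fun_prop

lemma appr_bdd (h : Factor f q μ κ C) (hm : 0 < m) (hmμ : Real.exp (-m) ≤ μ) (x : ℝ) :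
    |appr f m x| ≤ μ := by
  rcases le_total (Real.exp (-m)) |x| with hx | hx
  · simpa [appr, cutoff_eq_zero hm hx] using h.bdd x
  · have h1 := h.bdd x
    have h2 := cutoff_nonneg m x
    have h3 := sub_nonneg.2 (cutoff_le_one m x)
    calc |appr f m x| ≤ |(1 - cutoff m x) * f x| + |cutoff m x * x| := abs_sub _ _
      _ = (1 - cutoff m x) * |f x| + cutoff m x * |x| := by
        rw [abs_mul, abs_mul, abs_of_nonneg h2, abs_of_nonneg h3]
      _ ≤ (1 - cutoff m x) * μ + cutoff m x * μ := by gcongr; exact hx.trans hmμ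
      _ = μ := by ring

lemma appr_nice (h : Factor f q μ κ C) (hm : 0 < m) (hmμ : Real.exp (-m) ≤ μ) :
    Nice (appr f m) μ (Real.exp (-(2 * m))) where
  cont := h.appr_cont m
  neg := h.appr_negFb m
  bdd := h.appr_bdd hm hmμ
  rpos := Real.exp_pos _
  lin v hv := by
    rcases eq_or_ne v 0 with rfl | h0
    · rw [h.appr_eq, zero_mul]
    · simp [appr, cutoff_eq_one hm h0 hv]

lemma appr_linBd (h : Factor f q μ κ C) (hm : 0 < m) (hmμ : Real.exp (-m) ≤ μ) :
    LinBd (appr f m) μ κ C where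
  cont := h.appr_cont m
  neg := h.appr_negFb m
  bdd := h.appr_bdd hm hmμ
  κpos := h.κpos
  Cge := h.Cge
  upper := h.appr_le m
  lower v hv := by
    rw [h.appr_eq, abs_neg, abs_mul, abs_of_pos (h.quot_pos m v), mul_comm]
    refine mul_le_mul_of_nonneg_left ?_ (abs_nonneg v)
    nlinarith [mul_nonneg (sub_nonneg.2 (cutoff_le_one m v)) (sub_nonneg.2 (h.leq v hv)),
      mul_nonneg (cutoff_nonneg m v) (sub_nonneg.2 h.κle)]

/-- The approximations converge continuously to `f`. -/
lemma appr_tendsto (h : Factor f q μ κ C) {ms vs : ℕ → ℝ} {v : ℝ} (hms : Tendsto ms atTop atTop)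
    (hvs : Tendsto vs atTop (nhds v)) :
    Tendsto (fun n => appr f (ms n) (vs n)) atTop (nhds (f v)) := by
  rcases eq_or_ne v 0 with rfl | hv
  · rw [h.eq, zero_mul, neg_zero]
    refine squeeze_zero_norm (fun n => h.appr_le _ _) ?_
    simpa using hvs.abs.const_mul C
  · have h1 : Tendsto (fun n => Real.exp (-ms n)) atTop (nhds 0) :=
      Real.tendsto_exp_neg_atTop_nhds_zero.comp hms
    refine ((h.cont.tendsto v).comp hvs).congr' ?_
    filter_upwards [h1.eventually_lt hvs.abs (abs_pos.2 hv), hms.eventually_gt_atTop 0]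
      with n hn hn'
    simp [appr, cutoff_eq_zero hn' hn.le]

/-- Blow-up at `0`: rescaled approximations converge continuously to a linear map. -/
lemma blowup_tendsto (h : Factor f q μ κ C) {ms hs vs : ℕ → ℝ} {v w : ℝ}
    (hms : Tendsto ms atTop atTop) (hhs : Tendsto hs atTop (nhds 0)) (hpos : ∀ n, 0 < hs n)
    (hw : Tendsto (fun n => cutoff (ms n) (hs n)) atTop (nhds w))
    (hvs : Tendsto vs atTop (nhds v)) :
    Tendsto (fun n => appr f (ms n) (hs n * vs n) / hs n) atTop
      (nhds (-(((1 - w) * q 0 + w) * v))) := by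
  have key : ∀ n, appr f (ms n) (hs n * vs n) / hs n
      = -(vs n * ((1 - cutoff (ms n) (hs n * vs n)) * q (hs n * vs n)
        + cutoff (ms n) (hs n * vs n))) := fun n => by
    rw [h.appr_eq]
    field_simp [(hpos n).ne']
  rcases eq_or_ne v 0 with rfl | hv
  · rw [mul_zero, neg_zero]
    refine squeeze_zero_norm (a := fun n => C * |vs n|) (fun n => ?_) ?_
    · rw [key, norm_neg, norm_mul, Real.norm_eq_abs, Real.norm_eq_abs,
        abs_of_pos (h.quot_pos _ _), mul_comm]
      exact mul_le_mul_of_nonneg_right (h.quot_le _ _) (abs_nonneg _)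
    · simpa using hvs.abs.const_mul C
  · have hlog : Tendsto (fun n => |Real.log (vs n)| / ms n) atTop (nhds 0) :=
      ((Real.continuousAt_log hv).tendsto.comp hvs).abs.div_atTop hms
    have hdiff : Tendsto (fun n => cutoff (ms n) (hs n * vs n) - cutoff (ms n) (hs n)) atTop
        (nhds 0) := by
      refine squeeze_zero_norm' ?_ hlog
      filter_upwards [hvs.eventually_ne hv, hms.eventually_gt_atTop 0] with n h1 h2
      exact abs_cutoff_mul_sub_le h2 (hpos n).ne' h1
    have hcut : Tendsto (fun n => cutoff (ms n) (hs n * vs n)) atTop (nhds w) := by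
      simpa using hdiff.add hw
    have hq : Tendsto (fun n => q (hs n * vs n)) atTop (nhds (q 0)) := by
      refine (h.qcont.tendsto 0).comp ?_
      simpa using hhs.mul hvs
    simp only [key]
    rw [mul_comm _ v]
    exact (hvs.mul (((hcut.const_sub 1).mul hq).add hcut)).neg

end Factor

/-! ### Passage to the limit -/

lemma Cyc.scale {g p : ℝ → ℝ} {z₁ z₂ h : ℝ} (hp : Cyc g p z₁ z₂) (hh : 0 < h) :
    Cyc (fun v => g (h * v) / h) (fun t => p t / h) z₁ z₂ where
  deriv t := by
    have := (hp.deriv t).div_const h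
    rwa [mul_div_cancel₀ _ hh.ne']
  zpos := hp.zpos
  gap := hp.gap
  start := by rw [hp.start, zero_div]
  pos t h1 h2 := div_pos (hp.pos t h1 h2) hh
  zero := by rw [hp.zero, zero_div]
  neg t h1 h2 := div_neg_of_neg_of_pos (hp.neg t h1 h2) hh
  per t := by rw [hp.per]

/-- Cycles of the approximations subconverge to a cycle of `f`. The limit cannot vanish: the cycles
rescaled to height `1` would converge to a periodic solution of `y'(t) = -k y(t-1)` with `k`
between `1` and `-f'(0)`, both of which are below `π/2`. -/
lemma Factor.exists_limit_cyc {f q : ℝ → ℝ} {μ κ C : ℝ} (h : Factor f q μ κ C)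
    (hq : q 0 < Real.pi / 2) {ms : ℕ → ℝ} (hms : Tendsto ms atTop atTop) (hm0 : ∀ n, 0 < ms n)
    (hmμ : ∀ n, Real.exp (-ms n) ≤ μ) {ys : ℕ → ℝ → ℝ} {zs ws : ℕ → ℝ}
    (hcyc : ∀ n, Cyc (appr f (ms n)) (ys n) (zs n) (ws n)) :
    ∃ (y : ℝ → ℝ) (a b : ℝ) (k : ℕ → ℕ), StrictMono k ∧
      (∀ t, Tendsto (fun n => ys (k n) t) atTop (nhds (y t))) ∧ Cyc f y a b := by
  have hlb := fun n => h.appr_linBd (hm0 n) (hmμ n)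
  have hC : 0 < C := by linarith [h.Cge]
  have hfn : NegFb f := fun x hx => by
    rw [h.eq]
    have := mul_pos (mul_self_pos.2 hx) (h.qpos x)
    linarith
  have hy0 : ∀ n, 0 < ys n 0 := fun n => (hcyc n).pos 0 (by norm_num) (hcyc n).zpos
  obtain ⟨y, a, b, k, hk, hy, hd, hper, ha, hab, hya, hpos, hneg⟩ :=
    exists_limit (M := C * μ) (L := μ) h.cont
    (fun vs v hv => h.appr_tendsto hms hv) (fun n => h.appr_cont _) hcyc
    (fun n t => ((hlb n).abs_le (hcyc n) t).trans (mul_le_mul_of_nonneg_left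
      ((hlb n).le_mu (hcyc n) (by norm_num) (hcyc n).zpos.le) hC.le))
    (fun n t => (hlb n).bdd _) (fun n => (hlb n).z₂_le (hcyc n))
  refine ⟨y, a, b, k, hk, hy, cyc_of_limit h.cont hfn hd hper ha hab hya hpos hneg ?_ ?_ ?_⟩
  · refine tendsto_nhds_unique (hy (-1)) ?_
    simp only [(hcyc _).start]
    exact tendsto_const_nhds
  · exact fun s hs t ht hst => le_of_tendsto_of_tendsto' (hy s) (hy t) fun n =>
      (hcyc (k n)).mono (hlb _).neg hs ht hst
  refine (ge_of_tendsto' (hy 0) fun n => (hy0 _).le).lt_of_ne fun hzero => ?_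
  obtain ⟨w, hw, j, hj, hwj⟩ := isCompact_Icc.tendsto_subseq fun n =>
    show cutoff (ms (k n)) (ys (k n) 0) ∈ Icc (0 : ℝ) 1 from
      ⟨cutoff_nonneg _ _, cutoff_le_one _ _⟩
  set l : ℕ → ℕ := fun n => k (j n) with hl
  have hlm : Tendsto l atTop atTop := (hk.comp hj).tendsto_atTop
  have hh : Tendsto (fun n => ys (l n) 0) atTop (nhds 0) := by
    have := (hy 0).comp hj.tendsto_atTop
    rwa [← hzero] at this
  have hbd : ∀ n t, |ys (l n) t / ys (l n) 0| ≤ C := fun n t => by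
    rw [abs_div, abs_of_pos (hy0 _), div_le_iff₀ (hy0 _)]
    exact (hlb _).abs_le (hcyc _) t
  obtain ⟨u, a', b', i, hi, hu, hud, hup, ha', hab', -⟩ :=
    exists_limit (M := C) (L := C * C) (g := fun v => -(((1 - w) * q 0 + w) * v)) (by fun_prop)
    (fun vs v hv => h.blowup_tendsto (hms.comp hlm) hh (fun n => hy0 _) hwj hv)
    (fun n => by
      have := h.appr_cont (ms (l n))
      fun_prop)
    (fun n => (hcyc (l n)).scale (hy0 _)) hbd
    (fun n t => by
      rw [abs_div, abs_of_pos (hy0 _), div_le_iff₀ (hy0 _), mul_div_cancel₀ _ (hy0 _).ne']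
      refine (h.appr_le _ _).trans ?_
      rw [mul_assoc]
      exact mul_le_mul_of_nonneg_left ((hlb _).abs_le (hcyc _) t) hC.le)
    (fun n => (hlb _).z₂_le (hcyc (l n)))
  have hu0 : u 0 = 1 := by
    refine tendsto_nhds_unique (hu 0) ?_
    simp only [div_self (hy0 _).ne']
    exact tendsto_const_nhds
  have hq0 := h.qpos 0
  have hpi : (1 : ℝ) < Real.pi / 2 := by linarith [Real.pi_gt_three]
  have := no_linear_periodic (κ := (1 - w) * q 0 + w) (T := b' + 1)
    (by
      rcases hw.1.eq_or_lt with h1 | h1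
      · rw [← h1]; simpa using hq0
      · nlinarith [mul_nonneg (sub_nonneg.2 hw.2) hq0.le])
    (by
      rcases hw.1.eq_or_lt with h1 | h1
      · rw [← h1]; simpa using hq
      · nlinarith [mul_nonneg (sub_nonneg.2 hw.2) (sub_nonneg.2 hq.le),
          mul_pos h1 (sub_pos.2 hpi)])
    (by linarith) hud hup
  linarith

theorem statement_6 (f : ℝ → ℝ) (μ β σ : ℝ) (hμ : 0 < μ) (hβ : 0 < β) (hσ : 0 < σ)
    (hH : HypH f) (hH' : HypH' f μ β σ)
    (hderiv : -(Real.pi / 2) < deriv f 0)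
    (hβσ : β < σ / (2 + μ / σ)) :
    ∃ p q : ℝ → ℝ, IsSOP f p ∧ IsSOP f q ∧
      (∀ s : ℝ, ∃ t : ℝ, q t ≠ p (t + s)) ∧
      PeriodThreeZeros p ∧ PeriodThreeZeros q := by
  obtain ⟨hc, hneg, hdiff, hd0⟩ := hH
  obtain ⟨hbdd, hbig⟩ := hH'
  have hn : NegFb f := hneg
  obtain ⟨q, κ, C, h, hq0⟩ := exists_factor hμ hc hn hdiff.self_of_nhds hd0 hbdd
  have hσμ : σ ≤ μ := (hbig β (le_abs_self β)).trans (hbdd β)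
  have hβσ' : β * (2 + μ / σ) < σ := by rwa [lt_div_iff₀ (by positivity)] at hβσ
  have hβμ : β ≤ μ := by
    have : 0 < μ / σ := by positivity
    nlinarith [mul_pos hβ this]
  -- The threshold time `θ` lies between `β / σ` and `(σ - 2 β) / μ`.
  obtain ⟨θ, hθ₁, hθ₂⟩ : ∃ θ, β / σ < θ ∧ θ < (σ - 2 * β) / μ := by
    refine exists_between ?_
    rw [lt_div_iff₀ hμ]
    have : β * (2 + μ / σ) = 2 * β + β / σ * μ := by ring
    linarith
  rw [div_lt_iff₀ hσ] at hθ₁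
  rw [lt_div_iff₀ hμ] at hθ₂
  set ms : ℕ → ℝ := fun n => (n : ℝ) + (|Real.log β| + 1) with hms_def
  have hm0 : ∀ n, 0 < ms n := fun n => by positivity
  have hms : Tendsto ms atTop atTop :=
    tendsto_atTop_add_const_right _ _ tendsto_natCast_atTop_atTop
  have hmβ : ∀ n, Real.exp (-ms n) ≤ β := fun n => by
    rw [← Real.le_log_iff_exp_le hβ]
    have h1 := neg_abs_le (Real.log β)
    have h2 : (0 : ℝ) ≤ n := Nat.cast_nonneg n
    simp only [hms_def]
    linarith
  have hmμ := fun n => (hmβ n).trans hβμ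
  have hB : ∀ n, Big (appr f (ms n)) μ β σ θ := fun n => by
    have hag : ∀ v, β ≤ |v| → appr f (ms n) v = f v := fun v hv => by
      simp [appr, cutoff_eq_zero (hm0 n) ((hmβ n).trans hv)]
    refine ⟨hβ, hσ, fun v hv => ?_, fun v hv => ?_, by linarith, by linarith, hσμ⟩
    · have h1 := hv.trans (le_abs_self v)
      have h2 := hbig v h1
      rw [abs_of_neg (hn.neg (hβ.trans_le hv))] at h2
      rw [hag v h1]
      linarith
    · have h1 : β ≤ |v| := by linarith [neg_le_abs v]
      have h2 := hbig v h1
      rw [abs_of_pos (hn.pos (by linarith))] at h2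
      rwa [hag v h1]
  choose Ps as₁ as₂ hP hP0 hPθ using fun n => ((hB n).exists_two_cyc
    (h.appr_nice (hm0 n) (hmμ n))).1
  choose Qs bs₁ bs₂ hQ hQl using fun n => ((hB n).exists_two_cyc
    (h.appr_nice (hm0 n) (hmμ n))).2
  have hqpi : q 0 < Real.pi / 2 := by linarith
  obtain ⟨P, a₁, a₂, k, -, hPk, hPc⟩ := h.exists_limit_cyc hqpi hms hm0 hmμ hP
  obtain ⟨Q, b₁, b₂, j, -, hQj, hQc⟩ := h.exists_limit_cyc hqpi hms hm0 hmμ hQ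
  refine ⟨P, Q, hPc.isSOP, hQc.isSOP, fun s => ?_, hPc.periodThreeZeros,
    hQc.periodThreeZeros⟩
  by_contra! hs
  have hQP := hPc.eq_of_translate hQc hs
  have h1 : σ - β ≤ P 0 := ge_of_tendsto' (hPk 0) fun n => hP0 _
  have h2 : min (σ * θ) (σ - β) ≤ P (-1 + θ) := ge_of_tendsto' (hPk _) fun n => hPθ _
  have h3 : min (Q 0 - (β + μ * θ)) (Q (-1 + θ) - β) ≤ 0 :=
    le_of_tendsto' (((hQj 0).sub_const _).min ((hQj _).sub_const _)) fun n => by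
      rcases hQl (j n) with h4 | h4
      · exact (min_le_left _ _).trans (by linarith)
      · exact (min_le_right _ _).trans (by linarith)
  rw [hQP] at h3
  have hμθ : 0 < μ * θ := mul_pos hμ (hB 0).θpos
  rcases min_le_iff.1 h3 with h4 | h4
  · linarith
  · rcases min_le_iff.1 h2 with h5 | h5 <;> linarith
end

section
/- Suppose f satisfies (H) and (H') with constants μ, β, σ > 0, and β < σ/(2 + μ/σ). Let γ > 0 satisfy γ + β/σ < 1 and β ≤ (σ - (σ+μ)γ)/(2 + μ/σ). Let x be a solution on [-1,∞) of x'(t) = f(x(t-1)) whose initial segment φ belongs to K (with M = μ) and satisfies φ(s) ≥ σs + σ(1-γ) for all s ∈ [-1+γ, -β/σ]. Then x has at least two positive zeros, and if z₂ denotes its second positive zero, the segment ψ(s) := x(z₂ + 1 + s) for s ∈ [-1,0] belongs to K and satisfies ψ(s) > σs + σ(1-γ) for all s ∈ [-1+γ, -β/σ]. -/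
/-!
The proof follows the solution over one "half-turn", from a segment in `K` above the line
`σ s + σ (1 - γ)` to the segment ending at time `z + 1`, where `z` is the first positive zero.
Put `r = γ + β / σ`; the hypothesis on `γ` reads `β + μ r ≤ σ (1 - r)`.

The line bound gives `x ≥ β` on `[-1 + r, 0]` and `x 0 ≥ β + μ r`, so, since `x' ≥ -μ`,
the solution stays `≥ β` up to time `r`. Let `τ` be the first time at which `x = β`. Then `τ ≥ r`,
and `x ≥ β` on `[-1 + r, τ]`, hence `x' ≤ -σ` on `[r, τ + 1]`. Consequently the first zero `z` lies
in `(τ, τ + β / σ]`, and `x t ≤ -σ (t - z)` on `[z, τ + 1]`, an interval which contains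
`[z, z + 1 - β / σ]`. Thus `s ↦ -x (z + 1 + s)` lies in `K` and lies above the line
`σ (s + 1)`, which is strictly above `σ s + σ (1 - γ)`. This is `half_turn`.

Since `-x (z + 1 + ·)` solves the delay equation with nonlinearity `u ↦ -f (-u)`, which satisfies
the same hypotheses, applying `half_turn` a second time gives the theorem.
-/

open Set Filter

/-- First hitting time of the level `c` for a continuous function starting above `c`. -/
lemma exists_first_hit {x : ℝ → ℝ} {c T : ℝ} (hx : ContinuousOn x (Icc 0 T)) (hT : 0 ≤ T)
    (h0 : c < x 0) (hxT : x T ≤ c) :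
    ∃ t, 0 < t ∧ t ≤ T ∧ x t = c ∧ ∀ s, 0 ≤ s → s < t → c < x s := by
  have hcomp : IsCompact (Icc 0 T ∩ x ⁻¹' Iic c) :=
    isCompact_Icc.of_isClosed_subset (hx.preimage_isClosed_of_isClosed isClosed_Icc isClosed_Iic)
      inter_subset_left
  obtain ⟨t, ⟨⟨ht0, htT⟩, htc⟩, hmin⟩ := hcomp.exists_isLeast ⟨T, ⟨hT, le_rfl⟩, hxT⟩
  have htc' : x t ≤ c := htc
  have hlt : ∀ s, 0 ≤ s → s < t → c < x s := by
    intro s hs hst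
    by_contra hcon
    exact absurd (hmin ⟨⟨hs, hst.le.trans htT⟩, not_lt.mp hcon⟩) (not_le.mpr hst)
  have hpos : 0 < t := by
    rcases ht0.eq_or_lt with h | h
    · rw [← h] at htc'; linarith
    · exact h
  obtain ⟨u, ⟨hu0, hut⟩, huc⟩ :=
    intermediate_value_Icc' ht0 (hx.mono (Icc_subset_Icc_right htT)) ⟨htc', h0.le⟩
  refine ⟨t, hpos, htT, ?_, hlt⟩
  rcases hut.eq_or_lt with h | h
  · rw [← h]; exact huc
  · exact absurd huc (hlt u hu0 h).ne'

/-- Upper mean value bound for a solution on an interval of nonnegative times. -/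
lemma sol_sub_le {f x : ℝ → ℝ} (hx : IsSolOn f x) {a b C : ℝ} (ha : 0 ≤ a) (hab : a ≤ b)
    (h : ∀ t, a < t → t < b → f (x (t - 1)) ≤ C) : x b - x a ≤ C * (b - a) := by
  refine (convex_Icc a b).image_sub_le_mul_sub_of_deriv_le (f := x)
    (hx.1.mono fun t ht => ?_) ?_ ?_ a ⟨le_rfl, hab⟩ b ⟨hab, le_rfl⟩ hab
  · exact (by linarith [ht.1] : (-1 : ℝ) ≤ t)
  · intro t ht
    rw [interior_Icc] at ht
    exact (hx.2 t (by linarith [ht.1])).differentiableAt.differentiableWithinAt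
  · intro t ht
    rw [interior_Icc] at ht
    rw [(hx.2 t (by linarith [ht.1])).deriv]
    exact h t ht.1 ht.2

/-- Lower mean value bound for a solution on an interval of nonnegative times. -/
lemma le_sol_sub {f x : ℝ → ℝ} (hx : IsSolOn f x) {a b C : ℝ} (ha : 0 ≤ a) (hab : a ≤ b)
    (h : ∀ t, a < t → t < b → C ≤ f (x (t - 1))) : C * (b - a) ≤ x b - x a := by
  refine (convex_Icc a b).mul_sub_le_image_sub_of_le_deriv (f := x)
    (hx.1.mono fun t ht => ?_) ?_ ?_ a ⟨le_rfl, hab⟩ b ⟨hab, le_rfl⟩ hab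
  · exact (by linarith [ht.1] : (-1 : ℝ) ≤ t)
  · intro t ht
    rw [interior_Icc] at ht
    exact (hx.2 t (by linarith [ht.1])).differentiableAt.differentiableWithinAt
  · intro t ht
    rw [interior_Icc] at ht
    rw [(hx.2 t (by linarith [ht.1])).deriv]
    exact h t ht.1 ht.2

/-- From a segment in `K` above the line `σ s + σ (1 - γ)`, the solution reaches a first zero `z`,
is negative on `(z, z + 1]`, and its negated segment at time `z + 1` is again in `K` and
strictly above the line. -/
lemma half_turn {f : ℝ → ℝ} {μ β σ γ : ℝ} (hμ : 0 < μ) (hβ : 0 < β) (hσ : 0 < σ)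
    (hneg : ∀ u : ℝ, u ≠ 0 → u * f u < 0) (hH' : HypH' f μ β σ)
    (hγ : 0 < γ) (hγ2 : β ≤ (σ - (σ + μ) * γ) / (2 + μ / σ))
    {x : ℝ → ℝ} (hx : IsSolOn f x) (hK : MemK μ x)
    (hV : ∀ s ∈ Icc (-1 + γ) (-(β / σ)), x s ≥ σ * s + σ * (1 - γ)) :
    ∃ z : ℝ, 0 < z ∧ x z = 0 ∧ (∀ t, 0 ≤ t → t < z → 0 < x t) ∧
      (∀ t, z < t → t ≤ z + 1 → x t < 0) ∧ MemK μ (fun s => -x (z + 1 + s)) ∧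
      ∀ s ∈ Icc (-1 + γ) (-(β / σ)), σ * s + σ * (1 - γ) < -x (z + 1 + s) := by
  obtain ⟨hfμ, hfσ⟩ := hH'
  obtain ⟨-, -, hmono, -⟩ := hK
  obtain ⟨ρ, hρ⟩ : ∃ ρ, ρ = β / σ := ⟨_, rfl⟩
  have hρσ : σ * ρ = β := by rw [hρ]; field_simp
  have hρ0 : 0 < ρ := by rw [hρ]; positivity
  rw [← hρ] at hV ⊢
  have hkey : 2 * β + μ * ρ ≤ σ - (σ + μ) * γ := by
    rw [le_div_iff₀ (by positivity)] at hγ2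
    have : β * (2 + μ / σ) = 2 * β + μ * ρ := by rw [hρ]; field_simp
    linarith
  have hμρ : 0 < μ * ρ := by positivity
  have hμγ : 0 < μ * γ := by positivity
  have hr : γ + 2 * ρ < 1 := by
    by_contra hcon
    nlinarith [mul_le_mul_of_nonneg_left (not_lt.mp hcon) hσ.le]
  have hfneg : ∀ u, 0 < u → f u ≤ 0 := fun u hu => by
    have := hneg u hu.ne'
    by_contra hcon
    exact absurd this (not_lt.mpr (mul_pos hu (not_le.mp hcon)).le)
  have hfle : ∀ u, β ≤ u → f u ≤ -σ := fun u hu => by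
    have h1 := hfσ u (hu.trans (le_abs_self u))
    rw [abs_of_nonpos (hfneg u (hβ.trans_le hu))] at h1
    linarith
  have hfge : ∀ u, -μ ≤ f u := fun u => (abs_le.mp (hfμ u)).1
  -- the line bound at `s = -1 + r` and at `s = -β / σ`, propagated by monotonicity
  have hinit : ∀ s, -1 + (γ + ρ) ≤ s → s ≤ 0 → β ≤ x s := by
    intro s hs hs0
    have h1 := hV (-1 + (γ + ρ)) ⟨by linarith, by linarith⟩
    have h2 := hmono (a := -1 + (γ + ρ)) (b := s) ⟨by linarith, by linarith⟩
      ⟨by linarith, hs0⟩ hs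
    nlinarith
  have hx0 : β + μ * (γ + ρ) ≤ x 0 := by
    have h1 := hV (-ρ) ⟨by linarith, le_rfl⟩
    have h2 := hmono (a := -ρ) (b := 0) ⟨by linarith, by linarith⟩
      ⟨by linarith, le_rfl⟩ (by linarith)
    nlinarith
  have hcont : ∀ T, ContinuousOn x (Icc 0 T) := fun T =>
    hx.1.mono fun t ht => (by linarith [ht.1] : (-1 : ℝ) ≤ t)
  have hreach : ∃ T, 0 ≤ T ∧ x T ≤ β := by
    by_contra! hcon
    have hxr := hcon (γ + ρ) (by linarith)
    have hq : 0 < x (γ + ρ) / σ := div_pos (hβ.trans hxr) hσ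
    have h1 := sol_sub_le hx (a := γ + ρ) (b := γ + ρ + x (γ + ρ) / σ) (C := -σ)
      (by linarith) (by linarith) (fun t ht _ => hfle _ (by
        rcases le_total (t - 1) 0 with h | h
        · exact hinit _ (by linarith) h
        · exact (hcon _ h).le))
    have h2 := hcon (γ + ρ + x (γ + ρ) / σ) (by linarith)
    have h3 : -σ * (γ + ρ + x (γ + ρ) / σ - (γ + ρ)) = -x (γ + ρ) := by field_simp; ring
    linarith
  obtain ⟨T, hT0, hT⟩ := hreach
  have hμr : 0 < μ * (γ + ρ) := by rw [mul_add]; linarith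
  obtain ⟨τ, hτ0, -, hτβ, hτ⟩ := exists_first_hit (hcont T) hT0 (by linarith : β < x 0) hT
  have hrτ : γ + ρ ≤ τ := by
    have h1 := le_sol_sub hx le_rfl hτ0.le (fun t _ _ => hfge (x (t - 1)))
    by_contra hcon
    nlinarith [mul_lt_mul_of_pos_left (not_le.mp hcon) hμ]
  have hge : ∀ s, -1 + (γ + ρ) ≤ s → s ≤ τ → β ≤ x s := by
    intro s hs hsτ
    rcases le_total s 0 with h | h
    · exact hinit s hs h
    · rcases hsτ.eq_or_lt with h' | h'
      · rw [h', hτβ]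
      · exact (hτ s h h').le
  have hslope : ∀ a b, γ + ρ ≤ a → a ≤ b → b ≤ τ + 1 → x b - x a ≤ -σ * (b - a) :=
    fun a b ha hab hb => sol_sub_le hx (by linarith) hab
      (fun t hat htb => hfle _ (hge _ (by linarith) (by linarith)))
  have hend : x (τ + ρ) ≤ 0 := by
    have h1 := hslope τ (τ + ρ) hrτ (by linarith) (by linarith)
    nlinarith
  obtain ⟨z, hz0, hzT, hz, hzpos⟩ :=
    exists_first_hit (hcont (τ + ρ)) (by linarith) (by linarith : 0 < x 0) hend
  have hτz : τ < z := by
    by_contra hcon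
    have := hge z (by linarith) (not_lt.mp hcon)
    linarith
  have hline : ∀ t, z ≤ t → t ≤ τ + 1 → x t ≤ -σ * (t - z) := fun t h1 h2 => by
    have := hslope z t (by linarith) h1 h2
    linarith
  have hanti : ∀ a b, z ≤ a → a ≤ b → b ≤ z + 1 → x b ≤ x a := fun a b ha hab hb => by
    have := sol_sub_le hx (a := a) (b := b) (C := 0) (by linarith) hab
      (fun t hat htb => hfneg _ (by
        rcases le_total (t - 1) 0 with h | h
        · exact hβ.trans_le (hinit _ (by linarith) h)
        · exact hzpos _ h (by linarith)))
    linarith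
  refine ⟨z, hz0, hz, hzpos, ?_, ⟨?_, ?_, ?_, ?_⟩, ?_⟩
  · intro t h1 h2
    rcases le_total t (τ + 1) with h | h
    · have := hline t h1.le h
      nlinarith
    · have h3 := hline (τ + 1) (by linarith) le_rfl
      have h4 := hanti (τ + 1) t (by linarith) h h2
      nlinarith
  · refine (hx.1.comp (t := Ici (-1)) (f := fun s => z + 1 + s) (by fun_prop) ?_).neg
    intro s hs
    exact (by linarith [hs.1] : (-1 : ℝ) ≤ z + 1 + s)
  · have : z + 1 + -1 = z := by ring
    simp [this, hz]
  · intro a ha b hb hab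
    exact neg_le_neg (hanti _ _ (by linarith [ha.1]) (by linarith) (by linarith [hb.2]))
  · intro s hs
    have h1 := hanti z (z + 1 + s) le_rfl (by linarith [hs.1]) (by linarith [hs.2])
    have h2 := le_sol_sub hx hz0.le (by linarith [hs.1] : z ≤ z + 1 + s)
      (fun t _ _ => hfge (x (t - 1)))
    rw [abs_le]
    constructor <;> nlinarith [mul_nonneg hμ.le (neg_nonneg.mpr hs.2)]
  · intro s hs
    have h1 := hline (z + 1 + s) (by linarith [hs.1]) (by linarith [hs.2])
    nlinarith [mul_pos hσ hγ]

theorem statement_7 (f : ℝ → ℝ) (μ β σ : ℝ) (hμ : 0 < μ) (hβ : 0 < β) (hσ : 0 < σ)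
    (hH : HypH f) (hH' : HypH' f μ β σ) (hβσ : β < σ / (2 + μ / σ))
    (γ : ℝ) (hγ : 0 < γ) (hγ1 : γ + β / σ < 1)
    (hγ2 : β ≤ (σ - (σ + μ) * γ) / (2 + μ / σ))
    (x : ℝ → ℝ) (hx : IsSolOn f x) (hK : MemK μ x)
    (hV : ∀ s ∈ Icc (-1 + γ) (-(β / σ)), x s ≥ σ * s + σ * (1 - γ)) :
    ∃ z₁ z₂ : ℝ, 0 < z₁ ∧ z₁ < z₂ ∧ x z₁ = 0 ∧ x z₂ = 0 ∧
      (∀ t ∈ Ioo 0 z₁, x t ≠ 0) ∧ (∀ t ∈ Ioo z₁ z₂, x t ≠ 0) ∧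
      MemK μ (fun s => x (z₂ + 1 + s)) ∧
      ∀ s ∈ Icc (-1 + γ) (-(β / σ)), σ * s + σ * (1 - γ) < x (z₂ + 1 + s) := by
  obtain ⟨z, hz0, hz, hzpos, hzneg, hzK, hzV⟩ :=
    half_turn hμ hβ hσ hH.2.1 hH' hγ hγ2 hx hK hV
  have hneg : ∀ u : ℝ, u ≠ 0 → u * (fun u => -f (-u)) u < 0 := fun u hu => by
    have := hH.2.1 (-u) (neg_ne_zero.mpr hu)
    simpa using this
  have hH'' : HypH' (fun u => -f (-u)) μ β σ :=
    ⟨fun u => by simpa using hH'.1 (-u), fun u hu => by simpa using hH'.2 (-u) (by simpa using hu)⟩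
  have hy : IsSolOn (fun u => -f (-u)) (fun s => -x (z + 1 + s)) := by
    refine ⟨(hx.1.comp (t := Ici (-1)) (f := fun s => z + 1 + s) (by fun_prop) ?_).neg, ?_⟩
    · intro s hs
      have hs' : (-1 : ℝ) ≤ s := hs
      exact (by linarith : (-1 : ℝ) ≤ z + 1 + s)
    · intro t ht
      have h := ((hx.2 (z + 1 + t) (by linarith)).comp_const_add (z + 1) t).fun_neg
      have e : z + 1 + (t - 1) = z + 1 + t - 1 := by ring
      simpa [e] using h
  obtain ⟨w, hw0, hw, hwpos, -, hwK, hwV⟩ :=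
    half_turn hμ hβ hσ hneg hH'' hγ hγ2 hy hzK (fun s hs => (hzV s hs).le)
  have e : ∀ s, z + 1 + w + 1 + s = z + 1 + (w + 1 + s) := fun s => by ring
  refine ⟨z, z + 1 + w, hz0, by linarith, hz, by simpa using hw,
    fun t ht => (hzpos t ht.1.le ht.2).ne', ?_, ?_, ?_⟩
  · intro t ht
    rcases le_total t (z + 1) with h | h
    · exact (hzneg t ht.1 h).ne
    · have := hwpos (t - (z + 1)) (by linarith) (by linarith [ht.2])
      simp only [add_sub_cancel] at this
      linarith
  · simpa [e] using hwK
  · simpa [e] using hwV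
end
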